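/- arXiv:1206.1671 — 2 statements merged into one kernel-verified Lean document; each statement's English description precedes it below -/
import Mathlib

section
/- For every a ∈ [0, 1/2) and every bounded open set A ⊂ ℝ^d, almost surely sup_{t ≥ 0} ( sup_{x ∈ A} X_t(x) − √(2d)·t + (a/√(2d))·ln(t+1) ) < ∞. -/
open MeasureTheory ProbabilityTheory Filter

noncomputable section

open scoped ENNReal NNReal Topology

/-!
Fix `l = √(2d)`, so that `l² / 2 = d`, and cut space-time into cells of duration `1` and side `e⁻ⁿ`,
of which about `e^{dn}` at time `n` meet a given ball. Within a cell the field oscillates by `O(1)`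
with Gaussian tails, so chaining over dyadic points bounds the supremum over the cell by the value
at its lower corner, up to an error with exponential tails. The expected number of grid points at
which `X_j(x) > l j + O(log n)` for some `j ≤ n` then tends to `0` summably, which is a crude
logarithmic barrier. At a fixed point, the unit increments of the field form a Gaussian random walk.
A Cameron–Martin tilt by `exp (l X_n - l² n / 2)` turns the event of staying below the barrier and
ending within `O(log n)` of `l n` into a driftless ballot event, whose probability is
`O((log n)³ n^{-3/2})` by the reflection principle. The sum over the `e^{dn}` cells of the
probability of exceeding `l n - (a / l) log n` below the barrier is `n^{a - 3/2 + o(1)}`, which is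
summable for `a < 1 / 2`, and Borel–Cantelli applies.
-/

lemma measureReal_inter_pair_mem_le {Ω α β : Type*} [MeasurableSpace α] [MeasurableSpace β]
    {𝓕 : MeasurableSpace Ω} [mΩ : MeasurableSpace Ω] {P : Measure Ω} [IsFiniteMeasure P]
    (h𝓕 : 𝓕 ≤ mΩ) {U : Ω → α} {M : Ω → β} (hU : Measurable[𝓕] U) (hM : Measurable M)
    (hind : Indep 𝓕 (MeasurableSpace.comap M inferInstance) P) {E : Set Ω}
    (hE : MeasurableSet[𝓕] E) {D : Set (α × β)} (hD : MeasurableSet D) {K : ℝ} (hK0 : 0 ≤ K)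
    (hK : ∀ u, P.real {ω | (u, M ω) ∈ D} ≤ K) :
    P.real (E ∩ {ω | (U ω, M ω) ∈ D}) ≤ P.real E * K := by
  have hU' : Measurable U := hU.mono h𝓕 le_rfl
  have hprod : (P.restrict E).map (fun ω ↦ (U ω, M ω)) =
      ((P.restrict E).map U).prod (P.map M) := by
    refine (Measure.prod_eq fun s t hs ht ↦ ?_).symm
    rw [Measure.map_apply (hU'.prodMk hM) (hs.prod ht), Measure.map_apply hU' hs,
      Measure.map_apply hM ht, Measure.restrict_apply (hU'.prodMk hM (hs.prod ht)),
      Measure.restrict_apply (hU' hs), Set.mk_preimage_prod, Set.inter_right_comm]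
    exact (Indep_iff _ _ P).1 hind _ _ ((hU hs).inter hE) ⟨t, ht, rfl⟩
  have hle : P (E ∩ {ω | (U ω, M ω) ∈ D}) ≤ P E * ENNReal.ofReal K := calc
    P (E ∩ {ω | (U ω, M ω) ∈ D}) = (P.restrict E).map (fun ω ↦ (U ω, M ω)) D := by
        rw [Measure.map_apply (hU'.prodMk hM) hD, Measure.restrict_apply (hU'.prodMk hM hD),
          Set.inter_comm]
        rfl
    _ = ∫⁻ u, P.map M (Prod.mk u ⁻¹' D) ∂(P.restrict E).map U := by
        rw [hprod, Measure.prod_apply hD]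
    _ ≤ ∫⁻ _, ENNReal.ofReal K ∂(P.restrict E).map U := lintegral_mono fun u ↦ by
        rw [Measure.map_apply hM (measurable_prodMk_left hD)]
        exact (ENNReal.le_ofReal_iff_toReal_le (measure_ne_top P _) hK0).2 (hK u)
    _ = P E * ENNReal.ofReal K := by
        rw [lintegral_const, Measure.map_apply hU' .univ, Set.preimage_univ,
          Measure.restrict_apply_univ, mul_comm]
  calc P.real (E ∩ {ω | (U ω, M ω) ∈ D}) ≤ (P E * ENNReal.ofReal K).toReal :=
        ENNReal.toReal_mono (ENNReal.mul_ne_top (measure_ne_top P E) ENNReal.ofReal_ne_top) hle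
    _ = P.real E * K := by rw [ENNReal.toReal_mul, ENNReal.toReal_ofReal hK0, measureReal_def]

section Gaussian

lemma gaussianPDFReal_le (μ : ℝ) (v : ℝ≥0) (x : ℝ) : gaussianPDFReal μ v x ≤ (√v)⁻¹ := by
  have hsqrt : (√(2 * Real.pi * v))⁻¹ ≤ (√v)⁻¹ := by
    rcases eq_or_ne v 0 with rfl | hv
    · simp
    · gcongr
      exact le_mul_of_one_le_left v.2 (by linarith [Real.pi_gt_three])
  have hexp : Real.exp (-(x - μ) ^ 2 / (2 * v)) ≤ 1 :=
    Real.exp_le_one_iff.2 (div_nonpos_of_nonpos_of_nonneg (by nlinarith) (by positivity))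
  rw [gaussianPDFReal]
  exact (mul_le_of_le_one_right (by positivity) hexp).trans hsqrt

lemma gaussianReal_real_Icc_le (μ : ℝ) {v : ℝ≥0} (hv : v ≠ 0) {a b : ℝ} (hab : a ≤ b) :
    (gaussianReal μ v).real (Set.Icc a b) ≤ (b - a) / √v := by
  rw [measureReal_def, gaussianReal_apply_eq_integral μ hv, ENNReal.toReal_ofReal
    (setIntegral_nonneg measurableSet_Icc fun x _ ↦ gaussianPDFReal_nonneg μ v x)]
  calc ∫ x in Set.Icc a b, gaussianPDFReal μ v x
      ≤ ∫ _ in Set.Icc a b, (√v)⁻¹ :=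
        setIntegral_mono (integrable_gaussianPDFReal μ v).integrableOn (by simp)
          fun x ↦ gaussianPDFReal_le μ v x
    _ = (b - a) / √v := by
        rw [setIntegral_const, Real.volume_real_Icc_of_le hab, smul_eq_mul, div_eq_mul_inv]

variable {Ω : Type*} [MeasurableSpace Ω] {P : Measure Ω}

lemma isGaussianProcess_linearCombination {S T : Type*} {X : T → Ω → ℝ}
    (hX : IsGaussianProcess X P) (c : S → T →₀ ℝ) :
    IsGaussianProcess (fun s ω ↦ Finsupp.linearCombination ℝ (X · ω) (c s)) P :=
  hX.of_isGaussianProcess fun s ↦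
    ⟨(c s).support, ∑ i : (c s).support, c s i • ContinuousLinearMap.proj i, fun ω ↦ by
      simp [Finsupp.linearCombination_apply, Finsupp.sum,
        ← Finset.sum_attach (c s).support fun i ↦ c s i * X i ω]⟩

lemma isGaussianProcess_of_iIndepFun {T : Type*} {X : T → Ω → ℝ} (hind : iIndepFun X P)
    (hX : ∀ t, HasGaussianLaw (X t) P) : IsGaussianProcess X P where
  hasGaussianLaw _ := (hind.precomp Subtype.val_injective).hasGaussianLaw fun _ ↦ hX _

lemma hasSubgaussianMGF_of_hasLaw_gaussianReal {Y : Ω → ℝ} {v : ℝ≥0}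
    (hY : HasLaw Y (gaussianReal 0 v) P) : HasSubgaussianMGF Y v P where
  integrable_exp_mul t := by
    have h := integrable_exp_mul_gaussianReal (μ := 0) (v := v) t
    rw [← hY.map_eq] at h
    exact (integrable_map_measure (by fun_prop) hY.aemeasurable).1 h
  mgf_le t := by rw [mgf_gaussianReal hY.map_eq]; simp

lemma hasLaw_sum_gaussianReal [IsProbabilityMeasure P] {ξ : ℕ → Ω → ℝ} (hind : iIndepFun ξ P)
    (hlaw : ∀ i, HasLaw (ξ i) (gaussianReal 0 1) P) (s : Finset ℕ) :
    HasLaw (fun ω ↦ ∑ i ∈ s, ξ i ω) (gaussianReal 0 s.card) P := by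
  induction s using Finset.induction_on with
  | empty =>
    exact ⟨by fun_prop, by simp [Measure.map_const, gaussianReal_zero_var]⟩
  | insert i s hi ih =>
    have hsum : IndepFun (ξ i) (∑ j ∈ s, ξ j) P :=
      (hind.indepFun_finsetSum_of_notMem₀ (fun j ↦ (hlaw j).aemeasurable) hi).symm
    have h := gaussianReal_add_gaussianReal_of_indepFun hsum (hlaw i).map_eq
      (by simpa [Finset.sum_fn] using ih.map_eq)
    refine ⟨(Finset.aemeasurable_fun_sum _ fun j _ ↦ (hlaw j).aemeasurable), ?_⟩
    rw [Finset.card_insert_of_notMem hi, add_comm s.card]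
    simpa [Finset.sum_insert hi, Finset.sum_fn, Pi.add_def] using h

lemma gaussianReal_neg_apply_le {v : ℝ≥0} (hv : v ≠ 0) {c H : ℝ} (hc : 0 ≤ c) {T : Set ℝ}
    (hT : MeasurableSet T) (hTH : ∀ u ∈ T, -H ≤ u) :
    gaussianReal (-c) v T ≤
      ENNReal.ofReal (Real.exp ((c * H - c ^ 2 / 2) / v)) * gaussianReal 0 v T := by
  rw [gaussianReal_apply _ hv, gaussianReal_apply _ hv,
    ← lintegral_const_mul _ (measurable_gaussianPDF 0 v)]
  refine setLIntegral_mono' hT fun u hu ↦ ?_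
  simp only [gaussianPDF, gaussianPDFReal]
  rw [← ENNReal.ofReal_mul (Real.exp_pos _).le, mul_left_comm, ← Real.exp_add]
  gcongr
  rw [show (c * H - c ^ 2 / 2) / (v : ℝ) = (2 * c * H - c ^ 2) / (2 * v) by ring, ← add_div]
  gcongr
  nlinarith [mul_nonneg hc (by linarith [hTH u hu] : 0 ≤ u + H)]

/-- A Cameron–Martin bound in the direction of one Gaussian coordinate. -/
lemma measure_pair_sub_const_mem_le [IsProbabilityMeasure P] {β : Type*} [MeasurableSpace β]
    {B : Ω → β} {S : Ω → ℝ} {v : ℝ≥0} (hv : v ≠ 0) (hB : Measurable B) (hS : Measurable S)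
    (hlaw : HasLaw S (gaussianReal 0 v) P) (hind : IndepFun B S P) {c H : ℝ} (hc : 0 ≤ c)
    {T : Set (β × ℝ)} (hT : MeasurableSet T) (hTH : ∀ p ∈ T, -H ≤ p.2) :
    P {ω | (B ω, S ω - c) ∈ T} ≤
      ENNReal.ofReal (Real.exp ((c * H - c ^ 2 / 2) / v)) * P {ω | (B ω, S ω) ∈ T} := by
  have hprod {Y : Ω → ℝ} {ν : Measure ℝ} [SFinite ν] (hY : Measurable Y) (hYν : P.map Y = ν)
      (hBY : IndepFun B Y P) :
      P {ω | (B ω, Y ω) ∈ T} = ∫⁻ b, ν (Prod.mk b ⁻¹' T) ∂P.map B := by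
    rw [← Measure.prod_apply hT, ← hYν,
      ← (indepFun_iff_map_prod_eq_prod_map_map hB.aemeasurable hY.aemeasurable).1 hBY,
      Measure.map_apply (hB.prodMk hY) hT]
    rfl
  rw [hprod hS hlaw.map_eq hind, hprod (hS.sub_const c)
    (by simpa using (gaussianReal_sub_const hlaw c).map_eq)
    (hind.comp measurable_id (measurable_id.sub_const c)), ← lintegral_const_mul']
  · exact lintegral_mono fun b ↦ gaussianReal_neg_apply_le hv hc (measurable_prodMk_left hT)
      fun u hu ↦ hTH _ hu
  · exact ENNReal.ofReal_ne_top

end Gaussian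

/-- The random walk `S n = ξ 0 + ⋯ + ξ (n - 1)` with steps `ξ`. -/
def randomWalk {Ω : Type*} (ξ : ℕ → Ω → ℝ) (n : ℕ) (ω : Ω) : ℝ :=
  ∑ i ∈ Finset.range n, ξ i ω

/-- The event that the walk with steps `ξ` exceeds the level `L` for the first time at time
`j + 1`. -/
def firstPassage {Ω : Type*} (ξ : ℕ → Ω → ℝ) (L : ℝ) (j : ℕ) : Set Ω :=
  {ω | L < randomWalk ξ (j + 1) ω ∧ ∀ i ≤ j, randomWalk ξ i ω ≤ L}

/-- The σ-algebra generated by the steps `ξ i`, `i ∈ S`. -/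
abbrev stepAlgebra {Ω : Type*} (ξ : ℕ → Ω → ℝ) (S : Set ℕ) : MeasurableSpace Ω :=
  ⨆ i ∈ S, MeasurableSpace.comap (ξ i) inferInstance

/-- The involution of `ℕ` reversing the order of the integers below `n`. -/
def reverseBelow (n i : ℕ) : ℕ := if i < n then n - 1 - i else i

section RandomWalk

variable {Ω : Type*} {ξ : ℕ → Ω → ℝ} {L : ℝ}

@[simp]
lemma randomWalk_zero (ω : Ω) : randomWalk ξ 0 ω = 0 := by simp [randomWalk]

lemma randomWalk_succ (n : ℕ) (ω : Ω) :
    randomWalk ξ (n + 1) ω = randomWalk ξ n ω + ξ n ω :=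
  Finset.sum_range_succ _ _

lemma randomWalk_add_sum_Ico {m n : ℕ} (hmn : m ≤ n) (ω : Ω) :
    randomWalk ξ m ω + ∑ i ∈ Finset.Ico m n, ξ i ω = randomWalk ξ n ω :=
  Finset.sum_range_add_sum_Ico _ hmn

lemma measurable_step_stepAlgebra {i : ℕ} {S : Set ℕ} (hi : i ∈ S) :
    Measurable[stepAlgebra ξ S] (ξ i) :=
  (comap_measurable (ξ i)).mono (le_iSup₂_of_le i hi le_rfl) le_rfl

lemma measurable_sum_stepAlgebra {s : Finset ℕ} {S : Set ℕ} (hs : ∀ i ∈ s, i ∈ S) :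
    Measurable[stepAlgebra ξ S] fun ω ↦ ∑ i ∈ s, ξ i ω :=
  Finset.measurable_sum _ fun i hi ↦ measurable_step_stepAlgebra (hs i hi)

lemma measurable_randomWalk_stepAlgebra {n : ℕ} {S : Set ℕ} (hS : ∀ i < n, i ∈ S) :
    Measurable[stepAlgebra ξ S] (randomWalk ξ n) :=
  measurable_sum_stepAlgebra fun i hi ↦ hS i (Finset.mem_range.1 hi)

lemma measurableSet_forall_le_of_measurable {m : MeasurableSpace Ω} {f : ℕ → Ω → ℝ} {n : ℕ}
    {L : ℕ → ℝ} (hf : ∀ k ≤ n, Measurable (f k)) : MeasurableSet {ω | ∀ k ≤ n, f k ω ≤ L k} := by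
  simp only [Set.ofPred_forall]
  exact .iInter fun k ↦ .iInter fun hk ↦ measurableSet_le (hf k hk) measurable_const

lemma measurableSet_forall_randomWalk_le_stepAlgebra {n : ℕ} {S : Set ℕ} (hS : ∀ i < n, i ∈ S) :
    MeasurableSet[stepAlgebra ξ S] {ω | ∀ k ≤ n, randomWalk ξ k ω ≤ L} :=
  measurableSet_forall_le_of_measurable fun _ hk ↦
    measurable_randomWalk_stepAlgebra fun i hi ↦ hS i (hi.trans_le hk)

lemma measurableSet_forall_reversed_le_stepAlgebra {m n : ℕ} {S : Set ℕ}
    (hS : ∀ i, n - m ≤ i → i ∈ S) : MeasurableSet[stepAlgebra ξ S]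
      {ω | ∀ k ≤ m, randomWalk ξ (n - k) ω - randomWalk ξ n ω ≤ L} :=
  measurableSet_forall_le_of_measurable fun k hk ↦ by
    have h : Measurable[stepAlgebra ξ S] fun ω ↦ -∑ i ∈ Finset.Ico (n - k) n, ξ i ω :=
      (measurable_sum_stepAlgebra fun i hi ↦
        hS i ((Nat.sub_le_sub_left hk n).trans (Finset.mem_Ico.1 hi).1)).neg
    convert! h using 2 with ω
    rw [← randomWalk_add_sum_Ico (n.sub_le k)]
    simp

lemma measurableSet_firstPassage_stepAlgebra {j : ℕ} {S : Set ℕ} (hS : ∀ i ≤ j, i ∈ S) :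
    MeasurableSet[stepAlgebra ξ S] (firstPassage ξ L j) := by
  have hwalk : Measurable[stepAlgebra ξ S] (randomWalk ξ (j + 1)) :=
    measurable_randomWalk_stepAlgebra fun i hi ↦ hS i (by lia)
  refine MeasurableSet.inter ?_ ?_
  · let := stepAlgebra ξ S
    exact measurableSet_lt measurable_const hwalk
  · exact measurableSet_forall_randomWalk_le_stepAlgebra fun i hi ↦ hS i hi.le

lemma pairwise_disjoint_firstPassage :
    Pairwise (Function.onFun Disjoint (firstPassage ξ L)) := by
  refine (pairwise_disjoint_on _).2 fun i j hij ↦ Set.disjoint_left.2 ?_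
  rintro ω ⟨hi, -⟩ ⟨-, hj⟩
  exact hi.not_ge (hj (i + 1) hij)

lemma exists_mem_firstPassage {m : ℕ} (hL : 0 ≤ L) {ω : Ω} (hω : L < randomWalk ξ m ω) :
    ∃ j < m, ω ∈ firstPassage ξ L j := by
  classical
  have hex : ∃ k, L < randomWalk ξ k ω := ⟨m, hω⟩
  obtain ⟨j, hj⟩ : ∃ j, Nat.find hex = j + 1 :=
    Nat.exists_eq_succ_of_ne_zero fun h ↦ by
      have := Nat.find_spec hex
      rw [h, randomWalk_zero] at this
      exact this.not_ge hL
  refine ⟨j, ?_, hj ▸ Nat.find_spec hex, fun i hi ↦ not_lt.1 (Nat.find_min hex (by lia))⟩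
  have := Nat.find_min' hex hω
  lia

lemma reverseBelow_injective (n : ℕ) : Function.Injective (reverseBelow n) := fun i j h ↦ by
  simp only [reverseBelow] at h
  split_ifs at h <;> lia

lemma randomWalk_neg_reverseBelow {n k : ℕ} (hk : k ≤ n) (ω : Ω) :
    randomWalk (fun i ↦ -ξ (reverseBelow n i)) k ω = randomWalk ξ (n - k) ω - randomWalk ξ n ω := by
  induction k with
  | zero => simp
  | succ k ih =>
    have hstep := randomWalk_succ (ξ := ξ) (n - (k + 1)) ω
    rw [show n - (k + 1) + 1 = n - k by lia] at hstep
    rw [randomWalk_succ, ih (by lia), reverseBelow, if_pos (by lia),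
      show n - 1 - k = n - (k + 1) by lia, Pi.neg_apply, hstep]
    ring

variable [mΩ : MeasurableSpace Ω] {P : Measure Ω}

lemma stepAlgebra_le (hξ : ∀ i, Measurable (ξ i)) (S : Set ℕ) : stepAlgebra ξ S ≤ mΩ :=
  iSup₂_le fun i _ ↦ (hξ i).comap_le

lemma indep_stepAlgebra (hξ : ∀ i, Measurable (ξ i)) (hind : iIndepFun ξ P) {S T : Set ℕ}
    (hST : Disjoint S T) : Indep (stepAlgebra ξ S) (stepAlgebra ξ T) P :=
  indep_iSup_of_disjoint (fun i ↦ (hξ i).comap_le) hind hST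

lemma measurable_randomWalk (hξ : ∀ i, Measurable (ξ i)) (n : ℕ) :
    Measurable (randomWalk ξ n) :=
  Finset.measurable_sum _ fun i _ ↦ hξ i

lemma measurableSet_firstPassage (hξ : ∀ i, Measurable (ξ i)) (L : ℝ) (j : ℕ) :
    MeasurableSet (firstPassage ξ L j) :=
  stepAlgebra_le hξ Set.univ _ (measurableSet_firstPassage_stepAlgebra fun _ _ ↦ trivial)

lemma identDistrib_sum_neg_sum (hind : iIndepFun ξ P)
    (hsymm : ∀ i, IdentDistrib (ξ i) (-ξ i) P P) (s : Finset ℕ) :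
    IdentDistrib (fun ω ↦ ∑ i ∈ s, ξ i ω) (fun ω ↦ -∑ i ∈ s, ξ i ω) P P := by
  have h := (IdentDistrib.pi hsymm hind (hind.comp (fun _ x ↦ -x) fun _ ↦ measurable_neg)).comp
    (u := fun x : ℕ → ℝ ↦ ∑ i ∈ s, x i) (by fun_prop)
  simpa [Function.comp_def] using h

lemma measureReal_le_neg_eq_measureReal_ge_of_symm {Y : Ω → ℝ}
    (hY : IdentDistrib Y (fun ω ↦ -Y ω) P P) (b : ℝ) :
    P.real {ω | Y ω ≤ -b} = P.real {ω | b ≤ Y ω} := by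
  have h := hY.measure_mem_eq measurableSet_Iic (s := Set.Iic (-b))
  simpa [measureReal_def, Set.preimage, neg_le_neg_iff] using congrArg ENNReal.toReal h

lemma measureReal_firstPassage_reflect (hξ : ∀ i, Measurable (ξ i)) (hind : iIndepFun ξ P)
    (hsymm : ∀ i, IdentDistrib (ξ i) (-ξ i) P P) (m j : ℕ) (b : ℝ) :
    P.real (firstPassage ξ L j ∩ {ω | ξ j ω ≤ b} ∩
        {ω | b ≤ ∑ i ∈ Finset.Ico (j + 1) m, ξ i ω}) =
      P.real (firstPassage ξ L j ∩ {ω | ξ j ω ≤ b} ∩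
        {ω | ∑ i ∈ Finset.Ico (j + 1) m, ξ i ω ≤ -b}) := by
  have hpast : MeasurableSet[stepAlgebra ξ (Set.Iic j)]
      (firstPassage ξ L j ∩ {ω | ξ j ω ≤ b}) :=
    (measurableSet_firstPassage_stepAlgebra fun _ hi ↦ hi).inter
      (measurable_step_stepAlgebra (Set.mem_Iic.2 le_rfl) measurableSet_Iic)
  have hfuture : Measurable[stepAlgebra ξ (Set.Ioi j)]
      fun ω ↦ ∑ i ∈ Finset.Ico (j + 1) m, ξ i ω :=
    measurable_sum_stepAlgebra fun i hi ↦ (Finset.mem_Ico.1 hi).1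
  have hindep {t : Set ℝ} (ht : MeasurableSet t) :=
    (Indep_iff _ _ P).1 (indep_stepAlgebra hξ hind (Set.Iic_disjoint_Ioi (le_refl j)))
      _ _ hpast (hfuture ht)
  have hsum := measureReal_le_neg_eq_measureReal_ge_of_symm
    (identDistrib_sum_neg_sum hind hsymm (Finset.Ico (j + 1) m)) b
  have hge := congrArg ENNReal.toReal (hindep (measurableSet_Ici (a := b)))
  have hle := congrArg ENNReal.toReal (hindep (measurableSet_Iic (a := -b)))
  rw [ENNReal.toReal_mul] at hge hle
  exact hge.trans ((congrArg _ hsum.symm).trans hle.symm)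

variable [IsProbabilityMeasure P]

/-- André's reflection at the first passage above `L`; the jump across `L` is at most `b`, which
is why the reflected walk has to start from `L + 2 * b`. -/
lemma measureReal_ge_le_firstPassage (hξ : ∀ i, Measurable (ξ i)) (hind : iIndepFun ξ P)
    (hsymm : ∀ i, IdentDistrib (ξ i) (-ξ i) P P) {b : ℝ} (hL : 0 ≤ L) (hb : 0 < b) (m : ℕ) :
    P.real {ω | L + 2 * b ≤ randomWalk ξ m ω ∧ ∀ i < m, ξ i ω ≤ b} ≤
      P.real ({ω | randomWalk ξ m ω ≤ L} ∩ ⋃ j ∈ Finset.range m, firstPassage ξ L j) := by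
  let G (j : ℕ) : Set Ω := firstPassage ξ L j ∩ {ω | ξ j ω ≤ b}
  let R (j : ℕ) (ω : Ω) : ℝ := ∑ i ∈ Finset.Ico (j + 1) m, ξ i ω
  have hR {j} (hj : j < m) (ω : Ω) : randomWalk ξ m ω = randomWalk ξ j ω + ξ j ω + R j ω := by
    rw [← randomWalk_succ, randomWalk_add_sum_Ico hj]
  calc P.real {ω | L + 2 * b ≤ randomWalk ξ m ω ∧ ∀ i < m, ξ i ω ≤ b}
      ≤ P.real (⋃ j ∈ Finset.range m, G j ∩ {ω | b ≤ R j ω}) := by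
        refine measureReal_mono ?_ (measure_ne_top P _)
        rintro ω ⟨hm, hstep⟩
        obtain ⟨j, hj, hfirst⟩ := exists_mem_firstPassage (ξ := ξ) (m := m) hL (by linarith)
        have := hfirst.2 j le_rfl
        have := hstep j hj
        refine Set.mem_biUnion (Finset.mem_range.2 hj) ⟨⟨hfirst, hstep j hj⟩, ?_⟩
        rw [hR hj] at hm
        exact Set.mem_ofPred.2 (by linarith)
    _ ≤ ∑ j ∈ Finset.range m, P.real (G j ∩ {ω | b ≤ R j ω}) := measureReal_biUnion_finset_le _ _
    _ = ∑ j ∈ Finset.range m, P.real (G j ∩ {ω | R j ω ≤ -b}) :=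
        Finset.sum_congr rfl fun j _ ↦ measureReal_firstPassage_reflect hξ hind hsymm m j b
    _ = P.real (⋃ j ∈ Finset.range m, G j ∩ {ω | R j ω ≤ -b}) := by
        refine (measureReal_biUnion_finset (fun i _ j _ hij ↦ ?_) fun j _ ↦ ?_).symm
        · exact (pairwise_disjoint_firstPassage hij).mono (fun _ h ↦ h.1.1) fun _ h ↦ h.1.1
        · exact ((measurableSet_firstPassage hξ L j).inter (hξ j measurableSet_Iic)).inter
            (Finset.measurable_sum _ (fun i _ ↦ hξ i) measurableSet_Iic)
    _ ≤ P.real ({ω | randomWalk ξ m ω ≤ L} ∩ ⋃ j ∈ Finset.range m, firstPassage ξ L j) := by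
        refine measureReal_mono (Set.iUnion₂_subset fun j hj ↦ ?_)
        rintro ω ⟨⟨hfirst, hstep : ξ j ω ≤ b⟩, hRj : R j ω ≤ -b⟩
        have := hfirst.2 j le_rfl
        have hj' := Finset.mem_range.1 hj
        exact ⟨Set.mem_ofPred.2 (by rw [hR hj']; linarith), Set.mem_biUnion hj hfirst⟩

lemma measureReal_walk_le_le_add (hξ : ∀ i, Measurable (ξ i)) (hind : iIndepFun ξ P)
    (hsymm : ∀ i, IdentDistrib (ξ i) (-ξ i) P P) {b : ℝ} (hL : 0 ≤ L) (hb : 0 < b) (m : ℕ) :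
    P.real {ω | ∀ k ≤ m, randomWalk ξ k ω ≤ L} ≤
      P.real {ω | -L ≤ randomWalk ξ m ω ∧ randomWalk ξ m ω ≤ L + 2 * b} +
        P.real {ω | ∃ i < m, b < ξ i ω} := by
  let S := randomWalk ξ m
  have hS : Measurable S := measurable_randomWalk hξ m
  have hbelow : P.real {ω | ∀ k ≤ m, randomWalk ξ k ω ≤ L} +
      P.real ({ω | S ω ≤ L} ∩ ⋃ j ∈ Finset.range m, firstPassage ξ L j) ≤ P.real {ω | S ω ≤ L} := by
    rw [← measureReal_union]
    · exact measureReal_mono (Set.union_subset (fun ω h ↦ h m le_rfl) fun ω h ↦ h.1)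
    · refine Set.disjoint_left.2 ?_
      rintro ω h ⟨-, hpassed⟩
      obtain ⟨j, hj, hfirst⟩ := Set.mem_iUnion₂.1 hpassed
      exact hfirst.1.not_ge (h (j + 1) (Finset.mem_range.1 hj))
    · exact (hS measurableSet_Iic).inter
        (Finset.measurableSet_biUnion _ fun j _ ↦ measurableSet_firstPassage hξ L j)
  have hreflect := measureReal_ge_le_firstPassage hξ hind hsymm hL hb m
  have habove : P.real {ω | L + 2 * b ≤ S ω} ≤
      P.real {ω | L + 2 * b ≤ S ω ∧ ∀ i < m, ξ i ω ≤ b} + P.real {ω | ∃ i < m, b < ξ i ω} := by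
    refine (measureReal_mono fun ω h ↦ ?_).trans (measureReal_union_le _ _)
    by_cases hstep : ∃ i < m, b < ξ i ω
    · exact .inr hstep
    · exact .inl ⟨h, by simpa using hstep⟩
  have hsymmS : P.real {ω | S ω ≤ L} = P.real {ω | -L ≤ S ω} := by
    simpa [S, randomWalk] using measureReal_le_neg_eq_measureReal_ge_of_symm
      (identDistrib_sum_neg_sum hind hsymm (Finset.range m)) (-L)
  have hwindow : P.real {ω | -L ≤ S ω} ≤
      P.real {ω | -L ≤ S ω ∧ S ω ≤ L + 2 * b} + P.real {ω | L + 2 * b ≤ S ω} := by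
    refine (measureReal_mono fun ω h ↦ ?_).trans (measureReal_union_le _ _)
    exact (le_total (S ω) (L + 2 * b)).imp (fun h' ↦ ⟨h, h'⟩) fun h' ↦ h'
  linarith

end RandomWalk

section GaussianWalk

variable {Ω : Type*} [mΩ : MeasurableSpace Ω] {P : Measure Ω} {ξ : ℕ → Ω → ℝ} {L : ℝ}

lemma identDistrib_neg_of_gaussianReal {Y : Ω → ℝ} {v : ℝ≥0}
    (hY : HasLaw Y (gaussianReal 0 v) P) : IdentDistrib Y (-Y) P P where
  aemeasurable_fst := hY.aemeasurable
  aemeasurable_snd := hY.aemeasurable.neg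
  map_eq := by simpa [hY.map_eq] using (gaussianReal_neg hY).map_eq.symm

variable [IsProbabilityMeasure P]

lemma measureReal_exists_lt_step_le (hlaw : ∀ i, HasLaw (ξ i) (gaussianReal 0 1) P) {b : ℝ}
    (hb : 0 ≤ b) (m : ℕ) :
    P.real {ω | ∃ i < m, b < ξ i ω} ≤ m * Real.exp (-b ^ 2 / 2) :=
  calc P.real {ω | ∃ i < m, b < ξ i ω}
      ≤ P.real (⋃ i ∈ Finset.range m, {ω | b ≤ ξ i ω}) := by
        refine measureReal_mono ?_ (measure_ne_top P _)
        rintro ω ⟨i, hi, hbi⟩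
        exact Set.mem_biUnion (Finset.mem_range.2 hi) hbi.le
    _ ≤ ∑ i ∈ Finset.range m, P.real {ω | b ≤ ξ i ω} := measureReal_biUnion_finset_le _ _
    _ ≤ ∑ _ ∈ Finset.range m, Real.exp (-b ^ 2 / 2) := Finset.sum_le_sum fun i _ ↦ by
        simpa using (hasSubgaussianMGF_of_hasLaw_gaussianReal (hlaw i)).measure_ge_le hb
    _ = m * Real.exp (-b ^ 2 / 2) := by simp

lemma measureReal_sum_mem_Icc_le (hind : iIndepFun ξ P)
    (hlaw : ∀ i, HasLaw (ξ i) (gaussianReal 0 1) P) {s : Finset ℕ} (hs : s.Nonempty) {a b : ℝ}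
    (hab : a ≤ b) :
    P.real {ω | a ≤ ∑ i ∈ s, ξ i ω ∧ ∑ i ∈ s, ξ i ω ≤ b} ≤ (b - a) / √s.card := by
  have h := (hasLaw_sum_gaussianReal hind hlaw s).measureReal_eq (p := fun x ↦ a ≤ x ∧ x ≤ b)
    measurableSet_Icc
  exact h.trans_le (by
    simpa using! gaussianReal_real_Icc_le 0 (v := s.card) (by simpa using hs.ne_empty) hab)

lemma measureReal_gaussianWalk_le_le (hξ : ∀ i, Measurable (ξ i)) (hind : iIndepFun ξ P)
    (hlaw : ∀ i, HasLaw (ξ i) (gaussianReal 0 1) P) {m : ℕ} (hm : m ≠ 0) (hL : 3 ≤ L)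
    (hmL : Real.log m ≤ L) :
    P.real {ω | ∀ k ≤ m, randomWalk ξ k ω ≤ L} ≤ 5 * L / √m := by
  have hsymm i := identDistrib_neg_of_gaussianReal (hlaw i)
  have hm0 : (0 : ℝ) < m := by positivity
  have hwindow : P.real {ω | -L ≤ randomWalk ξ m ω ∧ randomWalk ξ m ω ≤ L + 2 * L} ≤
      4 * L / √m := by
    refine (measureReal_sum_mem_Icc_le hind hlaw (s := Finset.range m) (by simpa using hm)
      (by linarith)).trans_eq ?_
    rw [Finset.card_range]
    ring
  have hstep : m * Real.exp (-L ^ 2 / 2) ≤ L / √m := by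
    have hsqrt : √m = Real.exp (Real.log m / 2) := by
      rw [Real.exp_half, Real.exp_log hm0]
    calc m * Real.exp (-L ^ 2 / 2) = Real.exp (Real.log m - L ^ 2 / 2) := by
          rw [sub_eq_add_neg, Real.exp_add, Real.exp_log hm0, neg_div]
      _ ≤ Real.exp (-(Real.log m / 2)) := Real.exp_le_exp.2 (by nlinarith)
      _ = 1 / √m := by rw [hsqrt, Real.exp_neg, one_div]
      _ ≤ L / √m := by gcongr; linarith
  calc P.real {ω | ∀ k ≤ m, randomWalk ξ k ω ≤ L}
      ≤ 4 * L / √m + L / √m := (measureReal_walk_le_le_add hξ hind hsymm (by linarith)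
        (by linarith) m).trans (add_le_add hwindow
          ((measureReal_exists_lt_step_le hlaw (by linarith) m).trans hstep))
    _ = 5 * L / √m := by ring

lemma measureReal_reversed_gaussianWalk_le_le (hξ : ∀ i, Measurable (ξ i)) (hind : iIndepFun ξ P)
    (hlaw : ∀ i, HasLaw (ξ i) (gaussianReal 0 1) P) {m n : ℕ} (hm : m ≠ 0) (hmn : m ≤ n)
    (hL : 3 ≤ L) (hmL : Real.log m ≤ L) :
    P.real {ω | ∀ k ≤ m, randomWalk ξ (n - k) ω - randomWalk ξ n ω ≤ L} ≤ 5 * L / √m := by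
  have h := measureReal_gaussianWalk_le_le (ξ := fun i ↦ -ξ (reverseBelow n i))
    (fun i ↦ (hξ _).neg)
    ((hind.precomp (reverseBelow_injective n)).comp (fun _ x ↦ -x) fun _ ↦ measurable_neg)
    (fun i ↦ by simpa using gaussianReal_neg (hlaw (reverseBelow n i))) hm hL hmL
  convert! h using 6 with ω k hk
  rw [randomWalk_neg_reverseBelow (hk.trans hmn)]

lemma measureReal_le_firstThird_lastThird_le (hξ : ∀ i, Measurable (ξ i)) (hind : iIndepFun ξ P)
    (hlaw : ∀ i, HasLaw (ξ i) (gaussianReal 0 1) P) {m n : ℕ} (hm : m ≠ 0) (hmn : 2 * m ≤ n)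
    (hL : 3 ≤ L) (hmL : Real.log m ≤ L) :
    P.real ({ω | ∀ k ≤ m, randomWalk ξ k ω ≤ L} ∩
      {ω | ∀ k ≤ m, randomWalk ξ (n - k) ω - randomWalk ξ n ω ≤ 2 * L}) ≤ 50 * L ^ 2 / m := by
  have hdisj : Disjoint (Set.Iio m) (Set.Ici (n - m)) :=
    Set.disjoint_left.2 fun i hi hi' ↦ by simp at hi hi'; lia
  have hindep := congrArg ENNReal.toReal
    ((Indep_iff _ _ P).1 (indep_stepAlgebra hξ hind hdisj) _ _
      (measurableSet_forall_randomWalk_le_stepAlgebra (ξ := ξ) (L := L) fun i hi ↦ hi)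
      (measurableSet_forall_reversed_le_stepAlgebra (ξ := ξ) (L := 2 * L) fun i hi ↦ hi))
  rw [ENNReal.toReal_mul] at hindep
  calc _ = _ := hindep
    _ ≤ 5 * L / √m * (5 * (2 * L) / √m) := mul_le_mul
        (measureReal_gaussianWalk_le_le hξ hind hlaw hm hL hmL)
        (measureReal_reversed_gaussianWalk_le_le hξ hind hlaw hm (by lia) (by linarith)
          (by linarith)) ENNReal.toReal_nonneg (by positivity)
    _ = 50 * L ^ 2 / m := by
        rw [div_mul_div_comm, Real.mul_self_sqrt (by positivity)]
        ring

lemma measureReal_gaussianBallot_le_of_two_mul_lt (hξ : ∀ i, Measurable (ξ i))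
    (hind : iIndepFun ξ P) (hlaw : ∀ i, HasLaw (ξ i) (gaussianReal 0 1) P) {m n : ℕ} (hm : m ≠ 0)
    (hmn : 2 * m < n) (hL : 3 ≤ L) (hmL : Real.log m ≤ L) :
    P.real {ω | (∀ k ≤ n, randomWalk ξ k ω ≤ L) ∧ -L ≤ randomWalk ξ n ω} ≤
      50 * L ^ 2 / m * (2 * L / √(n - 2 * m : ℕ)) := by
  let outer : Set ℕ := Set.Iio m ∪ Set.Ici (n - m)
  let E : Set Ω := {ω | ∀ k ≤ m, randomWalk ξ k ω ≤ L} ∩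
    {ω | ∀ k ≤ m, randomWalk ξ (n - k) ω - randomWalk ξ n ω ≤ 2 * L}
  let U (ω : Ω) : ℝ := randomWalk ξ m ω + ∑ i ∈ Finset.Ico (n - m) n, ξ i ω
  let M (ω : Ω) : ℝ := ∑ i ∈ Finset.Ico m (n - m), ξ i ω
  have hUM (ω) : U ω + M ω = randomWalk ξ n ω := by
    rw [← randomWalk_add_sum_Ico (n.sub_le m), ← randomWalk_add_sum_Ico (by lia : m ≤ n - m)]
    exact add_right_comm _ _ _
  have hE : MeasurableSet[stepAlgebra ξ outer] E :=
    (measurableSet_forall_randomWalk_le_stepAlgebra fun i hi ↦ .inl hi).inter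
      (measurableSet_forall_reversed_le_stepAlgebra fun i hi ↦ .inr hi)
  have hU : Measurable[stepAlgebra ξ outer] U :=
    (measurable_randomWalk_stepAlgebra fun i hi ↦ .inl hi).add
      (measurable_sum_stepAlgebra fun i hi ↦ .inr (Finset.mem_Ico.1 hi).1)
  have hM : Measurable[stepAlgebra ξ (Set.Ico m (n - m))] M :=
    measurable_sum_stepAlgebra fun i hi ↦ Finset.mem_Ico.1 hi
  have hdisj : Disjoint outer (Set.Ico m (n - m)) := Set.disjoint_left.2 fun i hi hi' ↦ by
    simp only [outer, Set.mem_union, Set.mem_Iio, Set.mem_Ici, Set.mem_Ico] at hi hi'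
    lia
  have hmiddle (u : ℝ) : P.real {ω | (u, M ω) ∈ {p : ℝ × ℝ | p.1 + p.2 ∈ Set.Icc (-L) L}} ≤
      2 * L / √(n - 2 * m : ℕ) := by
    have h := measureReal_sum_mem_Icc_le hind hlaw (s := Finset.Ico m (n - m))
      (Finset.nonempty_Ico.2 (by lia)) (by linarith : -L - u ≤ L - u)
    rw [Nat.card_Ico, show n - m - m = n - 2 * m by lia, show L - u - (-L - u) = 2 * L by ring] at h
    simpa only [Set.mem_ofPred, Set.mem_Icc, ← sub_le_iff_le_add', ← le_sub_iff_add_le'] using h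
  calc P.real {ω | (∀ k ≤ n, randomWalk ξ k ω ≤ L) ∧ -L ≤ randomWalk ξ n ω}
      ≤ P.real (E ∩ {ω | (U ω, M ω) ∈ {p : ℝ × ℝ | p.1 + p.2 ∈ Set.Icc (-L) L}}) := by
        refine measureReal_mono fun ω ⟨hle, hge⟩ ↦ ⟨⟨fun k hk ↦ hle k (by lia), fun k _ ↦ ?_⟩, ?_⟩
        · linarith [hle (n - k) (n.sub_le k)]
        · simpa only [Set.mem_ofPred, hUM] using ⟨hge, hle n le_rfl⟩
    _ ≤ P.real E * (2 * L / √(n - 2 * m : ℕ)) :=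
        measureReal_inter_pair_mem_le (stepAlgebra_le hξ _) hU
          (hM.mono (stepAlgebra_le hξ _) le_rfl)
          (indep_of_indep_of_le_right (indep_stepAlgebra hξ hind hdisj) hM.comap_le) hE
          (measurableSet_Icc.preimage (by fun_prop)) (by positivity) hmiddle
    _ ≤ 50 * L ^ 2 / m * (2 * L / √(n - 2 * m : ℕ)) := by
        gcongr
        exact measureReal_le_firstThird_lastThird_le hξ hind hlaw hm hmn.le hL hmL

lemma measureReal_gaussianBallot_le (hξ : ∀ i, Measurable (ξ i)) (hind : iIndepFun ξ P)
    (hlaw : ∀ i, HasLaw (ξ i) (gaussianReal 0 1) P) {n : ℕ} (hn : 3 ≤ n) (hL : 3 ≤ L)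
    (hnL : Real.log n ≤ L) :
    P.real {ω | (∀ k ≤ n, randomWalk ξ k ω ≤ L) ∧ -L ≤ randomWalk ξ n ω} ≤
      1000 * L ^ 3 / √n ^ 3 := by
  have hm : 0 < n / 3 := by lia
  have hm5 : (n : ℝ) ≤ 5 * (n / 3 : ℕ) := by exact_mod_cast (by lia : n ≤ 5 * (n / 3))
  have hn3 : (n : ℝ) ≤ 3 * (n - 2 * (n / 3) : ℕ) := by
    exact_mod_cast (by lia : n ≤ 3 * (n - 2 * (n / 3)))
  have hlog : Real.log (n / 3 : ℕ) ≤ L := hnL.trans' (Real.log_le_log (by positivity)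
    (by exact_mod_cast n.div_le_self 3))
  have hsqrt : √n ≤ 2 * √(n - 2 * (n / 3) : ℕ) := by
    rw [Real.sqrt_le_left (by positivity), mul_pow, Real.sq_sqrt (by positivity)]
    linarith
  have hsq : √(n : ℝ) ^ 2 = n := Real.sq_sqrt (by positivity)
  refine (measureReal_gaussianBallot_le_of_two_mul_lt hξ hind hlaw hm.ne' (by lia) hL hlog).trans ?_
  calc 50 * L ^ 2 / (n / 3 : ℕ) * (2 * L / √(n - 2 * (n / 3) : ℕ))
      ≤ 50 * L ^ 2 / (n / 5) * (2 * L / (√n / 2)) := by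
        gcongr
        · linarith
        · linarith
    _ = 1000 * L ^ 3 / √n ^ 3 := by
        rw [pow_succ (√(n : ℝ)) 2, hsq]
        field_simp
        ring

lemma covariance_randomWalk_of_le (hind : iIndepFun ξ P)
    (hlaw : ∀ i, HasLaw (ξ i) (gaussianReal 0 1) P) {k n : ℕ} (hkn : k ≤ n) :
    cov[randomWalk ξ k, randomWalk ξ n; P] = k := by
  have hL2 i : MemLp (ξ i) 2 P := (hlaw i).hasGaussianLaw.memLp_two
  have hcov i j : cov[ξ i, ξ j; P] = if i = j then 1 else 0 := by
    split_ifs with hij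
    · rw [hij, covariance_self (hlaw j).aemeasurable, (hlaw j).variance_eq]
      simp
    · exact (hind.indepFun hij).covariance_eq_zero (hL2 i) (hL2 j)
  unfold randomWalk
  rw [covariance_fun_sum_fun_sum' (fun i _ ↦ hL2 i) fun j _ ↦ hL2 j]
  have hlt : ∀ i ∈ Finset.range k, i < n := fun i hi ↦ (Finset.mem_range.1 hi).trans_le hkn
  simp [hcov, Finset.sum_ite_of_true hlt]

lemma indepFun_bridge_endpoint (hξ : ∀ i, Measurable (ξ i)) (hind : iIndepFun ξ P)
    (hlaw : ∀ i, HasLaw (ξ i) (gaussianReal 0 1) P) {n : ℕ} (hn : n ≠ 0) :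
    IndepFun (fun ω (k : Fin (n + 1)) ↦ randomWalk ξ k ω - k / n * randomWalk ξ n ω)
      (randomWalk ξ n) P := by
  have hgauss : IsGaussianProcess ξ P :=
    isGaussianProcess_of_iIndepFun hind fun i ↦ (hlaw i).hasGaussianLaw
  have hwalk (k : ℕ) : MemLp (randomWalk ξ k) 2 P :=
    memLp_finsetSum _ fun i _ ↦ (hlaw i).hasGaussianLaw.memLp_two
  have hjoint : IsGaussianProcess (Sum.elim
      (fun (k : Fin (n + 1)) ω ↦ randomWalk ξ k ω - k / n * randomWalk ξ n ω)
      (fun (_ : Unit) ↦ randomWalk ξ n)) P := by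
    let S (m : ℕ) : ℕ →₀ ℝ := ∑ i ∈ Finset.range m, Finsupp.single i 1
    convert! isGaussianProcess_linearCombination hgauss
      (Sum.elim (fun k : Fin (n + 1) ↦ S k - (k / n : ℝ) • S n) fun _ : Unit ↦ S n) using 2 with i
    cases i <;> ext ω <;> simp [S, randomWalk]
  refine (hjoint.indepFun_of_covariance_eq_zero
    (fun k ↦ ((measurable_randomWalk hξ k).sub
      ((measurable_randomWalk hξ n).const_mul _)).aemeasurable)
    (fun _ ↦ (measurable_randomWalk hξ n).aemeasurable) fun k _ ↦ ?_).comp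
    measurable_id (measurable_pi_apply ())
  rw [covariance_fun_sub_left (hwalk k) ((hwalk n).const_mul _) (hwalk n),
    covariance_const_mul_left, covariance_randomWalk_of_le hind hlaw (Nat.le_of_lt_succ k.2),
    covariance_randomWalk_of_le hind hlaw le_rfl]
  field_simp
  ring

lemma measure_gaussianBallot_drift_le (hξ : ∀ i, Measurable (ξ i)) (hind : iIndepFun ξ P)
    (hlaw : ∀ i, HasLaw (ξ i) (gaussianReal 0 1) P) {n : ℕ} (hn : 3 ≤ n) (hL : 3 ≤ L)
    (hnL : Real.log n ≤ L) {l H : ℝ} (hl : 0 ≤ l) (hHL : H ≤ L) :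
    P {ω | (∀ k ≤ n, randomWalk ξ k ω ≤ l * k + L) ∧ l * n - H ≤ randomWalk ξ n ω} ≤
      ENNReal.ofReal (Real.exp (l * H - l ^ 2 / 2 * n) * (1000 * L ^ 3 / √n ^ 3)) := by
  have hn0 : (n : ℝ) ≠ 0 := by positivity
  let B (ω : Ω) (k : Fin (n + 1)) : ℝ := randomWalk ξ k ω - k / n * randomWalk ξ n ω
  let T : Set ((Fin (n + 1) → ℝ) × ℝ) := {p | (∀ k, p.1 k + k / n * p.2 ≤ L) ∧ -H ≤ p.2}
  have hT : MeasurableSet T := by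
    simp only [T, Set.ofPred_and, Set.ofPred_forall]
    exact (MeasurableSet.iInter fun k ↦ measurableSet_le (by fun_prop) measurable_const).inter
      (measurableSet_le measurable_const measurable_snd)
  have hlaw_n : HasLaw (randomWalk ξ n) (gaussianReal 0 n) P := by
    simpa using! hasLaw_sum_gaussianReal hind hlaw (Finset.range n)
  have hballot : P {ω | (B ω, randomWalk ξ n ω) ∈ T} ≤ ENNReal.ofReal (1000 * L ^ 3 / √n ^ 3) := by
    rw [ENNReal.le_ofReal_iff_toReal_le (measure_ne_top P _) (by positivity)]
    refine le_trans (ENNReal.toReal_mono (measure_ne_top P _) (measure_mono fun ω h ↦ ?_))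
      (measureReal_gaussianBallot_le hξ hind hlaw hn hL hnL)
    exact ⟨fun k hk ↦ by simpa [B] using! h.1 ⟨k, Nat.lt_succ_of_le hk⟩, (neg_le_neg hHL).trans h.2⟩
  calc P {ω | (∀ k ≤ n, randomWalk ξ k ω ≤ l * k + L) ∧ l * n - H ≤ randomWalk ξ n ω}
      ≤ P {ω | (B ω, randomWalk ξ n ω - l * n) ∈ T} := by
        refine measure_mono fun ω ⟨hle, hge⟩ ↦ ⟨fun k ↦ ?_, by simpa using! by linarith⟩
        have := hle k (Nat.le_of_lt_succ k.2)
        calc B ω k + k / n * (randomWalk ξ n ω - l * n) = randomWalk ξ k ω - l * k := by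
              simp only [B]
              field_simp
              ring
          _ ≤ L := by linarith
    _ ≤ ENNReal.ofReal (Real.exp ((l * n * H - (l * n) ^ 2 / 2) / (n : ℝ≥0))) *
          P {ω | (B ω, randomWalk ξ n ω) ∈ T} :=
        measure_pair_sub_const_mem_le (by positivity)
          (measurable_pi_lambda B fun k ↦ (measurable_randomWalk hξ k).sub
            ((measurable_randomWalk hξ n).const_mul _)) (measurable_randomWalk hξ n) hlaw_n
          (indepFun_bridge_endpoint hξ hind hlaw (by lia)) (by positivity) hT fun p hp ↦ hp.2
    _ ≤ ENNReal.ofReal (Real.exp (l * H - l ^ 2 / 2 * n)) *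
          ENNReal.ofReal (1000 * L ^ 3 / √n ^ 3) := by
        gcongr ENNReal.ofReal (Real.exp ?_) * ?_
        exact le_of_eq (by push_cast; field_simp)
    _ = _ := (ENNReal.ofReal_mul (Real.exp_pos _).le).symm

end GaussianWalk

section Chaining

variable {ι : Type*}

/-- The point of the dyadic lattice of mesh `2⁻ᵐ` with integer coordinates `g`. -/
def dyadicPoint (m : ℕ) (g : ι → ℕ) : ι → ℝ := fun i ↦ g i / 2 ^ m

/-- The exponential sum over the edges of the chaining tree of the unit cube. Every point of the
lattice of mesh `2⁻⁽ᵐ⁺¹⁾` is joined to the lower corner of the cell of mesh `2⁻ᵐ` containing it;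
the increment of `F` along that edge is allowed the fraction `w m` of the total increment. -/
def chainingSum [Fintype ι] [DecidableEq ι] (w : ℕ → ℝ) (K : ℝ) (F : (ι → ℝ) → ℝ) : ℝ≥0∞ :=
  ∑' m, ∑ g ∈ Fintype.piFinset fun _ ↦ Finset.range (2 ^ (m + 1)),
    ENNReal.ofReal (Real.exp (-(K * m) +
      (F (dyadicPoint (m + 1) g) - F (dyadicPoint m fun i ↦ g i / 2)) / w m))

lemma tendsto_dyadicPoint_floor {p : ι → ℝ} (hp : ∀ i, 0 ≤ p i) :
    Tendsto (fun m ↦ dyadicPoint m fun i ↦ ⌊p i * 2 ^ m⌋₊) atTop (𝓝 p) :=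
  tendsto_pi_nhds.2 fun i ↦ (tendsto_nat_floor_mul_div_atTop (hp i)).comp
    (tendsto_pow_atTop_atTop_of_one_lt (one_lt_two (α := ℝ)))

lemma dyadicPoint_zero_floor {p : ι → ℝ} (hp : ∀ i, p i ∈ Set.Ico 0 1) :
    (dyadicPoint 0 fun i ↦ ⌊p i * 2 ^ 0⌋₊) = 0 := by
  ext i
  simp [dyadicPoint, (hp i).2]

lemma dyadicPoint_half_le (m : ℕ) (g : ι → ℕ) (i : ι) :
    dyadicPoint m (fun i ↦ g i / 2) i ≤ dyadicPoint (m + 1) g i := by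
  have : ((g i / 2 : ℕ) : ℝ) ≤ g i / 2 := Nat.cast_div_le
  rw [dyadicPoint, dyadicPoint, pow_succ', ← div_div]
  gcongr

lemma dyadicPoint_sub_half_le (m : ℕ) (g : ι → ℕ) (i : ι) :
    dyadicPoint (m + 1) g i - dyadicPoint m (fun i ↦ g i / 2) i ≤ (1 / 2) ^ (m + 1) := by
  have : (g i : ℝ) ≤ 2 * (g i / 2 : ℕ) + 1 := by exact_mod_cast (by lia)
  rw [dyadicPoint, dyadicPoint, one_div_pow, pow_succ', sub_le_iff_le_add]
  field_simp
  linarith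

variable [Fintype ι] [DecidableEq ι]

lemma ofReal_exp_edge_le_chainingSum (w : ℕ → ℝ) (K : ℝ) (F : (ι → ℝ) → ℝ) {p : ι → ℝ}
    (hp : ∀ i, p i ∈ Set.Ico 0 1) (m : ℕ) :
    ENNReal.ofReal (Real.exp (-(K * m) + (F (dyadicPoint (m + 1) fun i ↦ ⌊p i * 2 ^ (m + 1)⌋₊) -
      F (dyadicPoint m fun i ↦ ⌊p i * 2 ^ m⌋₊)) / w m)) ≤ chainingSum w K F := by
  have hlt (i : ι) : ⌊p i * 2 ^ (m + 1)⌋₊ < 2 ^ (m + 1) := by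
    rw [Nat.floor_lt (mul_nonneg (hp i).1 (by positivity))]
    push_cast
    exact mul_lt_of_lt_one_left (by positivity) (hp i).2
  have hhalf (i : ι) : ⌊p i * 2 ^ m⌋₊ = ⌊p i * 2 ^ (m + 1)⌋₊ / 2 := by
    rw [← Nat.floor_div_ofNat, pow_succ, ← mul_assoc]
    simp
  simp only [hhalf]
  refine le_trans ?_ (ENNReal.le_tsum m)
  exact Finset.single_le_sum_of_canonicallyOrdered
    (f := fun g : ι → ℕ ↦ ENNReal.ofReal (Real.exp (-(K * m) +
      (F (dyadicPoint (m + 1) g) - F (dyadicPoint m fun i ↦ g i / 2)) / w m)))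
    (Fintype.mem_piFinset.2 fun i ↦ Finset.mem_range.2 (hlt i))

lemma ofReal_exp_sub_le_chainingSum {w : ℕ → ℝ} (hw0 : ∀ m, 0 < w m) (hw : HasSum w 1) {S : ℝ}
    (hwS : HasSum (fun m ↦ w m * m) S) {K : ℝ} (hK : 0 ≤ K) {F : (ι → ℝ) → ℝ} (hF : Continuous F)
    {p : ι → ℝ} (hp : ∀ i, p i ∈ Set.Ico 0 1) :
    ENNReal.ofReal (Real.exp (F p - F 0)) ≤
      ENNReal.ofReal (Real.exp (K * S)) * (1 + chainingSum w K F) := by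
  rcases eq_or_ne (chainingSum w K F) ∞ with htop | htop
  · simp [htop, ENNReal.mul_top, Real.exp_pos]
  set Q : ℝ := (1 + chainingSum w K F).toReal with hQ
  have hQ1 : 1 ≤ Q := by simp [hQ, ENNReal.toReal_add ENNReal.one_ne_top htop]
  let q (m : ℕ) : ι → ℝ := dyadicPoint m fun i ↦ ⌊p i * 2 ^ m⌋₊
  have hedge (m : ℕ) : F (q (m + 1)) - F (q m) ≤ w m * Real.log Q + w m * m * K := by
    have h : Real.exp (-(K * m) + (F (q (m + 1)) - F (q m)) / w m) ≤ Q :=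
      ENNReal.ofReal_le_iff_le_toReal (by simp [htop]) |>.1
        ((ofReal_exp_edge_le_chainingSum w K F hp m).trans le_add_self)
    rw [← Real.le_log_iff_exp_le (by linarith), neg_add_le_iff_le_add, div_le_iff₀ (hw0 m)] at h
    linarith
  have hbound : HasSum (fun m ↦ w m * Real.log Q + w m * m * K) (Real.log Q + S * K) := by
    simpa using (hw.mul_right (Real.log Q)).add (hwS.mul_right K)
  have hpartial (n : ℕ) : F (q n) - F 0 ≤ Real.log Q + S * K := by
    rw [← dyadicPoint_zero_floor hp, ← Finset.sum_range_sub (fun m ↦ F (q m)) n]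
    refine (Finset.sum_le_sum fun m _ ↦ hedge m).trans (sum_le_hasSum _ (fun m _ ↦ ?_) hbound)
    have := hw0 m
    have := Real.log_nonneg hQ1
    positivity
  have hlim : F p - F 0 ≤ Real.log Q + S * K :=
    le_of_tendsto (((hF.tendsto p).comp
      (tendsto_dyadicPoint_floor fun i ↦ (hp i).1)).sub_const _) (.of_forall hpartial)
  rw [← ENNReal.ofReal_toReal (a := 1 + chainingSum w K F) (by simp [htop]),
    ← ENNReal.ofReal_mul (Real.exp_pos _).le, ← hQ]
  gcongr
  calc Real.exp (F p - F 0) ≤ Real.exp (K * S + Real.log Q) := Real.exp_le_exp.2 (by linarith)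
    _ = Real.exp (K * S) * Q := by rw [Real.exp_add, Real.exp_log (by linarith)]

variable (ι) in
/-- The exponential penalty per dyadic scale under which the `2 ^ ((m + 1) * card ι)` edges of
level `m` have a summable total weight. -/
def chainingPenalty : ℝ := (Fintype.card ι + 1) * Real.log 2

lemma card_mul_exp_neg_chainingPenalty (m : ℕ) :
    (Fintype.piFinset fun _ : ι ↦ Finset.range (2 ^ (m + 1))).card *
      Real.exp (-(chainingPenalty ι * m)) = 2 ^ Fintype.card ι * (1 / 2) ^ m := by
  have hpow : Real.exp (-(chainingPenalty ι * m)) = (2 ^ ((Fintype.card ι + 1) * m))⁻¹ := by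
    rw [Real.exp_neg, chainingPenalty, mul_right_comm, mul_comm (_ * _) (Real.log 2), Real.exp_mul,
      Real.exp_log two_pos]
    norm_cast
  simp only [hpow, Fintype.card_piFinset, Finset.card_range, Finset.prod_const, Finset.card_univ]
  push_cast
  rw [one_div, inv_pow]
  field_simp
  ring

lemma lintegral_mul_chainingSum_le {Ω : Type*} [MeasurableSpace Ω] {P : Measure Ω} {Z : Ω → ℝ≥0∞}
    (hZ : Measurable Z) {F : Ω → (ι → ℝ) → ℝ} (hF : ∀ p, Measurable fun ω ↦ F ω p) {w : ℕ → ℝ}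
    {B : ℝ≥0∞} (hB : ∀ m, ∀ g : ι → ℕ, (∀ i, g i < 2 ^ (m + 1)) →
      ∫⁻ ω, Z ω * ENNReal.ofReal (Real.exp ((F ω (dyadicPoint (m + 1) g) -
        F ω (dyadicPoint m fun i ↦ g i / 2)) / w m)) ∂P ≤ B) :
    ∫⁻ ω, Z ω * chainingSum w (chainingPenalty ι) (F ω) ∂P ≤
      ENNReal.ofReal (2 ^ Fintype.card ι * 2) * B := by
  let Y (m : ℕ) (g : ι → ℕ) (ω : Ω) : ℝ≥0∞ := ENNReal.ofReal (Real.exp ((F ω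
    (dyadicPoint (m + 1) g) - F ω (dyadicPoint m fun i ↦ g i / 2)) / w m))
  have hY m g : Measurable (Y m g) := by fun_prop
  let c (m : ℕ) : ℝ≥0∞ := ENNReal.ofReal (Real.exp (-(chainingPenalty ι * m)))
  let G (m : ℕ) : Finset (ι → ℕ) := Fintype.piFinset fun _ ↦ Finset.range (2 ^ (m + 1))
  calc ∫⁻ ω, Z ω * chainingSum w (chainingPenalty ι) (F ω) ∂P
      = ∫⁻ ω, ∑' m, ∑ g ∈ G m, c m * (Z ω * Y m g ω) ∂P := by
        refine lintegral_congr fun ω ↦ ?_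
        simp only [chainingSum, ← ENNReal.tsum_mul_left, Finset.mul_sum, Real.exp_add,
          ENNReal.ofReal_mul (Real.exp_pos _).le, mul_left_comm (Z ω), G, c, Y]
    _ = ∑' m, ∑ g ∈ G m, c m * ∫⁻ ω, Z ω * Y m g ω ∂P := by
        rw [lintegral_tsum fun m ↦ by fun_prop]
        refine tsum_congr fun m ↦ ?_
        rw [lintegral_finsetSum _ fun g _ ↦ by fun_prop]
        exact Finset.sum_congr rfl fun g _ ↦ lintegral_const_mul _ (by fun_prop)
    _ ≤ ∑' m, ENNReal.ofReal (2 ^ Fintype.card ι * (1 / 2) ^ m) * B := by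
        refine ENNReal.tsum_le_tsum fun m ↦
          (Finset.sum_le_card_nsmul _ _ (c m * B) fun g hg ↦ ?_).trans_eq ?_
        · gcongr
          exact hB m g fun i ↦ Finset.mem_range.1 (Fintype.mem_piFinset.1 hg i)
        · rw [nsmul_eq_mul, ← mul_assoc, ← ENNReal.ofReal_natCast, ← ENNReal.ofReal_mul (by simp),
            card_mul_exp_neg_chainingPenalty]
    _ = ENNReal.ofReal (2 ^ Fintype.card ι * 2) * B := by
        rw [ENNReal.tsum_mul_right, ← ENNReal.ofReal_tsum_of_nonneg (fun m ↦ by positivity)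
          (summable_geometric_two.mul_left _), tsum_mul_left, tsum_geometric_two]

/-- The fractions of the total increment allotted to the dyadic scales. Any geometric sequence of
ratio in `(2 ^ (-1 / 2), 1)` would do. -/
def chainingWeight (m : ℕ) : ℝ := (3 / 4) ^ m / 4

lemma chainingWeight_pos (m : ℕ) : 0 < chainingWeight m := by unfold chainingWeight; positivity

lemma hasSum_chainingWeight : HasSum chainingWeight 1 := by
  convert! (hasSum_geometric_of_lt_one (r := (3 / 4 : ℝ)) (by norm_num) (by norm_num)).div_const 4
  norm_num

lemma hasSum_chainingWeight_mul : HasSum (fun m ↦ chainingWeight m * m) 3 := by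
  convert! (hasSum_coe_mul_geometric_of_norm_lt_one (r := (3 / 4 : ℝ))
    (by norm_num [abs_of_pos])).div_const 4 using 1
  · ext m
    simp only [chainingWeight]
    ring
  · norm_num

lemma measurable_chainingSum {Ω : Type*} [MeasurableSpace Ω] {F : Ω → (ι → ℝ) → ℝ}
    (hF : ∀ p, Measurable fun ω ↦ F ω p) (w : ℕ → ℝ) (K : ℝ) :
    Measurable fun ω ↦ chainingSum w K (F ω) := by
  unfold chainingSum
  fun_prop

variable (ι) in
/-- The constant of the maximal inequality `measure_exists_le_add_sub_le` on the unit cube. -/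
def chainingConstant : ℝ := Real.exp (3 * chainingPenalty ι) * (1 + 2 ^ Fintype.card ι * 2)

lemma chainingConstant_pos (ι : Type*) [Fintype ι] : 0 < chainingConstant ι := by
  unfold chainingConstant
  positivity

lemma one_le_ofReal_exp_mul_chainingSum {F : (ι → ℝ) → ℝ} (hF : Continuous F) {p : ι → ℝ}
    (hp : ∀ i, p i ∈ Set.Ico 0 1) {u y : ℝ} (hu : u ≤ y + (F p - F 0)) :
    1 ≤ ENNReal.ofReal (Real.exp (-u + chainingPenalty ι * 3)) *
      (ENNReal.ofReal (Real.exp y) * (1 + chainingSum chainingWeight (chainingPenalty ι) F)) := by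
  have hK : 0 ≤ chainingPenalty ι := by unfold chainingPenalty; positivity
  calc (1 : ℝ≥0∞) ≤ ENNReal.ofReal (Real.exp (-u)) *
        (ENNReal.ofReal (Real.exp y) * ENNReal.ofReal (Real.exp (F p - F 0))) := by
        simp only [← ENNReal.ofReal_mul (Real.exp_pos _).le, ← Real.exp_add]
        exact ENNReal.one_le_ofReal.2 (Real.one_le_exp (by linarith))
    _ ≤ ENNReal.ofReal (Real.exp (-u)) * (ENNReal.ofReal (Real.exp y) *
        (ENNReal.ofReal (Real.exp (chainingPenalty ι * 3)) *
          (1 + chainingSum chainingWeight (chainingPenalty ι) F))) := by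
        gcongr
        exact ofReal_exp_sub_le_chainingSum chainingWeight_pos hasSum_chainingWeight
          hasSum_chainingWeight_mul hK hF hp
    _ = _ := by
        rw [Real.exp_add, ENNReal.ofReal_mul (Real.exp_pos _).le,
          mul_left_comm (ENNReal.ofReal (Real.exp y)), mul_assoc]

end Chaining

lemma measure_exists_le_add_sub_le {ι Ω : Type*} [Fintype ι] [MeasurableSpace Ω] {P : Measure Ω}
    {Y : Ω → ℝ} (hY : Measurable Y) {F : Ω → (ι → ℝ) → ℝ} (hF : ∀ p, Measurable fun ω ↦ F ω p)
    (hcont : ∀ᵐ ω ∂P, Continuous (F ω)) {B : ℝ≥0∞}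
    (hB₀ : ∫⁻ ω, ENNReal.ofReal (Real.exp (Y ω)) ∂P ≤ B)
    (hB : ∀ m, ∀ g : ι → ℕ, (∀ i, g i < 2 ^ (m + 1)) →
      ∫⁻ ω, ENNReal.ofReal (Real.exp (Y ω + (F ω (dyadicPoint (m + 1) g) -
        F ω (dyadicPoint m fun i ↦ g i / 2)) / chainingWeight m)) ∂P ≤ B) (u : ℝ) :
    P {ω | ∃ p : ι → ℝ, (∀ i, p i ∈ Set.Ico 0 1) ∧ u ≤ Y ω + (F ω p - F ω 0)} ≤
      ENNReal.ofReal (chainingConstant ι * Real.exp (-u)) * B := by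
  classical
  set K := chainingPenalty ι
  let Z (ω : Ω) : ℝ≥0∞ := ENNReal.ofReal (Real.exp (Y ω))
  let W (ω : Ω) : ℝ≥0∞ := Z ω * (1 + chainingSum chainingWeight K (F ω))
  have hZ : Measurable Z := by fun_prop
  have hW : Measurable W := hZ.mul ((measurable_chainingSum hF _ _).const_add 1)
  have hsub : ∀ᵐ ω ∂P, (∃ p : ι → ℝ, (∀ i, p i ∈ Set.Ico 0 1) ∧ u ≤ Y ω + (F ω p - F ω 0)) →
      1 ≤ ENNReal.ofReal (Real.exp (-u + K * 3)) * W ω := by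
    filter_upwards [hcont] with ω hω ⟨p, hp, hu⟩
    exact one_le_ofReal_exp_mul_chainingSum hω hp hu
  calc P {ω | ∃ p : ι → ℝ, (∀ i, p i ∈ Set.Ico 0 1) ∧ u ≤ Y ω + (F ω p - F ω 0)}
      ≤ P {ω | 1 ≤ ENNReal.ofReal (Real.exp (-u + K * 3)) * W ω} := measure_mono_ae hsub
    _ ≤ ∫⁻ ω, ENNReal.ofReal (Real.exp (-u + K * 3)) * W ω ∂P := by
        simpa using mul_meas_ge_le_lintegral (μ := P) (hW.const_mul _) 1
    _ = ENNReal.ofReal (Real.exp (-u + K * 3)) *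
          (∫⁻ ω, Z ω ∂P + ∫⁻ ω, Z ω * chainingSum chainingWeight K (F ω) ∂P) := by
        rw [lintegral_const_mul _ hW, ← lintegral_add_left hZ]
        simp only [W, mul_add, mul_one]
    _ ≤ ENNReal.ofReal (Real.exp (-u + K * 3)) *
          (B + ENNReal.ofReal (2 ^ Fintype.card ι * 2) * B) := by
        gcongr
        refine lintegral_mul_chainingSum_le hZ hF fun m g hg ↦ ?_
        simpa only [Z, ← ENNReal.ofReal_mul (Real.exp_pos _).le, ← Real.exp_add] using hB m g hg
    _ = _ := by
        rw [chainingConstant, ← one_add_mul, ← ENNReal.ofReal_one,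
          ← ENNReal.ofReal_add zero_le_one (by positivity), ← mul_assoc,
          ← ENNReal.ofReal_mul (Real.exp_pos _).le, Real.exp_add]
        congr 2
        simp only [K]
        ring_nf

section Field

section GaussianProcess

variable {Ω : Type*} [MeasurableSpace Ω] {P : Measure Ω}

lemma isGaussianProcess_of_map_sum_eq_gaussianReal {T : Type*} {X : T → Ω → ℝ}
    (hX : ∀ t, AEMeasurable (X t) P) (h : ∀ (n : ℕ) (c : Fin n → ℝ) (t : Fin n → T),
      ∃ (μ : ℝ) (v : ℝ≥0), P.map (fun ω ↦ ∑ i, c i * X (t i) ω) = gaussianReal μ v) :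
    IsGaussianProcess X P where
  hasGaussianLaw I := by
    classical
    constructor
    refine isGaussian_of_map_eq_gaussianReal fun L ↦ ?_
    obtain ⟨μ, v, hv⟩ := h I.card (fun i ↦ L (Pi.single (I.equivFin.symm i) 1))
      fun i ↦ I.equivFin.symm i
    refine ⟨μ, v, hv ▸ ?_⟩
    have hrestrict : AEMeasurable (fun ω ↦ I.restrict (X · ω)) P :=
      aemeasurable_pi_lambda _ fun i ↦ hX i
    rw [AEMeasurable.map_map_of_aemeasurable (by fun_prop) hrestrict]
    congr 1
    ext ω
    rw [Function.comp_apply, pi_eq_sum_univ' (I.restrict (X · ω)), map_sum,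
      ← I.equivFin.symm.sum_comp]
    exact Finset.sum_congr rfl fun i _ ↦ by rw [map_smul, smul_eq_mul, mul_comm]; rfl

lemma lintegral_ofReal_exp_of_hasGaussianLaw {Y : Ω → ℝ} (hY : HasGaussianLaw Y P) :
    ∫⁻ ω, ENNReal.ofReal (Real.exp (Y ω)) ∂P =
      ENNReal.ofReal (Real.exp (P[Y] + Var[Y; P] / 2)) := by
  have hmap := hY.map_eq_gaussianReal
  have hint : Integrable (fun ω ↦ Real.exp (Y ω)) P := by
    have h := integrable_exp_mul_gaussianReal (μ := P[Y]) (v := Var[Y; P].toNNReal) 1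
    rw [← hmap, integrable_map_measure (by fun_prop) hY.aemeasurable] at h
    simpa [Function.comp_def] using h
  have hmgf := mgf_gaussianReal hmap 1
  rw [← ofReal_integral_eq_lintegral_ofReal hint (ae_of_all _ fun _ ↦ (Real.exp_pos _).le)]
  simpa [mgf, Real.coe_toNNReal _ (variance_nonneg Y P)] using congrArg ENNReal.ofReal hmgf

lemma covariance_eq_of_indep_increments [IsProbabilityMeasure P] {E : Type*} {X : ℝ → E → Ω → ℝ}
    (hL2 : ∀ t x, MemLp (X t x) 2 P) {s t : ℝ} (hs : 0 ≤ s) (x y : E)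
    (hind : Indep (⨆ x : E, MeasurableSpace.comap (fun ω ↦ X t x ω - X s x ω) inferInstance)
      (⨆ u ∈ Set.Icc (0 : ℝ) s, ⨆ x : E, MeasurableSpace.comap (X u x) inferInstance) P) :
    cov[X s x, X t y; P] = cov[X s x, X s y; P] := by
  have hincr : IndepFun (fun ω ↦ X t y ω - X s y ω) (X s x) P := by
    refine (IndepFun_iff_Indep ..).2 (indep_of_indep_of_le_left
      (indep_of_indep_of_le_right hind ?_) (le_iSup_of_le y le_rfl))
    exact le_iSup₂_of_le s ⟨hs, le_rfl⟩ (le_iSup_of_le x le_rfl)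
  have hzero := hincr.symm.covariance_eq_zero (hL2 s x) ((hL2 t y).sub (hL2 s y))
  rw [covariance_fun_sub_right (hL2 s x) (hL2 t y) (hL2 s y)] at hzero
  linarith

end GaussianProcess

variable {E : Type*} [NormedAddCommGroup E] [NormedSpace ℝ E]

/-- The covariance `K_t(z) = ∫_1^{eᵗ} k(uz) / u du` of a star-scale invariant field with seed
covariance `k`. -/
def scaleCov (k : E → ℝ) (t : ℝ) (z : E) : ℝ :=
  ∫ u in Set.Icc 1 (Real.exp t), k (u • z) / u

section ScaleCov

variable {k : E → ℝ} {t : ℝ}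

lemma scaleCov_zero (hk : k 0 = 1) (ht : 0 ≤ t) : scaleCov k t 0 = t := by
  rw [scaleCov, integral_Icc_eq_integral_Ioc,
    ← intervalIntegral.integral_of_le (Real.one_le_exp ht)]
  simp only [smul_zero, hk]
  rw [integral_one_div_of_pos one_pos (Real.exp_pos t)]
  simp

lemma abs_scaleCov_sub_le {Λ : ℝ≥0} (hk : LipschitzWith Λ k) (ht : 0 ≤ t) (z w : E) :
    |scaleCov k t z - scaleCov k t w| ≤ Λ * Real.exp t * ‖z - w‖ := by
  have hint (z : E) : IntegrableOn (fun u : ℝ ↦ k (u • z) / u) (Set.Icc 1 (Real.exp t)) := by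
    have := hk.continuous
    refine (ContinuousOn.div (by fun_prop) (by fun_prop) fun u hu ↦ ?_).integrableOn_Icc
    exact (zero_lt_one.trans_le hu.1).ne'
  have hbound (u : ℝ) (hu : u ∈ Set.Icc 1 (Real.exp t)) :
      ‖k (u • z) / u - k (u • w) / u‖ ≤ Λ * ‖z - w‖ := by
    have hu0 : 0 < u := zero_lt_one.trans_le hu.1
    rw [← sub_div, norm_div, Real.norm_of_nonneg hu0.le, div_le_iff₀ hu0]
    calc ‖k (u • z) - k (u • w)‖ ≤ Λ * ‖u • z - u • w‖ := hk.norm_sub_le _ _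
      _ = Λ * ‖z - w‖ * u := by rw [← smul_sub, norm_smul, Real.norm_of_nonneg hu0.le]; ring
  rw [scaleCov, scaleCov, ← integral_sub (hint z) (hint w)]
  calc |∫ u in Set.Icc 1 (Real.exp t), k (u • z) / u - k (u • w) / u|
      ≤ Λ * ‖z - w‖ * volume.real (Set.Icc 1 (Real.exp t)) :=
        norm_setIntegral_le_of_norm_le_const (by simp) hbound
    _ ≤ Λ * ‖z - w‖ * Real.exp t := by
        rw [Real.volume_real_Icc_of_le (Real.one_le_exp ht)]
        gcongr
        linarith
    _ = Λ * Real.exp t * ‖z - w‖ := by ring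

end ScaleCov

variable {Ω : Type*} [MeasurableSpace Ω]

/-- A continuous centred Gaussian field `X_t(x)`, indexed by a scale `t ≥ 0` and a point `x`, which
is star-scale invariant with seed covariance `k`: its increments in `t` are independent of the past
and `X_t` has the covariance `K_t(x - y)` of `scaleCov`. For a Gaussian field both properties are
contained in `𝔼[X_s(x) X_t(y)] = K_{s ∧ t}(x - y)`. -/
structure IsStarScaleField (P : Measure Ω) (k : E → ℝ) (X : ℝ → E → Ω → ℝ) : Prop where
  seed_zero : k 0 = 1
  measurable (t : ℝ) (x : E) : Measurable (X t x)
  isGaussianProcess : IsGaussianProcess (fun p : ℝ × E ↦ X p.1 p.2) P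
  integral_eq_zero (t : ℝ) (x : E) : P[X t x] = 0
  covariance_eq {s t : ℝ} (hs : 0 ≤ s) (hst : s ≤ t) (x y : E) :
    cov[X s x, X t y; P] = scaleCov k s (x - y)
  ae_continuous : ∀ᵐ ω ∂P, Continuous fun p : ℝ × E ↦ X p.1 p.2 ω

variable {P : Measure Ω} {k : E → ℝ} {X : ℝ → E → Ω → ℝ}

namespace IsStarScaleField

lemma of_indep_increments [IsProbabilityMeasure P] (hk0 : k 0 = 1)
    (hmeas : ∀ t x, Measurable (X t x))
    (hgauss : ∀ (n : ℕ) (c t : Fin n → ℝ) (x : Fin n → E),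
      ∃ v : ℝ≥0, P.map (fun ω ↦ ∑ i, c i * X (t i) (x i) ω) = gaussianReal 0 v)
    (hmean : ∀ t x, P[X t x] = 0)
    (hcov : ∀ t, 0 ≤ t → ∀ x y, ∫ ω, X t x ω * X t y ω ∂P = scaleCov k t (x - y))
    (hcont : ∀ᵐ ω ∂P, Continuous fun p : ℝ × E ↦ X p.1 p.2 ω)
    (hind : ∀ s t : ℝ, 0 ≤ s → s < t →
      Indep (⨆ x : E, MeasurableSpace.comap (fun ω ↦ X t x ω - X s x ω) inferInstance)
        (⨆ u ∈ Set.Icc (0 : ℝ) s, ⨆ x : E, MeasurableSpace.comap (X u x) inferInstance) P) :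
    IsStarScaleField P k X := by
  have hproc : IsGaussianProcess (fun p : ℝ × E ↦ X p.1 p.2) P :=
    isGaussianProcess_of_map_sum_eq_gaussianReal (fun p ↦ (hmeas p.1 p.2).aemeasurable)
      fun n c p ↦ ⟨0, hgauss n c (fun i ↦ (p i).1) fun i ↦ (p i).2⟩
  have hL2 (t : ℝ) (x : E) : MemLp (X t x) 2 P := (hproc.hasGaussianLaw_eval (t, x)).memLp_two
  refine ⟨hk0, hmeas, hproc, hmean, fun {s t} hs hst x y ↦ ?_, hcont⟩
  have hsame : cov[X s x, X s y; P] = scaleCov k s (x - y) := by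
    rw [covariance_eq_sub (hL2 s x) (hL2 s y), hmean, hmean, mul_zero, sub_zero]
    exact hcov s hs x y
  rcases hst.eq_or_lt with rfl | hst
  · exact hsame
  · rw [covariance_eq_of_indep_increments hL2 hs x y (hind s t hs hst), hsame]

variable {x y z : E} {r s t : ℝ}

lemma memLp_two (hX : IsStarScaleField P k X) (t : ℝ) (x : E) : MemLp (X t x) 2 P :=
  (hX.isGaussianProcess.hasGaussianLaw_eval (t, x)).memLp_two

lemma isProbabilityMeasure (hX : IsStarScaleField P k X) : IsProbabilityMeasure P :=
  hX.isGaussianProcess.isProbabilityMeasure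

lemma variance_eq (hX : IsStarScaleField P k X) (ht : 0 ≤ t) (x : E) : Var[X t x; P] = t := by
  rw [← covariance_self (hX.measurable t x).aemeasurable, hX.covariance_eq ht le_rfl, sub_self,
    scaleCov_zero hX.seed_zero ht]

lemma covariance_sub (hX : IsStarScaleField P k X) (hr : 0 ≤ r) (hrs : r ≤ s) (hrt : r ≤ t)
    (x y z : E) :
    cov[X r x, fun ω ↦ X t z ω - X s y ω; P] = scaleCov k r (x - z) - scaleCov k r (x - y) := by
  have := hX.isProbabilityMeasure
  rw [covariance_fun_sub_right (hX.memLp_two r x) (hX.memLp_two t z) (hX.memLp_two s y),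
    hX.covariance_eq hr hrt, hX.covariance_eq hr hrs]

lemma variance_sub (hX : IsStarScaleField P k X) (hs : 0 ≤ s) (hst : s ≤ t) (y z : E) :
    Var[fun ω ↦ X t z ω - X s y ω; P] =
      t - s + 2 * (scaleCov k s 0 - scaleCov k s (y - z)) := by
  have := hX.isProbabilityMeasure
  rw [variance_fun_sub (hX.memLp_two t z) (hX.memLp_two s y), covariance_comm,
    hX.covariance_eq hs hst, hX.variance_eq hs, hX.variance_eq (hs.trans hst),
    scaleCov_zero hX.seed_zero hs]
  ring

lemma abs_covariance_sub_le (hX : IsStarScaleField P k X) {Λ : ℝ≥0} (hk : LipschitzWith Λ k)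
    (hr : 0 ≤ r) (hrs : r ≤ s) (hrt : r ≤ t) (x y z : E) :
    |cov[X r x, fun ω ↦ X t z ω - X s y ω; P]| ≤ Λ * Real.exp r * ‖z - y‖ := by
  rw [hX.covariance_sub hr hrs hrt]
  simpa [norm_sub_rev y z] using abs_scaleCov_sub_le hk hr (x - z) (x - y)

lemma variance_sub_le (hX : IsStarScaleField P k X) {Λ : ℝ≥0} (hk : LipschitzWith Λ k)
    (hs : 0 ≤ s) (hst : s ≤ t) (y z : E) :
    Var[fun ω ↦ X t z ω - X s y ω; P] ≤ t - s + 2 * (Λ * Real.exp s * ‖z - y‖) := by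
  have h := le_of_abs_le (abs_scaleCov_sub_le hk hs 0 (y - z))
  rw [zero_sub, norm_neg, norm_sub_rev] at h
  rw [hX.variance_sub hs hst]
  gcongr

lemma lintegral_exp_add_sub_le (hX : IsStarScaleField P k X) (hr : 0 ≤ r) {l θ ρ : ℝ} (hl : 0 ≤ l)
    (hθ : 0 ≤ θ) (hcov : cov[X r x, fun ω ↦ X t z ω - X s y ω; P] ≤ ρ)
    (hvar : Var[fun ω ↦ X t z ω - X s y ω; P] ≤ ρ) :
    ∫⁻ ω, ENNReal.ofReal (Real.exp (l * X r x ω - l ^ 2 / 2 * r + θ * (X t z ω - X s y ω))) ∂P ≤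
      ENNReal.ofReal (Real.exp (l * (θ * ρ) + θ ^ 2 * ρ / 2)) := by
  have := hX.isProbabilityMeasure
  set D : Ω → ℝ := fun ω ↦ X t z ω - X s y ω
  have hD : MemLp D 2 P := (hX.memLp_two t z).sub (hX.memLp_two s y)
  let Y (ω : Ω) : ℝ := l * X r x ω + θ * D ω
  have hY : HasGaussianLaw Y P := by
    have h := (isGaussianProcess_linearCombination hX.isGaussianProcess fun _ : Unit ↦
      .single (r, x) l + (.single (t, z) θ - .single (s, y) θ)).hasGaussianLaw_eval ()
    convert! h using 2
    simp [Y, D]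
    ring
  have hmean : P[Y] = 0 := by
    have hint (t : ℝ) (x : E) : Integrable (X t x) P := (hX.memLp_two t x).integrable one_le_two
    have hmeanD : P[D] = 0 := by
      simp [D, integral_sub (hint t z) (hint s y), hX.integral_eq_zero]
    simp only [Y]
    rw [integral_add ((hint r x).const_mul l) ((hD.integrable one_le_two).const_mul θ),
      integral_const_mul, integral_const_mul, hX.integral_eq_zero, hmeanD]
    simp
  have hvarY : Var[Y; P] ≤ l ^ 2 * r + 2 * (l * (θ * ρ)) + θ ^ 2 * ρ := by
    rw [variance_fun_add ((hX.memLp_two r x).const_mul l) (hD.const_mul θ), variance_const_mul,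
      variance_const_mul, hX.variance_eq hr, covariance_const_mul_left, covariance_const_mul_right]
    gcongr
  calc ∫⁻ ω, ENNReal.ofReal (Real.exp (l * X r x ω - l ^ 2 / 2 * r + θ * D ω)) ∂P
      = ENNReal.ofReal (Real.exp (-(l ^ 2 / 2 * r))) *
          ∫⁻ ω, ENNReal.ofReal (Real.exp (Y ω)) ∂P := by
        rw [← lintegral_const_mul' _ _ ENNReal.ofReal_ne_top]
        refine lintegral_congr fun ω ↦ ?_
        rw [← ENNReal.ofReal_mul (Real.exp_pos _).le, ← Real.exp_add]
        congr 2
        ring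
    _ = ENNReal.ofReal (Real.exp (-(l ^ 2 / 2 * r) + Var[Y; P] / 2)) := by
        rw [lintegral_ofReal_exp_of_hasGaussianLaw hY, hmean, zero_add,
          ← ENNReal.ofReal_mul (Real.exp_pos _).le, ← Real.exp_add]
    _ ≤ _ := ENNReal.ofReal_le_ofReal (Real.exp_le_exp.2 (by linarith))

lemma ae_zero_eq_zero (hX : IsStarScaleField P k X) (x : E) : ∀ᵐ ω ∂P, X 0 x ω = 0 := by
  have := hX.isProbabilityMeasure
  have h := (evariance_eq_zero_iff (hX.measurable 0 x).aemeasurable).1 (by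
    rw [← (hX.memLp_two 0 x).ofReal_variance_eq, hX.variance_eq le_rfl, ENNReal.ofReal_zero])
  simpa [hX.integral_eq_zero] using! h

/-- The increments of the field at the point `x` between consecutive integer times. -/
def unitIncrement (X : ℝ → E → Ω → ℝ) (x : E) (i : ℕ) (ω : Ω) : ℝ := X (i + 1) x ω - X i x ω

lemma ae_randomWalk_unitIncrement (hX : IsStarScaleField P k X) (x : E) :
    ∀ᵐ ω ∂P, ∀ n : ℕ, randomWalk (unitIncrement X x) n ω = X n x ω := by
  filter_upwards [hX.ae_zero_eq_zero x] with ω hω n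
  simpa [randomWalk, unitIncrement, hω, -Finset.sum_sub_distrib] using
    Finset.sum_range_sub (fun i : ℕ ↦ X i x ω) n

lemma isGaussianProcess_unitIncrement (hX : IsStarScaleField P k X) (x : E) :
    IsGaussianProcess (unitIncrement X x) P := by
  convert! isGaussianProcess_linearCombination hX.isGaussianProcess fun i : ℕ ↦
    .single ((i : ℝ) + 1, x) 1 - .single ((i : ℝ), x) 1 using 3 with i ω
  simp [unitIncrement]

lemma measurable_unitIncrement (hX : IsStarScaleField P k X) (x : E) (i : ℕ) :
    Measurable (unitIncrement X x i) :=
  (hX.measurable _ x).sub (hX.measurable _ x)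

lemma hasLaw_unitIncrement (hX : IsStarScaleField P k X) (x : E) (i : ℕ) :
    HasLaw (unitIncrement X x i) (gaussianReal 0 1) P := by
  refine ⟨(hX.measurable_unitIncrement x i).aemeasurable, ?_⟩
  have hint (t : ℝ) : Integrable (X t x) P :=
    have := hX.isProbabilityMeasure
    (hX.memLp_two t x).integrable one_le_two
  have hmean : P[unitIncrement X x i] = 0 := by
    simp [unitIncrement, integral_sub (hint (i + 1)) (hint i), hX.integral_eq_zero]
  have hvar : Var[unitIncrement X x i; P] = 1 := by
    simpa using! hX.variance_sub (Nat.cast_nonneg i) (by linarith : (i : ℝ) ≤ i + 1) x x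
  rw [((hX.isGaussianProcess_unitIncrement x).hasGaussianLaw_eval i).map_eq_gaussianReal, hmean,
    hvar, Real.toNNReal_one]

lemma covariance_unitIncrement_eq_zero (hX : IsStarScaleField P k X) (x : E) {i j : ℕ}
    (hij : i < j) : cov[unitIncrement X x i, unitIncrement X x j; P] = 0 := by
  have hle : (i : ℝ) + 1 ≤ j := by exact_mod_cast hij
  have := hX.isProbabilityMeasure
  have hzero {r : ℝ} (hr : 0 ≤ r) (hrj : r ≤ j) : cov[X r x, unitIncrement X x j; P] = 0 := by
    simpa using! hX.covariance_sub hr hrj (by linarith : r ≤ j + 1) x x x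
  have hj := ((hX.isGaussianProcess_unitIncrement x).hasGaussianLaw_eval j).memLp_two
  change cov[fun ω ↦ X (i + 1) x ω - X i x ω, unitIncrement X x j; P] = 0
  rw [covariance_fun_sub_left (hX.memLp_two _ x) (hX.memLp_two _ x) hj,
    hzero (by positivity) hle, hzero (by positivity) (by linarith), sub_zero]

lemma iIndepFun_unitIncrement (hX : IsStarScaleField P k X) (x : E) :
    iIndepFun (unitIncrement X x) P := by
  refine iIndepFun_iff_finset.2 fun s ↦
    ((hX.isGaussianProcess_unitIncrement x).hasGaussianLaw s).iIndepFun_of_covariance_eq_zero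
      fun i j hij ↦ ?_
  rcases (Subtype.coe_ne_coe.2 hij).lt_or_gt with hlt | hlt
  · exact hX.covariance_unitIncrement_eq_zero x hlt
  · rw [covariance_comm]
    exact hX.covariance_unitIncrement_eq_zero x hlt

lemma measure_ballot_le (hX : IsStarScaleField P k X) (x : E) {n : ℕ} {l H L : ℝ} (hn : 3 ≤ n)
    (hL : 3 ≤ L) (hnL : Real.log n ≤ L) (hl : 0 ≤ l) (hHL : H ≤ L) :
    P {ω | (∀ j : ℕ, j ≤ n → X j x ω ≤ l * j + L) ∧ l * n - H ≤ X n x ω} ≤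
      ENNReal.ofReal (Real.exp (l * H - l ^ 2 / 2 * n) * (1000 * L ^ 3 / √n ^ 3)) := by
  have := hX.isProbabilityMeasure
  refine le_trans (measure_mono_ae ?_) (measure_gaussianBallot_drift_le
    (hX.measurable_unitIncrement x) (hX.iIndepFun_unitIncrement x) (hX.hasLaw_unitIncrement x)
    hn hL hnL hl hHL)
  filter_upwards [hX.ae_randomWalk_unitIncrement x] with ω hω h
  exact ⟨fun j hj ↦ (hω j).trans_le (h.1 j hj), h.2.trans_eq (hω n).symm⟩

end IsStarScaleField

end Field

section Cell

variable {d : ℕ} {n : ℕ} {x : EuclideanSpace ℝ (Fin d)} {p q : Option (Fin d) → ℝ}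

/-- The point with coordinates `p ∈ [0, 1)^(1 + d)` in the space-time cell of duration `1` and side
length `e⁻ⁿ` with lower corner `(n, x)`. -/
def cellPoint (n : ℕ) (x : EuclideanSpace ℝ (Fin d)) (p : Option (Fin d) → ℝ) :
    ℝ × EuclideanSpace ℝ (Fin d) :=
  (n + p none, x + Real.exp (-n) • WithLp.toLp 2 fun i ↦ p (some i))

lemma cellPoint_zero (n : ℕ) (x : EuclideanSpace ℝ (Fin d)) : cellPoint n x 0 = ((n : ℝ), x) := by
  ext <;> simp [cellPoint]

lemma continuous_cellPoint (n : ℕ) (x : EuclideanSpace ℝ (Fin d)) :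
    Continuous (cellPoint n x) := by
  unfold cellPoint
  fun_prop

lemma norm_toLp_le {v : Fin d → ℝ} {δ : ℝ} (hv : ∀ i, |v i| ≤ δ) : ‖WithLp.toLp 2 v‖ ≤ d * δ := by
  rw [EuclideanSpace.norm_eq]
  calc √(∑ i, ‖v i‖ ^ 2) ≤ ∑ i, |v i| :=
        Real.sqrt_le_iff.2 ⟨by positivity, Finset.sum_sq_le_sq_sum_of_nonneg fun i _ ↦ abs_nonneg _⟩
    _ ≤ d * δ := by simpa using Finset.sum_le_sum fun i (_ : i ∈ Finset.univ) ↦ hv i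

lemma norm_cellPoint_snd_sub_le {δ : ℝ} (hpq : ∀ i, |p (some i) - q (some i)| ≤ δ) :
    ‖(cellPoint n x p).2 - (cellPoint n x q).2‖ ≤ Real.exp (-n) * (d * δ) := by
  simp only [cellPoint]
  rw [add_sub_add_left_eq_sub, ← smul_sub, norm_smul, Real.norm_of_nonneg (Real.exp_pos _).le,
    ← WithLp.toLp_sub]
  gcongr
  exact norm_toLp_le hpq

variable {Ω : Type*} [MeasurableSpace Ω] {P : Measure Ω} {k : EuclideanSpace ℝ (Fin d) → ℝ}
  {X : ℝ → EuclideanSpace ℝ (Fin d) → Ω → ℝ} {Λ : ℝ≥0}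

/-- The field `X` in the coordinates of `cellPoint`. -/
def cellField (X : ℝ → EuclideanSpace ℝ (Fin d) → Ω → ℝ) (n : ℕ) (x : EuclideanSpace ℝ (Fin d))
    (p : Option (Fin d) → ℝ) : Ω → ℝ :=
  X (cellPoint n x p).1 (cellPoint n x p).2

/-- The bound on the variance of an increment of the field within a cell, per unit of the cell
coordinates, when the seed covariance is `Λ`-Lipschitz. -/
def cellRoughness (d : ℕ) (Λ : ℝ≥0) : ℝ := 1 + 2 * (Λ * Real.exp 1 * d)

lemma cellRoughness_pos (d : ℕ) (Λ : ℝ≥0) : 0 < cellRoughness d Λ := by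
  unfold cellRoughness
  positivity

namespace IsStarScaleField

variable {δ : ℝ}

lemma covariance_cell_sub_le (hX : IsStarScaleField P k X) (hk : LipschitzWith Λ k)
    (hδ : 0 ≤ δ) (hp : 0 ≤ p none) (hq : 0 ≤ q none)
    (hpq : ∀ i, |p (some i) - q (some i)| ≤ δ) :
    cov[X n x, fun ω ↦ cellField X n x p ω - cellField X n x q ω; P] ≤
      cellRoughness d Λ * δ := by
  have hcov := le_of_abs_le (hX.abs_covariance_sub_le hk (Nat.cast_nonneg n)
    (le_add_of_nonneg_right hq) (le_add_of_nonneg_right hp) x (cellPoint n x q).2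
    (cellPoint n x p).2)
  calc _ ≤ Λ * Real.exp n * ‖(cellPoint n x p).2 - (cellPoint n x q).2‖ := hcov
    _ ≤ Λ * Real.exp n * (Real.exp (-n) * (d * δ)) := by
        gcongr
        exact norm_cellPoint_snd_sub_le hpq
    _ = Λ * d * δ := by rw [Real.exp_neg]; field_simp
    _ ≤ cellRoughness d Λ * δ := by
        gcongr
        have : (Λ : ℝ) * d ≤ Λ * d * Real.exp 1 :=
          le_mul_of_one_le_right (by positivity) (Real.one_le_exp zero_le_one)
        have : (0 : ℝ) ≤ Λ * d * Real.exp 1 := by positivity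
        unfold cellRoughness
        linarith

lemma variance_cell_sub_le (hX : IsStarScaleField P k X) (hk : LipschitzWith Λ k)
    (hq : 0 ≤ q none) (hq1 : q none ≤ 1) (hqp : q none ≤ p none) (hpq : ∀ i, |p i - q i| ≤ δ) :
    Var[fun ω ↦ cellField X n x p ω - cellField X n x q ω; P] ≤ cellRoughness d Λ * δ := by
  have hvar := hX.variance_sub_le hk (by positivity : 0 ≤ n + q none)
    (by linarith : n + q none ≤ n + p none) (cellPoint n x q).2 (cellPoint n x p).2
  calc _ ≤ (n + p none) - (n + q none) +
        2 * (Λ * Real.exp (n + q none) * ‖(cellPoint n x p).2 - (cellPoint n x q).2‖) := hvar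
    _ ≤ δ + 2 * (Λ * Real.exp (n + 1) * (Real.exp (-n) * (d * δ))) := by
        gcongr
        · linarith [le_of_abs_le (hpq none)]
        · exact norm_cellPoint_snd_sub_le fun i ↦ hpq (some i)
    _ = cellRoughness d Λ * δ := by
        rw [cellRoughness, Real.exp_add, Real.exp_neg]
        field_simp

lemma pow_half_le_mul_chainingWeight (m : ℕ) : (1 / 2 : ℝ) ^ (m + 1) ≤ 2 * chainingWeight m := by
  calc (1 / 2 : ℝ) ^ (m + 1) = 1 / 2 * (1 / 2) ^ m := pow_succ' _ _
    _ ≤ 1 / 2 * (3 / 4) ^ m := by gcongr ?_ * ?_ ^ m; norm_num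
    _ = 2 * chainingWeight m := by rw [chainingWeight]; ring

lemma pow_half_le_mul_chainingWeight_sq (m : ℕ) :
    (1 / 2 : ℝ) ^ (m + 1) ≤ 8 * chainingWeight m ^ 2 := by
  calc (1 / 2 : ℝ) ^ (m + 1) = 1 / 2 * (1 / 2) ^ m := pow_succ' _ _
    _ ≤ 1 / 2 * ((3 / 4) ^ 2) ^ m := by gcongr ?_ * ?_ ^ m; norm_num
    _ = 8 * chainingWeight m ^ 2 := by rw [chainingWeight, pow_right_comm]; ring

variable {l κ : ℝ}

lemma lintegral_exp_cell_edge_le (hX : IsStarScaleField P k X) (hk : LipschitzWith Λ k)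
    (hl : 0 ≤ l) (hκ : 0 ≤ κ) (m : ℕ) {g : Option (Fin d) → ℕ} (hg : ∀ i, g i < 2 ^ (m + 1)) :
    ∫⁻ ω, ENNReal.ofReal (Real.exp (l * X n x ω - l ^ 2 / 2 * n +
        (κ * cellField X n x (dyadicPoint (m + 1) g) ω -
          κ * cellField X n x (dyadicPoint m fun i ↦ g i / 2) ω) / chainingWeight m)) ∂P ≤
      ENNReal.ofReal (Real.exp (cellRoughness d Λ * (2 * l * κ + 4 * κ ^ 2))) := by
  set p := dyadicPoint (m + 1) g
  set q := dyadicPoint m fun i ↦ g i / 2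
  set w := chainingWeight m
  set R := cellRoughness d Λ
  have hw : 0 < w := chainingWeight_pos m
  have hR : 0 < R := cellRoughness_pos d Λ
  have hq : 0 ≤ q none := div_nonneg (Nat.cast_nonneg _) (by positivity)
  have hq1 : q none ≤ 1 := by
    refine div_le_one_of_le₀ ?_ (by positivity)
    exact_mod_cast Nat.div_le_of_le_mul (by simpa [pow_succ'] using (hg none).le)
  have hqp (i : Option (Fin d)) : q i ≤ p i := dyadicPoint_half_le m g i
  have hpq (i : Option (Fin d)) : |p i - q i| ≤ (1 / 2) ^ (m + 1) := by
    rw [abs_of_nonneg (sub_nonneg.2 (hqp i))]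
    exact dyadicPoint_sub_half_le m g i
  have hexp := hX.lintegral_exp_add_sub_le (x := x) (Nat.cast_nonneg n) hl
    (by positivity : 0 ≤ κ / w) (hX.covariance_cell_sub_le (x := x) hk (by positivity)
      (hq.trans (hqp none)) hq fun i ↦ hpq (some i))
    (hX.variance_cell_sub_le (x := x) hk hq hq1 (hqp none) hpq)
  calc _ = ∫⁻ ω, ENNReal.ofReal (Real.exp (l * X n x ω - l ^ 2 / 2 * n +
        κ / w * (cellField X n x p ω - cellField X n x q ω))) ∂P := by
        refine lintegral_congr fun ω ↦ ?_
        congr 3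
        ring
    _ ≤ _ := hexp
    _ ≤ ENNReal.ofReal (Real.exp (l * (κ / w * (R * (2 * w))) +
          (κ / w) ^ 2 * (R * (8 * w ^ 2)) / 2)) := by
        gcongr
        · exact pow_half_le_mul_chainingWeight m
        · exact pow_half_le_mul_chainingWeight_sq m
    _ = _ := by
        congr 2
        field_simp
        ring

/-- The constant of the cell estimate `IsStarScaleField.measure_cell_le`. -/
def cellConstant (d : ℕ) (Λ : ℝ≥0) (l κ : ℝ) : ℝ :=
  chainingConstant (Option (Fin d)) * Real.exp (cellRoughness d Λ * (2 * l * κ + 4 * κ ^ 2))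

lemma cellConstant_pos (d : ℕ) (Λ : ℝ≥0) (l κ : ℝ) : 0 < cellConstant d Λ l κ :=
  mul_pos (chainingConstant_pos _) (Real.exp_pos _)

lemma measure_cell_le (hX : IsStarScaleField P k X) (hk : LipschitzWith Λ k) (n : ℕ)
    (x : EuclideanSpace ℝ (Fin d)) (hl : 0 ≤ l) (hκ : 0 ≤ κ) (u : ℝ) :
    P {ω | ∃ p : Option (Fin d) → ℝ, (∀ i, p i ∈ Set.Ico 0 1) ∧
        u ≤ l * X n x ω - l ^ 2 / 2 * n + κ * (cellField X n x p ω - X n x ω)} ≤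
      ENNReal.ofReal (cellConstant d Λ l κ * Real.exp (-u)) := by
  have hcont : ∀ᵐ ω ∂P, Continuous fun p ↦ κ * cellField X n x p ω := by
    filter_upwards [hX.ae_continuous] with ω hω
    exact (hω.comp (continuous_cellPoint n x)).const_mul κ
  have hbase : ∫⁻ ω, ENNReal.ofReal (Real.exp (l * X n x ω - l ^ 2 / 2 * n)) ∂P ≤
      ENNReal.ofReal (Real.exp (cellRoughness d Λ * (2 * l * κ + 4 * κ ^ 2))) := by
    have hzero (m : ℕ) : dyadicPoint m (fun _ : Option (Fin d) ↦ 0) = 0 := by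
      ext
      simp [dyadicPoint]
    simpa [hzero, Pi.zero_def] using
      hX.lintegral_exp_cell_edge_le (x := x) (n := n) hk hl hκ 0 (g := fun _ ↦ 0) (by simp)
  have hcell := measure_exists_le_add_sub_le
    (((hX.measurable n x).const_mul l).sub_const (l ^ 2 / 2 * n))
    (fun p ↦ (hX.measurable _ _).const_mul κ) hcont hbase
    (fun m g hg ↦ hX.lintegral_exp_cell_edge_le hk hl hκ m hg) u
  refine (measure_mono ?_).trans (hcell.trans_eq ?_)
  · rintro ω ⟨p, hp, hu⟩
    refine ⟨p, hp, hu.trans_eq ?_⟩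
    simp [cellField, cellPoint_zero, mul_sub]
  · rw [← ENNReal.ofReal_mul (mul_nonneg (chainingConstant_pos _).le (Real.exp_pos _).le),
      cellConstant]
    congr 1
    ring

lemma measure_cell_ge_le (hX : IsStarScaleField P k X) (hk : LipschitzWith Λ k) (n : ℕ)
    (x : EuclideanSpace ℝ (Fin d)) (hl : 0 ≤ l) (h : ℝ) :
    P {ω | ∃ p : Option (Fin d) → ℝ, (∀ i, p i ∈ Set.Ico 0 1) ∧
        l * n + h ≤ cellField X n x p ω} ≤
      ENNReal.ofReal (cellConstant d Λ l l * Real.exp (-(l ^ 2 / 2 * n + l * h))) := by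
  refine (measure_mono ?_).trans (hX.measure_cell_le hk n x hl hl _)
  rintro ω ⟨p, hp, hge⟩
  exact ⟨p, hp, by nlinarith [mul_le_mul_of_nonneg_left hge hl]⟩

lemma measure_cell_ge_add_le (hX : IsStarScaleField P k X) (hk : LipschitzWith Λ k) (n : ℕ)
    (x : EuclideanSpace ℝ (Fin d)) (hl : 0 ≤ l) (hlκ : l ≤ κ) (H b : ℝ) :
    P {ω | ∃ p : Option (Fin d) → ℝ, (∀ i, p i ∈ Set.Ico 0 1) ∧
        l * n - H ≤ cellField X n x p ω ∧ b ≤ cellField X n x p ω - X n x ω} ≤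
      ENNReal.ofReal (cellConstant d Λ l κ *
        Real.exp (-(l ^ 2 / 2 * n - l * H + (κ - l) * b))) := by
  refine (measure_mono ?_).trans (hX.measure_cell_le hk n x hl (hl.trans hlκ) _)
  rintro ω ⟨p, hp, hge, hb⟩
  exact ⟨p, hp, by nlinarith [mul_le_mul_of_nonneg_left hge hl,
    mul_le_mul_of_nonneg_left hb (sub_nonneg.2 hlκ)]⟩

end IsStarScaleField

/-- The indices of the points of the grid of mesh `e⁻ⁿ` whose cells cover the ball of radius `r`. -/
def gridIndices (d : ℕ) (r : ℝ) (n : ℕ) : Finset (Fin d → ℤ) :=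
  Fintype.piFinset fun _ ↦ Finset.Icc (-⌈r * Real.exp n⌉) ⌈r * Real.exp n⌉

/-- The point with index `z` of the grid of mesh `e⁻ⁿ`. -/
def gridPoint (n : ℕ) (z : Fin d → ℤ) : EuclideanSpace ℝ (Fin d) :=
  Real.exp (-n) • WithLp.toLp 2 fun i ↦ (z i : ℝ)

section Grid

variable {r : ℝ}

lemma card_gridIndices_le (hr : 0 ≤ r) (n : ℕ) :
    ((gridIndices d r n).card : ℝ) ≤ (2 * r + 3) ^ d * Real.exp (d * n) := by
  have hceil : 0 ≤ ⌈r * Real.exp n⌉ := Int.ceil_nonneg (by positivity)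
  have hside : ((Finset.Icc (-⌈r * Real.exp n⌉) ⌈r * Real.exp n⌉).card : ℝ) ≤
      (2 * r + 3) * Real.exp n := by
    have hcard : ((Finset.Icc (-⌈r * Real.exp n⌉) ⌈r * Real.exp n⌉).card : ℤ) =
        2 * ⌈r * Real.exp n⌉ + 1 := by
      rw [Int.card_Icc]
      omega
    calc ((Finset.Icc (-⌈r * Real.exp n⌉) ⌈r * Real.exp n⌉).card : ℝ)
        = 2 * ⌈r * Real.exp n⌉ + 1 := by exact_mod_cast hcard
      _ ≤ (2 * r + 3) * Real.exp n := by
          linarith [Int.ceil_lt_add_one (r * Real.exp n),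
            Real.one_le_exp (Nat.cast_nonneg (α := ℝ) n)]
  calc ((gridIndices d r n).card : ℝ) ≤ ((2 * r + 3) * Real.exp n) ^ d := by
        simpa [gridIndices, Fintype.card_piFinset] using
          pow_le_pow_left₀ (Nat.cast_nonneg _) hside d
    _ = (2 * r + 3) ^ d * Real.exp (d * n) := by rw [mul_pow, Real.exp_nat_mul]

lemma norm_gridPoint_le {z : Fin d → ℤ} (hz : z ∈ gridIndices d r n) :
    ‖gridPoint n z‖ ≤ d * (r + 1) := by
  have hcoord (i : Fin d) : |(z i : ℝ)| ≤ r * Real.exp n + 1 := by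
    have hzi := Finset.mem_Icc.1 (Fintype.mem_piFinset.1 hz i)
    calc |(z i : ℝ)| ≤ ⌈r * Real.exp n⌉ := by exact_mod_cast abs_le.2 hzi
      _ ≤ r * Real.exp n + 1 := (Int.ceil_lt_add_one _).le
  rw [gridPoint, norm_smul, Real.norm_of_nonneg (Real.exp_pos _).le]
  calc Real.exp (-n) * ‖WithLp.toLp 2 fun i ↦ (z i : ℝ)‖
      ≤ Real.exp (-n) * (d * (r * Real.exp n + 1)) := by
        gcongr
        exact norm_toLp_le hcoord
    _ = d * (r + Real.exp (-n)) := by rw [Real.exp_neg]; field_simp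
    _ ≤ d * (r + 1) := by gcongr; simp

lemma exists_cellPoint_gridPoint_eq {t : ℝ} (ht : t ∈ Set.Ico (n : ℝ) (n + 1)) (hx : ‖x‖ ≤ r) :
    ∃ z ∈ gridIndices d r n, ∃ p : Option (Fin d) → ℝ,
      (∀ i, p i ∈ Set.Ico 0 1) ∧ cellPoint n (gridPoint n z) p = (t, x) := by
  refine ⟨fun i ↦ ⌊x i * Real.exp n⌋, Fintype.mem_piFinset.2 fun i ↦ ?_,
    fun i ↦ i.elim (t - n) fun i ↦ Int.fract (x i * Real.exp n), ?_, ?_⟩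
  · have hxi : |x i * Real.exp n| ≤ r * Real.exp n := by
      rw [abs_mul, abs_of_pos (Real.exp_pos _)]
      gcongr
      exact (PiLp.norm_apply_le x i).trans hx
    have hceil := (abs_le.1 (hxi.trans (Int.le_ceil _)))
    exact Finset.mem_Icc.2 ⟨Int.le_floor.2 (by exact_mod_cast hceil.1),
      Int.cast_le.1 ((Int.floor_le _).trans hceil.2)⟩
  · rintro (_ | i)
    · exact ⟨by simpa using ht.1, by simpa [sub_lt_iff_lt_add'] using ht.2⟩
    · exact ⟨Int.fract_nonneg _, Int.fract_lt_one _⟩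
  · ext i
    · simp [cellPoint]
    · simp only [cellPoint, gridPoint, PiLp.add_apply, PiLp.smul_apply, smul_eq_mul, Option.elim]
      rw [← mul_add, Int.floor_add_fract, Real.exp_neg]
      field_simp

lemma measure_exists_gridIndices_le (hr : 0 ≤ r) {s : (Fin d → ℤ) → Set Ω} {b : ℝ} (hb : 0 ≤ b)
    (hs : ∀ z, P (s z) ≤ ENNReal.ofReal b) :
    P {ω | ∃ z ∈ gridIndices d r n, ω ∈ s z} ≤
      ENNReal.ofReal ((2 * r + 3) ^ d * Real.exp (d * n) * b) := by
  have hunion : {ω | ∃ z ∈ gridIndices d r n, ω ∈ s z} = ⋃ z ∈ gridIndices d r n, s z := by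
    ext
    simp
  calc P {ω | ∃ z ∈ gridIndices d r n, ω ∈ s z}
      ≤ ∑ z ∈ gridIndices d r n, P (s z) := hunion ▸ measure_biUnion_finset_le _ _
    _ ≤ (gridIndices d r n).card • ENNReal.ofReal b := Finset.sum_le_card_nsmul _ _ _ fun z _ ↦ hs z
    _ = ENNReal.ofReal ((gridIndices d r n).card * b) := by
        rw [nsmul_eq_mul, ENNReal.ofReal_mul (Nat.cast_nonneg _), ENNReal.ofReal_natCast]
    _ ≤ _ := by
        gcongr
        exact card_gridIndices_le hr n

end Grid

lemma one_le_log_add_three (n : ℕ) : 1 ≤ Real.log (n + 3) := by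
  rw [Real.le_log_iff_exp_le (by positivity)]
  linarith [Real.exp_one_lt_d9, Nat.cast_nonneg (α := ℝ) n]

lemma summable_exp_neg_mul_log_add_three {s : ℝ} (hs : 1 < s) :
    Summable fun n : ℕ ↦ Real.exp (-(s * Real.log (n + 3))) := by
  refine ((Real.summable_one_div_nat_add_rpow 3 s).2 hs).congr fun n ↦ ?_
  have hn : (0 : ℝ) < n + 3 := by positivity
  rw [abs_of_pos hn, one_div, Real.exp_neg, mul_comm, Real.rpow_def_of_pos hn]

lemma log_add_three_pow_three_div_le {δ : ℝ} (hδ : 0 < δ) {n : ℕ} (hn : 1 ≤ n) :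
    Real.log (n + 3) ^ 3 / √n ^ 3 ≤
      48 / δ ^ 3 * Real.exp ((δ - 3 / 2) * Real.log (n + 3)) := by
  set ℓ := Real.log (n + 3)
  have hℓ : 0 ≤ ℓ := zero_le_one.trans (one_le_log_add_three n)
  have hpow : ℓ ^ 3 ≤ 6 / δ ^ 3 * Real.exp (δ * ℓ) := by
    have h := Real.pow_div_factorial_le_exp (δ * ℓ) (by positivity) 3
    rw [div_le_iff₀ (by positivity), mul_pow] at h
    rw [div_mul_eq_mul_div, le_div_iff₀ (by positivity)]
    norm_num [Nat.factorial] at h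
    linarith
  have hsqrt : Real.exp (1 / 2 * ℓ) ≤ 2 * √n := by
    have hn1 : (1 : ℝ) ≤ n := by exact_mod_cast hn
    calc Real.exp (1 / 2 * ℓ) = √(n + 3) := by
          rw [Real.sqrt_eq_rpow, Real.rpow_def_of_pos (by positivity), mul_comm]
      _ ≤ √(2 ^ 2 * n) := Real.sqrt_le_sqrt (by linarith)
      _ = 2 * √n := by rw [Real.sqrt_mul (by norm_num), Real.sqrt_sq (by norm_num)]
  calc ℓ ^ 3 / √n ^ 3 ≤ 6 / δ ^ 3 * Real.exp (δ * ℓ) / (Real.exp (1 / 2 * ℓ) / 2) ^ 3 := by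
        gcongr
        linarith
    _ = 48 / δ ^ 3 * Real.exp ((δ - 3 / 2) * ℓ) := by
        rw [div_pow, ← Real.exp_nat_mul, show (δ - 3 / 2) * ℓ = δ * ℓ - (3 : ℕ) * (1 / 2 * ℓ) by
          push_cast; ring, Real.exp_sub]
        ring

lemma ae_eventually_notMem_of_eventually_le {s : ℕ → Set Ω} {f : ℕ → ℝ} (hf : Summable f)
    (h : ∀ᶠ n in atTop, P (s n) ≤ ENNReal.ofReal (f n)) : ∀ᵐ ω ∂P, ∀ᶠ n in atTop, ω ∉ s n := by
  obtain ⟨N, hN⟩ := eventually_atTop.1 h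
  have hsum : ∑' n, P (s (n + N)) ≠ ∞ :=
    ne_top_of_le_ne_top ((summable_nat_add_iff N).2 hf).tsum_ofReal_ne_top
      (ENNReal.tsum_le_tsum fun n ↦ hN _ (Nat.le_add_left N n))
  filter_upwards [ae_eventually_notMem hsum] with ω hω
  rwa [← map_add_atTop_eq_nat N, eventually_map]

namespace IsStarScaleField

variable {r l a : ℝ}

lemma ae_forall_exists_le (hX : IsStarScaleField P k X) :
    ∀ᵐ ω ∂P, ∀ T r : ℝ, ∃ c, ∀ t ∈ Set.Icc 0 T, ∀ x, ‖x‖ ≤ r → X t x ω ≤ c := by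
  filter_upwards [hX.ae_continuous] with ω hω T r
  obtain ⟨c, hc⟩ := ((isCompact_Icc (a := 0) (b := T)).prod
    (isCompact_closedBall (0 : EuclideanSpace ℝ (Fin d)) r)).bddAbove_image hω.continuousOn
  exact ⟨c, fun t ht x hx ↦ hc ⟨(t, x), ⟨ht, mem_closedBall_zero_iff.2 hx⟩, rfl⟩⟩

lemma measure_exists_ge_le (hX : IsStarScaleField P k X) (hk : LipschitzWith Λ k) (hr : 0 ≤ r)
    (hl : 0 ≤ l) (n : ℕ) (h : ℝ) :
    P {ω | ∃ t ∈ Set.Ico (n : ℝ) (n + 1), ∃ x, ‖x‖ ≤ r ∧ l * n + h ≤ X t x ω} ≤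
      ENNReal.ofReal ((2 * r + 3) ^ d * Real.exp (d * n) *
        (cellConstant d Λ l l * Real.exp (-(l ^ 2 / 2 * n + l * h)))) := by
  refine (measure_mono ?_).trans (measure_exists_gridIndices_le hr
    (mul_nonneg (cellConstant_pos ..).le (Real.exp_pos _).le)
    fun z ↦ hX.measure_cell_ge_le hk n (gridPoint n z) hl h)
  rintro ω ⟨t, ht, x, hx, hge⟩
  obtain ⟨z, hz, p, hp, hcell⟩ := exists_cellPoint_gridPoint_eq ht hx
  exact ⟨z, hz, p, hp, by rwa [cellField, hcell]⟩

lemma ae_exists_forall_le_add_log (hX : IsStarScaleField P k X) (hk : LipschitzWith Λ k)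
    (hr : 0 ≤ r) (hl : 0 < l) (hld : l ^ 2 / 2 = d) :
    ∀ᵐ ω ∂P, ∃ c : ℕ, ∀ n : ℕ, ∀ x, ‖x‖ ≤ r →
      X n x ω ≤ l * n + 2 / l * Real.log (n + 3) + c := by
  have hsum := (summable_exp_neg_mul_log_add_three one_lt_two).mul_left
    ((2 * r + 3) ^ d * cellConstant d Λ l l)
  have hprob (n : ℕ) : P {ω | ∃ t ∈ Set.Ico (n : ℝ) (n + 1), ∃ x, ‖x‖ ≤ r ∧
      l * n + 2 / l * Real.log (n + 3) ≤ X t x ω} ≤ ENNReal.ofReal ((2 * r + 3) ^ d *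
        cellConstant d Λ l l * Real.exp (-(2 * Real.log (n + 3)))) := by
    refine (hX.measure_exists_ge_le hk hr hl.le n _).trans_eq ?_
    rw [hld, neg_add, Real.exp_add, Real.exp_neg (d * n), ← mul_assoc l, mul_div_cancel₀ _ hl.ne']
    field_simp
  filter_upwards [ae_eventually_notMem_of_eventually_le hsum (.of_forall hprob),
    hX.ae_forall_exists_le] with ω hω hbdd
  obtain ⟨N, hN⟩ := eventually_atTop.1 hω
  obtain ⟨b, hb⟩ := hbdd N r
  refine ⟨⌈b⌉₊, fun n x hx ↦ ?_⟩
  have hlog : 0 ≤ 2 / l * Real.log (n + 3) :=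
    mul_nonneg (by positivity) (zero_le_one.trans (one_le_log_add_three n))
  rcases le_total N n with hNn | hnN
  · have hlt : X n x ω < l * n + 2 / l * Real.log (n + 3) :=
      not_le.1 fun hge ↦ hN n hNn ⟨n, by simp, x, hx, hge⟩
    exact hlt.le.trans (le_add_of_nonneg_right (Nat.cast_nonneg _))
  · have hle := (hb n ⟨by positivity, by exact_mod_cast hnN⟩ x hx).trans (Nat.le_ceil b)
    have : 0 ≤ l * n := by positivity
    linarith

lemma measure_ballot_cell_le (hX : IsStarScaleField P k X) (hk : LipschitzWith Λ k)
    (x : EuclideanSpace ℝ (Fin d)) {n : ℕ} {κ L h b : ℝ} (hn : 3 ≤ n) (hL : 3 ≤ L)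
    (hnL : Real.log n ≤ L) (hl : 0 ≤ l) (hlκ : l ≤ κ) (hbL : h + b ≤ L) :
    P {ω | (∀ j : ℕ, j ≤ n → X j x ω ≤ l * j + L) ∧ ∃ p : Option (Fin d) → ℝ,
        (∀ i, p i ∈ Set.Ico 0 1) ∧ l * n - h ≤ cellField X n x p ω} ≤
      ENNReal.ofReal (Real.exp (l * (h + b) - l ^ 2 / 2 * n) * (1000 * L ^ 3 / √n ^ 3) +
        cellConstant d Λ l κ * Real.exp (-(l ^ 2 / 2 * n - l * h + (κ - l) * b))) := by
  have hconst := cellConstant_pos d Λ l κ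
  rw [ENNReal.ofReal_add (by positivity) (by positivity)]
  refine (measure_mono ?_).trans <| (measure_union_le _ _).trans <| add_le_add
    (hX.measure_ballot_le x hn hL hnL hl hbL) (hX.measure_cell_ge_add_le hk n x hl hlκ h b)
  rintro ω ⟨hballot, p, hp, hge⟩
  rcases le_total b (cellField X n x p ω - X n x ω) with hb | hb
  · exact Or.inr ⟨p, hp, hge, hb⟩
  · exact Or.inl ⟨hballot, by linarith⟩

/-- The constant of the estimate `IsStarScaleField.measure_ballot_cell_log_le`. -/
def ballotCellConstant (d : ℕ) (Λ : ℝ≥0) (l δ A : ℝ) : ℝ :=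
  48000 * A ^ 3 / δ ^ 3 + cellConstant d Λ l (l + 2 * l / δ)

lemma measure_ballot_cell_log_le (hX : IsStarScaleField P k X) (hk : LipschitzWith Λ k)
    (x : EuclideanSpace ℝ (Fin d)) {n : ℕ} {δ A : ℝ} (hn : 3 ≤ n) (hl : 0 < l) (hδ : 0 < δ)
    (ha : a + 4 * δ = 1 / 2) (hA : 3 ≤ A) (hlA : 1 / l ≤ A) :
    P {ω | (∀ j : ℕ, j ≤ n → X j x ω ≤ l * j + A * Real.log (n + 3)) ∧
        ∃ p : Option (Fin d) → ℝ, (∀ i, p i ∈ Set.Ico 0 1) ∧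
          l * n - a / l * Real.log (n + 3) ≤ cellField X n x p ω} ≤
      ENNReal.ofReal (Real.exp (-(l ^ 2 / 2 * n)) * (ballotCellConstant d Λ l δ A *
        Real.exp (-((1 + 2 * δ) * Real.log (n + 3))))) := by
  set ℓ := Real.log (n + 3)
  have hℓ : 1 ≤ ℓ := one_le_log_add_three n
  have hlog : Real.log n ≤ ℓ := Real.log_le_log (by positivity) (by linarith)
  have hHL : a / l * ℓ + δ / l * ℓ ≤ A * ℓ := by
    rw [← add_mul, ← add_div]
    gcongr
    exact le_trans (by gcongr; linarith) hlA
  refine (hX.measure_ballot_cell_le hk x hn (by nlinarith) (by nlinarith) hl.le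
    (le_add_of_nonneg_right (by positivity : 0 ≤ 2 * l / δ)) hHL).trans ?_
  rw [ballotCellConstant, add_mul, mul_add (Real.exp _)]
  refine ENNReal.ofReal_le_ofReal (add_le_add ?_ ?_)
  · calc Real.exp (l * (a / l * ℓ + δ / l * ℓ) - l ^ 2 / 2 * n) * (1000 * (A * ℓ) ^ 3 / √n ^ 3)
        = Real.exp (-(l ^ 2 / 2 * n)) * (1000 * A ^ 3 * Real.exp ((a + δ) * ℓ) *
            (ℓ ^ 3 / √n ^ 3)) := by
          rw [← add_mul, ← add_div, ← mul_assoc, mul_div_cancel₀ _ hl.ne', Real.exp_sub,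
            Real.exp_neg]
          ring
      _ ≤ Real.exp (-(l ^ 2 / 2 * n)) * (1000 * A ^ 3 * Real.exp ((a + δ) * ℓ) *
            (48 / δ ^ 3 * Real.exp ((δ - 3 / 2) * ℓ))) := by
          gcongr
          exact log_add_three_pow_three_div_le hδ (by omega)
      _ = Real.exp (-(l ^ 2 / 2 * n)) * (48000 * A ^ 3 / δ ^ 3 *
            Real.exp (-((1 + 2 * δ) * ℓ))) := by
          rw [show -((1 + 2 * δ) * ℓ) = (a + δ) * ℓ + (δ - 3 / 2) * ℓ by
            linear_combination (-ℓ) * ha, Real.exp_add]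
          ring
  · rw [mul_left_comm (Real.exp _), ← Real.exp_add]
    gcongr
    · exact (cellConstant_pos ..).le
    · have : (l + 2 * l / δ - l) * (δ / l * ℓ) = 2 * ℓ := by field_simp; ring
      have : l * (a / l * ℓ) = a * ℓ := by field_simp
      nlinarith

lemma ae_eventually_cell_lt_of_forall_le (hX : IsStarScaleField P k X) (hk : LipschitzWith Λ k)
    (hr : 0 ≤ r) (hl : 0 < l) (hld : l ^ 2 / 2 = d) (ha : a < 1 / 2) {A : ℝ}
    (hA : 3 ≤ A) (hlA : 1 / l ≤ A) :
    ∀ᵐ ω ∂P, ∀ᶠ n : ℕ in atTop, ∀ z ∈ gridIndices d r n,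
      (∀ j : ℕ, j ≤ n → X j (gridPoint n z) ω ≤ l * j + A * Real.log (n + 3)) →
      ∀ p : Option (Fin d) → ℝ, (∀ i, p i ∈ Set.Ico 0 1) →
        cellField X n (gridPoint n z) p ω < l * n - a / l * Real.log (n + 3) := by
  obtain ⟨δ, hδ, hδa⟩ : ∃ δ, 0 < δ ∧ a + 4 * δ = 1 / 2 := ⟨(1 / 2 - a) / 4, by linarith, by ring⟩
  have hconst : 0 ≤ ballotCellConstant d Λ l δ A := by
    have := cellConstant_pos d Λ l (l + 2 * l / δ)
    unfold ballotCellConstant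
    positivity
  have hsum := (summable_exp_neg_mul_log_add_three (by linarith : 1 < 1 + 2 * δ)).mul_left
    ((2 * r + 3) ^ d * ballotCellConstant d Λ l δ A)
  have hprob := (eventually_ge_atTop 3).mono fun n hn ↦
    (measure_exists_gridIndices_le (n := n) hr (by positivity) fun z ↦
      hX.measure_ballot_cell_log_le hk (gridPoint n z) hn hl hδ hδa hA hlA).trans_eq <|
    show _ = ENNReal.ofReal ((2 * r + 3) ^ d * ballotCellConstant d Λ l δ A *
        Real.exp (-((1 + 2 * δ) * Real.log (n + 3)))) by
      rw [hld, Real.exp_neg (d * n)]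
      field_simp
  filter_upwards [ae_eventually_notMem_of_eventually_le hsum hprob] with ω hω
  filter_upwards [hω] with n hn z hz hballot p hp
  exact not_le.1 fun hge ↦ hn ⟨z, hz, hballot, p, hp, hge⟩

lemma ae_eventually_lt_sub_log (hX : IsStarScaleField P k X) (hk : LipschitzWith Λ k)
    (hr : 0 ≤ r) (hl : 0 < l) (hld : l ^ 2 / 2 = d) (ha : a < 1 / 2) :
    ∀ᵐ ω ∂P, ∀ᶠ n : ℕ in atTop, ∀ t ∈ Set.Ico (n : ℝ) (n + 1), ∀ x, ‖x‖ ≤ r →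
      X t x ω < l * n - a / l * Real.log (n + 3) := by
  have hcell (c : ℕ) := hX.ae_eventually_cell_lt_of_forall_le hk hr hl hld ha
    (A := 3 + 2 / l + c) (by rw [add_assoc]; exact le_add_of_nonneg_right (by positivity)) (by
      have : 1 / l ≤ 2 / l := by gcongr; norm_num
      linarith [Nat.cast_nonneg (α := ℝ) c])
  filter_upwards [ae_all_iff.2 hcell, hX.ae_exists_forall_le_add_log (r := d * (r + 1)) hk
    (by positivity) hl hld] with ω hω ⟨c, hc⟩
  filter_upwards [hω c] with n hn t ht x hx
  obtain ⟨z, hz, p, hp, hpx⟩ := exists_cellPoint_gridPoint_eq ht hx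
  have hballot (j : ℕ) (hj : j ≤ n) :
      X j (gridPoint n z) ω ≤ l * j + (3 + 2 / l + c) * Real.log (n + 3) := by
    have hlog : Real.log (j + 3) ≤ Real.log (n + 3) := by gcongr
    have h1 := one_le_log_add_three n
    calc X j (gridPoint n z) ω ≤ l * j + 2 / l * Real.log (j + 3) + c :=
          hc j _ (norm_gridPoint_le hz)
      _ ≤ l * j + 2 / l * Real.log (n + 3) + c * Real.log (n + 3) := by
          gcongr
          exact le_mul_of_one_le_right (Nat.cast_nonneg c) h1
      _ ≤ l * j + (3 + 2 / l + c) * Real.log (n + 3) := by linarith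
  simpa [cellField, hpx] using hn z hz hballot p hp

end IsStarScaleField

theorem sup_field_linear_bound_general (hd : 1 ≤ d) (hk : LipschitzWith Λ k)
    (hX : IsStarScaleField P k X) {a : ℝ} (ha0 : 0 ≤ a) (ha : a < 1 / 2)
    {A : Set (EuclideanSpace ℝ (Fin d))} (hA : Bornology.IsBounded A) :
    ∀ᵐ ω ∂P, ∃ C : ℝ, ∀ t : ℝ, 0 ≤ t → ∀ x ∈ A,
      X t x ω - √(2 * d) * t + a / √(2 * d) * Real.log (t + 1) ≤ C := by
  obtain ⟨r, hr, hAr⟩ := hA.exists_pos_norm_le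
  set l := √(2 * d)
  have hl : 0 < l := by positivity
  have hld : l ^ 2 / 2 = d := by
    rw [Real.sq_sqrt (by positivity)]
    ring
  filter_upwards [hX.ae_eventually_lt_sub_log hk hr.le hl hld ha, hX.ae_forall_exists_le]
    with ω hlate hbdd
  obtain ⟨N, hN⟩ := eventually_atTop.1 hlate
  obtain ⟨b, hb⟩ := hbdd N r
  refine ⟨max 0 (b + a / l * Real.log (N + 1)), fun t ht x hx ↦ ?_⟩
  rcases le_total t N with htN | hNt
  · refine le_max_of_le_right ?_
    have hlog : a / l * Real.log (t + 1) ≤ a / l * Real.log (N + 1) := by gcongr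
    have := hb t ⟨ht, htN⟩ x (hAr x hx)
    have : 0 ≤ l * t := by positivity
    linarith
  · refine le_max_of_le_left ?_
    have hfloor := Nat.floor_le ht
    have hfloor' := Nat.lt_floor_add_one t
    have hlog : a / l * Real.log (t + 1) ≤ a / l * Real.log (⌊t⌋₊ + 3) := by
      gcongr a / l * ?_
      exact Real.log_le_log (by positivity) (by linarith)
    have := hN ⌊t⌋₊ (Nat.le_floor hNt) t ⟨hfloor, hfloor'⟩ x (hAr x hx)
    have : l * ⌊t⌋₊ ≤ l * t := by gcongr
    linarith

end Cell

theorem sup_field_linear_bound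
    {d : ℕ} (hd : 1 ≤ d)
    {Ω : Type*} [m0 : MeasurableSpace Ω] (P : Measure Ω) [IsProbabilityMeasure P]
    (k : EuclideanSpace ℝ (Fin d) → ℝ)
    (hk1 : ContDiff ℝ 1 k) (hk0 : k 0 = 1) (hkb : ∀ z, |k z| ≤ 1)
    (hksupp : HasCompactSupport k)
    (hkpd : ∀ (n : ℕ) (z : Fin n → EuclideanSpace ℝ (Fin d)) (c : Fin n → ℝ),
      0 ≤ ∑ i, ∑ j, c i * c j * k (z i - z j))
    (X : ℝ → EuclideanSpace ℝ (Fin d) → Ω → ℝ)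
    (hXmeas : ∀ t x, Measurable (X t x))
    (hXgauss : ∀ (n : ℕ) (c : Fin n → ℝ) (t : Fin n → ℝ)
        (x : Fin n → EuclideanSpace ℝ (Fin d)),
      ∃ v : NNReal,
        Measure.map (fun ω => ∑ i, c i * X (t i) (x i) ω) P = gaussianReal 0 v)
    (hXcent : ∀ t x, ∫ ω, X t x ω ∂P = 0)
    (hXcov : ∀ t, 0 ≤ t → ∀ x y : EuclideanSpace ℝ (Fin d),
      ∫ ω, X t x ω * X t y ω ∂P = ∫ u in Set.Icc (1:ℝ) (Real.exp t), k (u • (x - y)) / u)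
    (hXcont : ∀ᵐ ω ∂P, Continuous fun p : ℝ × EuclideanSpace ℝ (Fin d) => X p.1 p.2 ω)
    (hXindep : ∀ s t : ℝ, 0 ≤ s → s < t →
      Indep (⨆ x : EuclideanSpace ℝ (Fin d),
          MeasurableSpace.comap (fun ω => X t x ω - X s x ω) inferInstance)
        (⨆ u ∈ Set.Icc (0:ℝ) s, ⨆ x : EuclideanSpace ℝ (Fin d),
          MeasurableSpace.comap (X u x) inferInstance) P)
    :
    ∀ a : ℝ, 0 ≤ a → a < 1/2 →
    ∀ A : Set (EuclideanSpace ℝ (Fin d)), IsOpen A → Bornology.IsBounded A →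
    ∀ᵐ ω ∂P, ∃ C : ℝ, ∀ t : ℝ, 0 ≤ t → ∀ x ∈ A,
      X t x ω - Real.sqrt (2 * (d:ℝ)) * t
        + (a / Real.sqrt (2 * (d:ℝ))) * Real.log (t + 1) ≤ C := by
  obtain ⟨Λ, hk⟩ := hk1.lipschitzWith_of_hasCompactSupport hksupp one_ne_zero
  exact fun a ha0 ha A _ hA ↦ sup_field_linear_bound_general hd hk
    (.of_indep_increments hk0 hXmeas hXgauss hXcent hXcov hXcont hXindep) ha0 ha hA
end
end

section
/- Let (B_t)_{t≥0} be a standard real Brownian motion, let c > 0, β > 0, and τ = inf{u > 0 : B_u − c·u > β}. Let W¹, W², W³ be three independent standard real Brownian motions, and set R_s = |(β + W¹_s, W²_s, W³_s)| (the Euclidean norm in ℝ³), so that R is a 3-dimensional Bessel process started from β. Then for every t > 0, the law of the path (β + c·s − B_s)_{s∈[0,t]} under the probability measure with density (1/β)·(β + c·t − B_t)·1_{τ > t}·e^{c·B_t − c²t/2} with respect to P equals the law of the path (R_s)_{s∈[0,t]}. -/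
open MeasureTheory ProbabilityTheory Filter
open scoped NNReal

noncomputable section

open scoped ENNReal Topology

/-!
By Girsanov, under the density `exp (c B_t - c² t / 2)` the process `X_s = β + c s - B_s` is a
Brownian motion started from `β`. The remaining density `X_t / β` on `{τ > t}` is the Doob
`h`-transform of this Brownian motion killed below `0`, for the harmonic function `h x = x`.

For a Gaussian vector `z` in `ℝ³` and a Gaussian variable `y` centred at `‖v‖` with the variance of
the coordinates of `z`, polar coordinates give `‖v‖ E[f ‖v + z‖] ≤ E[y⁺ f y]`: a Bessel step is at
most an `h`-transformed Brownian step in which positivity is only required at the endpoint.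
Iterating along a finite set of times, refining it to a dense subset of `[0, t]` and using path
continuity, the finite-dimensional laws of `R` are dominated by those of the `h`-transform. The
`h`-transform has mass at most `1`, because `X` stopped on leaving `[0, ∞)` is nearly a nonnegative
supermartingale on a fine grid: the overshoots below `-ε` have total mean of the order of the mesh.
Hence the domination is an equality.
-/

lemma lintegral_gaussianReal (μ : ℝ) {h : ℝ≥0} (hh : h ≠ 0) {f : ℝ → ℝ≥0∞} (hf : Measurable f) :
    ∫⁻ z, f z ∂gaussianReal μ h = ∫⁻ z, ENNReal.ofReal (gaussianPDFReal μ h z) * f z := by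
  rw [gaussianReal_of_var_ne_zero _ hh,
    lintegral_withDensity_eq_lintegral_mul _ (measurable_gaussianPDF _ _) hf]
  rfl

lemma gaussianReal_withDensity_exp (c : ℝ) (h : ℝ≥0) :
    (gaussianReal 0 h).withDensity (fun z => ENNReal.ofReal (Real.exp (c * z - c ^ 2 * h / 2)))
      = gaussianReal (c * h) h := by
  by_cases hh : h = 0
  · rw [hh, gaussianReal_zero_var, withDensity_congr_ae (ae_eq_dirac _)]
    simp [gaussianReal_zero_var]
  have hpos : (h : ℝ) ≠ 0 := by exact_mod_cast hh
  rw [gaussianReal_of_var_ne_zero _ hh, gaussianReal_of_var_ne_zero _ hh,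
    ← withDensity_mul _ (measurable_gaussianPDF _ _) (by fun_prop)]
  congr with z
  simp only [Pi.mul_apply, gaussianPDF]
  rw [← ENNReal.ofReal_mul (gaussianPDFReal_nonneg _ _ _), gaussianPDFReal, gaussianPDFReal,
    mul_assoc, ← Real.exp_add]
  congr 3
  field_simp
  ring

lemma gaussianReal_zero_eq_map_sqrt_mul (h : ℝ≥0) :
    gaussianReal 0 h = (gaussianReal 0 1).map (√(h : ℝ) * ·) := by
  rw [gaussianReal_map_const_mul]
  congr 1
  · simp
  · ext
    simp

lemma integral_pow_four_gaussianReal (h : ℝ≥0) :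
    ∫ z, z ^ 4 ∂gaussianReal 0 h = (h : ℝ) ^ 2 * ∫ z, z ^ 4 ∂gaussianReal 0 1 := by
  rw [gaussianReal_zero_eq_map_sqrt_mul h, integral_map (by fun_prop) (by fun_prop),
    ← integral_const_mul]
  congr with z
  rw [mul_pow, show √(h : ℝ) ^ 4 = (√(h : ℝ) ^ 2) ^ 2 by ring, Real.sq_sqrt (NNReal.coe_nonneg h)]

lemma neg_le_add_pow_four_div {ε : ℝ} (hε : 0 < ε) (z : ℝ) : -z ≤ ε + z ^ 4 / ε ^ 3 := by
  have hε3 : 0 < ε ^ 3 := by positivity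
  have hz4 : 0 ≤ z ^ 4 / ε ^ 3 := by positivity
  rcases le_total (-z) ε with hz | hz
  · linarith
  · have hcube : ε ^ 3 ≤ (-z) ^ 3 := by gcongr
    have : -z ≤ z ^ 4 / ε ^ 3 := by
      rw [le_div_iff₀ hε3]
      nlinarith
    linarith

lemma lintegral_ofReal_overshoot_gaussianReal_le (h : ℝ≥0) {ε x : ℝ} (hε : 0 < ε) (hx : 0 ≤ x) :
    ∫⁻ z, (Set.Ici 0).indicator (fun y => ENNReal.ofReal (y + ε)) (x + z) ∂gaussianReal 0 h
      ≤ ENNReal.ofReal (x + ε)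
        + ENNReal.ofReal ((h : ℝ) ^ 2 * (∫ z, z ^ 4 ∂gaussianReal 0 1) / ε ^ 3) := by
  have integrable_id : Integrable (fun z : ℝ => z) (gaussianReal 0 h) :=
    (memLp_id_gaussianReal' 1 (by simp)).integrable le_rfl
  have integrable_pow_four : Integrable (fun z : ℝ => z ^ 4 / ε ^ 3) (gaussianReal 0 h) := by
    have h4 : Even 4 := by decide
    simpa [h4.pow_abs] using ((memLp_id_gaussianReal' (μ := 0) (v := h) 4
      (by simp)).integrable_norm_pow (by norm_num)).div_const (ε ^ 3)
  have integrable_affine : Integrable (fun z => x + ε + z) (gaussianReal 0 h) :=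
    (integrable_const _).add integrable_id
  have majorant_nonneg (z : ℝ) : 0 ≤ x + ε + z + z ^ 4 / ε ^ 3 := by
    linarith [neg_le_add_pow_four_div hε z]
  calc _ ≤ ∫⁻ z, ENNReal.ofReal (x + ε + z + z ^ 4 / ε ^ 3) ∂gaussianReal 0 h := by
        refine lintegral_mono fun z => Set.indicator_apply_le' (fun _ => ?_) (fun _ => zero_le)
        apply ENNReal.ofReal_le_ofReal
        linarith [show 0 ≤ z ^ 4 / ε ^ 3 by positivity]
    _ = ENNReal.ofReal (∫ z, (x + ε + z + z ^ 4 / ε ^ 3) ∂gaussianReal 0 h) :=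
        (ofReal_integral_eq_lintegral_ofReal (integrable_affine.add integrable_pow_four)
          (ae_of_all _ majorant_nonneg)).symm
    _ = ENNReal.ofReal (x + ε + (h : ℝ) ^ 2 * (∫ z, z ^ 4 ∂gaussianReal 0 1) / ε ^ 3) := by
        rw [integral_add integrable_affine integrable_pow_four,
          integral_add (integrable_const _) integrable_id, integral_div,
          integral_pow_four_gaussianReal]
        simp [integral_id_gaussianReal]
    _ ≤ _ := ENNReal.ofReal_add_le

lemma lintegral_gaussianReal_prod {h : ℝ≥0} (hh : h ≠ 0) {f : ℝ × ℝ → ℝ≥0∞} (hf : Measurable f) :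
    ∫⁻ p, f p ∂(gaussianReal 0 h).prod (gaussianReal 0 h)
      = ∫⁻ p : ℝ × ℝ, ENNReal.ofReal
          ((2 * Real.pi * h)⁻¹ * Real.exp (-(p.1 ^ 2 + p.2 ^ 2) / (2 * h))) * f p := by
  rw [gaussianReal_of_var_ne_zero _ hh,
    prod_withDensity (measurable_gaussianPDF _ _) (measurable_gaussianPDF _ _),
    ← Measure.volume_eq_prod, lintegral_withDensity_eq_lintegral_mul _ (by fun_prop) hf]
  refine lintegral_congr fun p => ?_
  simp only [Pi.mul_apply, gaussianPDF]
  rw [← ENNReal.ofReal_mul (gaussianPDFReal_nonneg _ _ _)]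
  congr 2
  have hsqrt : (2 * Real.pi * h)⁻¹ = (√(2 * Real.pi * h))⁻¹ * (√(2 * Real.pi * h))⁻¹ := by
    rw [← mul_inv, Real.mul_self_sqrt (by positivity)]
  rw [gaussianPDFReal, gaussianPDFReal, hsqrt, neg_add, add_div, Real.exp_add]
  simp only [sub_zero]
  ring

lemma lintegral_gaussianReal_prod_sqrt_sq_add_sq {h : ℝ≥0} (hh : h ≠ 0) {g : ℝ → ℝ≥0∞}
    (hg : Measurable g) :
    ∫⁻ p, g √(p.1 ^ 2 + p.2 ^ 2) ∂(gaussianReal 0 h).prod (gaussianReal 0 h)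
      = ∫⁻ r in Set.Ioi (0 : ℝ), ENNReal.ofReal (r / h * Real.exp (-r ^ 2 / (2 * h))) * g r := by
  rw [lintegral_gaussianReal_prod hh (by fun_prop), ← lintegral_comp_polarCoord_symm,
    polarCoord_target, Measure.volume_eq_prod, ← Measure.prod_restrict,
    lintegral_prod _ (by simp only [polarCoord_symm_apply, smul_eq_mul]; fun_prop)]
  refine setLIntegral_congr_fun measurableSet_Ioi fun r (hr : 0 < r) => ?_
  have sq_add_sq (θ : ℝ) : (r * Real.cos θ) ^ 2 + (r * Real.sin θ) ^ 2 = r ^ 2 := by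
    linear_combination r ^ 2 * Real.sin_sq_add_cos_sq θ
  simp only [polarCoord_symm_apply, sq_add_sq, Real.sqrt_sq hr.le, smul_eq_mul, lintegral_const,
    Measure.restrict_apply, MeasurableSet.univ, Set.univ_inter, Real.volume_Ioo]
  rw [← mul_assoc, ← ENNReal.ofReal_mul hr.le, mul_right_comm, ← ENNReal.ofReal_mul (by positivity)]
  congr 2
  have hpos : (h : ℝ) ≠ 0 := by exact_mod_cast hh
  have := Real.pi_pos
  field_simp
  ring

lemma image_sqrt_sq_add_sq_Ioi (y : ℝ) :
    (fun r : ℝ => √(y ^ 2 + r ^ 2)) '' Set.Ioi 0 = Set.Ioi |y| := by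
  ext R
  constructor
  · rintro ⟨r, hr : 0 < r, rfl⟩
    exact Real.lt_sqrt_of_sq_lt (by rw [sq_abs]; nlinarith)
  · intro (hR : |y| < R)
    have hR0 : 0 < R := (abs_nonneg y).trans_lt hR
    have hsq : y ^ 2 < R ^ 2 := by rwa [sq_lt_sq, abs_of_pos hR0]
    refine ⟨√(R ^ 2 - y ^ 2), Real.sqrt_pos.2 (by linarith), ?_⟩
    simp only [Real.sq_sqrt (sub_nonneg.2 hsq.le), add_sub_cancel, Real.sqrt_sq hR0.le]

lemma lintegral_Ioi_comp_sqrt_sq_add_sq (y : ℝ) (φ : ℝ → ℝ≥0∞) :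
    ∫⁻ r in Set.Ioi (0 : ℝ), ENNReal.ofReal (r / √(y ^ 2 + r ^ 2)) * φ √(y ^ 2 + r ^ 2)
      = ∫⁻ R in Set.Ioi |y|, φ R := by
  have hderiv (r : ℝ) (hr : 0 < r) :
      HasDerivAt (fun r : ℝ => √(y ^ 2 + r ^ 2)) (r / √(y ^ 2 + r ^ 2)) r := by
    refine (((hasDerivAt_pow 2 r).const_add (y ^ 2)).sqrt (by positivity)).congr_deriv ?_
    field_simp
    norm_num
  have hinj : Set.InjOn (fun r : ℝ => √(y ^ 2 + r ^ 2)) (Set.Ioi 0) := by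
    intro r (hr : 0 < r) s (hs : 0 < s) hrs
    rw [Real.sqrt_inj (by positivity) (by positivity), add_right_inj] at hrs
    exact (sq_eq_sq₀ hr.le hs.le).1 hrs
  rw [← image_sqrt_sq_add_sq_Ioi, lintegral_image_eq_lintegral_abs_deriv_mul measurableSet_Ioi
    (fun r hr => (hderiv r hr).hasDerivWithinAt) hinj]
  refine setLIntegral_congr_fun measurableSet_Ioi fun r (hr : 0 < r) => ?_
  rw [abs_of_nonneg (by positivity)]

lemma lintegral_gaussianReal_prod_sqrt_sq_add {h : ℝ≥0} (hh : h ≠ 0) (y : ℝ) {f : ℝ → ℝ≥0∞}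
    (hf : Measurable f) :
    ∫⁻ p, f √(y ^ 2 + (p.1 ^ 2 + p.2 ^ 2)) ∂(gaussianReal 0 h).prod (gaussianReal 0 h)
      = ∫⁻ R in Set.Ioi |y|,
          ENNReal.ofReal (R / h * Real.exp (-(R ^ 2 - y ^ 2) / (2 * h))) * f R := by
  have polar := lintegral_gaussianReal_prod_sqrt_sq_add_sq hh
    (g := fun r => f √(y ^ 2 + r ^ 2)) (by fun_prop)
  simp only [Real.sq_sqrt (add_nonneg (sq_nonneg _) (sq_nonneg _))] at polar
  rw [polar, ← lintegral_Ioi_comp_sqrt_sq_add_sq]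
  refine setLIntegral_congr_fun measurableSet_Ioi fun r (hr : 0 < r) => ?_
  have : 0 < √(y ^ 2 + r ^ 2) := Real.sqrt_pos.2 (by positivity)
  rw [← mul_assoc, ← ENNReal.ofReal_mul (by positivity), Real.sq_sqrt (by positivity),
    add_sub_cancel_left]
  congr 2
  field_simp

lemma lintegral_Iic_ofReal_exp {a : ℝ} (ha : 0 < a) (R : ℝ) :
    ∫⁻ y in Set.Iic R, ENNReal.ofReal (Real.exp (a * (y - R))) = ENNReal.ofReal a⁻¹ := by
  simp_rw [mul_sub, Real.exp_sub, div_eq_mul_inv]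
  rw [← ofReal_integral_eq_lintegral_ofReal ((integrableOn_exp_mul_Iic ha R).mul_const _)
    (ae_of_all _ fun y => by positivity), integral_mul_const, integral_exp_mul_Iic ha]
  congr 1
  field_simp

lemma lintegral_lintegral_Ici_swap {F : ℝ → ℝ → ℝ≥0∞} (hF : Measurable fun p : ℝ × ℝ => F p.1 p.2) :
    ∫⁻ y, ∫⁻ R in Set.Ici y, F y R = ∫⁻ R, ∫⁻ y in Set.Iic R, F y R := by
  simp_rw [← lintegral_indicator measurableSet_Ici, ← lintegral_indicator measurableSet_Iic]
  exact lintegral_lintegral_swap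
    (hF.indicator (measurableSet_le measurable_fst measurable_snd)).aemeasurable

lemma gaussianPDFReal_mul_exp_sq_sub_sq (x : ℝ) {h : ℝ≥0} (hh : h ≠ 0) (y R : ℝ) :
    gaussianPDFReal x h y * Real.exp (-(R ^ 2 - y ^ 2) / (2 * h))
      = gaussianPDFReal x h R * Real.exp (x / h * (y - R)) := by
  have hpos : (h : ℝ) ≠ 0 := by exact_mod_cast hh
  rw [gaussianPDFReal, gaussianPDFReal, mul_assoc _ (Real.exp _), mul_assoc _ (Real.exp _),
    ← Real.exp_add, ← Real.exp_add]
  congr 2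
  field_simp
  ring

lemma ofReal_mul_lintegral_gaussianReal_sqrt_sq_add_le {x : ℝ} (hx : 0 < x) {h : ℝ≥0} (hh : h ≠ 0)
    {f : ℝ → ℝ≥0∞} (hf : Measurable f) :
    ENNReal.ofReal x * ∫⁻ y, ∫⁻ p, f √(y ^ 2 + (p.1 ^ 2 + p.2 ^ 2))
        ∂(gaussianReal 0 h).prod (gaussianReal 0 h) ∂gaussianReal x h
      ≤ ∫⁻ y, ENNReal.ofReal y * f y ∂gaussianReal x h := by
  have : (0 : ℝ) < h := by exact_mod_cast pos_iff_ne_zero.2 hh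
  set density : ℝ → ℝ≥0∞ := fun R =>
    ENNReal.ofReal (gaussianPDFReal x h R) * (ENNReal.ofReal (R / h) * f R) with hdensity
  have density_meas : Measurable density := by fun_prop
  have kernel (y R : ℝ) : ENNReal.ofReal (gaussianPDFReal x h y) *
      (ENNReal.ofReal (R / h * Real.exp (-(R ^ 2 - y ^ 2) / (2 * h))) * f R)
      = density R * ENNReal.ofReal (Real.exp (x / h * (y - R))) := by
    rw [ENNReal.ofReal_mul' (Real.exp_nonneg _), mul_right_comm (ENNReal.ofReal (R / h)),
      mul_comm _ (ENNReal.ofReal (Real.exp _)), ← mul_assoc,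
      ← ENNReal.ofReal_mul (gaussianPDFReal_nonneg _ _ _), gaussianPDFReal_mul_exp_sq_sub_sq x hh,
      ENNReal.ofReal_mul (gaussianPDFReal_nonneg _ _ _), hdensity, mul_right_comm]
  calc _ = ENNReal.ofReal x * ∫⁻ y, ∫⁻ R in Set.Ioi |y|,
          density R * ENNReal.ofReal (Real.exp (x / h * (y - R))) := by
        rw [lintegral_gaussianReal x hh (Measurable.lintegral_prod_right'
          (f := fun q : ℝ × ℝ × ℝ => f √(q.1 ^ 2 + (q.2.1 ^ 2 + q.2.2 ^ 2))) (by fun_prop))]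
        simp_rw [lintegral_gaussianReal_prod_sqrt_sq_add hh _ hf, ← kernel]
        congr with y
        rw [lintegral_const_mul _ (by fun_prop)]
    _ ≤ ENNReal.ofReal x * ∫⁻ y, ∫⁻ R in Set.Ici y,
          density R * ENNReal.ofReal (Real.exp (x / h * (y - R))) := by
        gcongr with y
        exact fun R hR => (le_abs_self y).trans (le_of_lt hR)
    _ = ENNReal.ofReal x * ∫⁻ R, density R * ENNReal.ofReal (x / h)⁻¹ := by
        rw [lintegral_lintegral_Ici_swap (by fun_prop)]
        congr with R
        rw [lintegral_const_mul _ (by fun_prop), lintegral_Iic_ofReal_exp (by positivity)]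
    _ = ∫⁻ y, ENNReal.ofReal y * f y ∂gaussianReal x h := by
        rw [← lintegral_const_mul _ (by fun_prop), lintegral_gaussianReal x hh (by fun_prop)]
        congr with R
        rw [hdensity, mul_comm, mul_assoc, ← ENNReal.ofReal_mul (by positivity), mul_assoc,
          mul_right_comm, ← ENNReal.ofReal_mul' (by positivity)]
        congr 3
        field_simp

lemma map_toLp_pi_gaussianReal {ι : Type*} [Fintype ι] (h : ℝ≥0) :
    (Measure.pi fun _ : ι => gaussianReal 0 h).map (WithLp.toLp 2)
      = (stdGaussian (EuclideanSpace ℝ ι)).map (√(h : ℝ) • ·) := by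
  have : Measure.pi (fun _ : ι => gaussianReal 0 h)
      = (Measure.pi fun _ : ι => gaussianReal 0 1).map fun z i => √(h : ℝ) * z i := by
    rw [Measure.pi_map_pi (fun _ => by fun_prop), ← gaussianReal_zero_eq_map_sqrt_mul]
  rw [this, ← map_pi_eq_stdGaussian, Measure.map_map (by fun_prop) (by fun_prop),
    Measure.map_map (by fun_prop) (by fun_prop)]
  rfl

lemma lintegral_toLp_pi_gaussianReal {ι : Type*} [Fintype ι] (h : ℝ≥0)
    {F : EuclideanSpace ℝ ι → ℝ≥0∞} (hF : Measurable F) :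
    ∫⁻ z, F (WithLp.toLp 2 z) ∂Measure.pi (fun _ : ι => gaussianReal 0 h)
      = ∫⁻ z, F (√(h : ℝ) • z) ∂stdGaussian (EuclideanSpace ℝ ι) := by
  rw [← lintegral_map (g := WithLp.toLp 2) hF (by fun_prop), map_toLp_pi_gaussianReal,
    lintegral_map hF (by fun_prop)]

lemma lintegral_norm_add_pi_gaussianReal_congr {ι : Type*} [Fintype ι] (h : ℝ≥0)
    {v w : EuclideanSpace ℝ ι} (hvw : ‖v‖ = ‖w‖) {f : ℝ → ℝ≥0∞} (hf : Measurable f) :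
    ∫⁻ z, f ‖v + WithLp.toLp 2 z‖ ∂Measure.pi (fun _ : ι => gaussianReal 0 h)
      = ∫⁻ z, f ‖w + WithLp.toLp 2 z‖ ∂Measure.pi (fun _ : ι => gaussianReal 0 h) := by
  set ρ := (ℝ ∙ (v - w))ᗮ.reflection with hρ
  have reflect (z : EuclideanSpace ℝ ι) : ‖w + √(h : ℝ) • ρ z‖ = ‖v + √(h : ℝ) • z‖ := by
    rw [← Submodule.reflection_sub hvw, ← hρ, ← map_smul, ← map_add, LinearIsometryEquiv.norm_map]
  rw [lintegral_toLp_pi_gaussianReal h (F := fun z => f ‖v + z‖) (by fun_prop),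
    lintegral_toLp_pi_gaussianReal h (F := fun z => f ‖w + z‖) (by fun_prop)]
  conv_rhs => rw [← stdGaussian_map ρ, lintegral_map (by fun_prop) (by fun_prop)]
  simp_rw [reflect]

lemma lintegral_pi_fin_three {E : Type*} [MeasurableSpace E] (μ : Measure E) [SigmaFinite μ]
    {f : (Fin 3 → E) → ℝ≥0∞} (hf : Measurable f) :
    ∫⁻ z, f z ∂Measure.pi (fun _ => μ) = ∫⁻ x, ∫⁻ p, f ![x, p.1, p.2] ∂μ.prod μ ∂μ := by
  rw [← (measurePreserving_piFinSuccAbove (fun _ : Fin 3 => μ) 0).symm.lintegral_comp hf,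
    lintegral_prod _ (by fun_prop)]
  congr with x
  rw [← (measurePreserving_finTwoArrow μ).symm.lintegral_comp (by fun_prop)]
  congr with p
  congr with i
  fin_cases i <;> rfl

lemma ofReal_norm_mul_lintegral_pi_gaussianReal_le (v : EuclideanSpace ℝ (Fin 3)) (h : ℝ≥0)
    {f : ℝ → ℝ≥0∞} (hf : Measurable f) :
    ENNReal.ofReal ‖v‖ *
        ∫⁻ z, f ‖v + WithLp.toLp 2 z‖ ∂Measure.pi (fun _ : Fin 3 => gaussianReal 0 h)
      ≤ ∫⁻ z, ENNReal.ofReal (‖v‖ + z) * f (‖v‖ + z) ∂gaussianReal 0 h := by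
  by_cases hh : h = 0
  · rw [hh, lintegral_toLp_pi_gaussianReal 0 (F := fun z => f ‖v + z‖) (by fun_prop),
      gaussianReal_zero_var, lintegral_dirac' _ (by fun_prop)]
    simp
  rcases (norm_nonneg v).eq_or_lt with hv | hv
  · simp [← hv]
  have hnorm : ‖v‖ = ‖EuclideanSpace.single (0 : Fin 3) ‖v‖‖ := by simp
  rw [lintegral_norm_add_pi_gaussianReal_congr h hnorm hf,
    lintegral_pi_fin_three _ (by fun_prop)]
  have := ofReal_mul_lintegral_gaussianReal_sqrt_sq_add_le hv hh hf
  have hlaw : gaussianReal ‖v‖ h = (gaussianReal 0 h).map (‖v‖ + ·) := by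
    rw [gaussianReal_map_const_add, zero_add]
  rw [hlaw, lintegral_map (by fun_prop) (by fun_prop), lintegral_map (by fun_prop) (by fun_prop)]
    at this
  simpa [EuclideanSpace.norm_eq, Fin.sum_univ_three, add_assoc] using this

section StationaryIndepIncrements

variable {Ω : Type*} {m0 : MeasurableSpace Ω} {P : Measure Ω}

/-- The process `X` is adapted to `ℱ` and, up to time `T`, its increments are stationary and
independent of the past: for `s ≤ u ≤ T` the increment `X u - X s` is independent of `ℱ s` and has
law `γ (u - s)` under `P`. Both properties are packed into one product formula, so that neither
the independence nor the law needs `P` to be normalised. The horizon `T` is there because a Girsanov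
change of measure with density taken at time `T` only describes the process up to `T`. -/
structure HasStationaryIndepIncrements {E : Type*} [MeasurableSpace E] [Sub E]
    (X : ℝ≥0 → Ω → E) (ℱ : Filtration ℝ≥0 m0) (γ : ℝ≥0 → Measure E) (T : ℝ≥0)
    (P : Measure Ω) : Prop where
  measurable_apply : ∀ s, Measurable[ℱ s] (X s)
  measure_inter : ∀ ⦃s u : ℝ≥0⦄, s ≤ u → u ≤ T → ∀ ⦃A : Set Ω⦄, MeasurableSet[ℱ s] A →
    ∀ ⦃S : Set E⦄, MeasurableSet S →
      P (A ∩ (fun ω => X u ω - X s ω) ⁻¹' S) = P A * γ (u - s) S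

namespace HasStationaryIndepIncrements

variable {E F : Type*} [MeasurableSpace E] [MeasurableSpace F] {X : ℝ≥0 → Ω → E}
  {ℱ : Filtration ℝ≥0 m0} {γ : ℝ≥0 → Measure E} {T : ℝ≥0}

section AddCommGroup

variable [AddCommGroup E]

lemma measurable (hX : HasStationaryIndepIncrements X ℱ γ T P) (s : ℝ≥0) : Measurable (X s) :=
  (hX.measurable_apply s).mono (ℱ.le s) le_rfl

lemma measurable_of_le (hX : HasStationaryIndepIncrements X ℱ γ T P) {s u : ℝ≥0} (hsu : s ≤ u) :
    Measurable[ℱ u] (X s) :=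
  (hX.measurable_apply s).mono (ℱ.mono hsu) le_rfl

variable [MeasurableSub₂ E] [IsFiniteMeasure P]
  [∀ h, IsProbabilityMeasure (γ h)]

lemma map_restrict_prodMk_increment (hX : HasStationaryIndepIncrements X ℱ γ T P) {s u : ℝ≥0}
    (hsu : s ≤ u) (huT : u ≤ T) {A : Set Ω} (hA : MeasurableSet[ℱ s] A) {Y : Ω → F}
    (hY : Measurable[ℱ s] Y) :
    (P.restrict A).map (fun ω => (Y ω, X u ω - X s ω))
      = ((P.restrict A).map Y).prod (γ (u - s)) := by
  have hY' : Measurable Y := hY.mono (ℱ.le s) le_rfl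
  have hincr : Measurable fun ω => X u ω - X s ω := (hX.measurable u).sub (hX.measurable s)
  refine (Measure.prod_eq fun S₁ S₂ hS₁ hS₂ => ?_).symm
  rw [Measure.map_apply (hY'.prodMk hincr) (hS₁.prod hS₂), Measure.map_apply hY' hS₁,
    Measure.restrict_apply ((hY'.prodMk hincr) (hS₁.prod hS₂)), Measure.restrict_apply (hY' hS₁),
    ← hX.measure_inter hsu huT ((hY hS₁).inter hA) hS₂, Set.mk_preimage_prod,
    Set.inter_right_comm]

lemma setLIntegral_eq [MeasurableAdd₂ E] (hX : HasStationaryIndepIncrements X ℱ γ T P) {s u : ℝ≥0}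
    (hsu : s ≤ u) (huT : u ≤ T) {A : Set Ω} (hA : MeasurableSet[ℱ s] A) {Y : Ω → F}
    (hY : Measurable[ℱ s] Y) {Φ : F → E → ℝ≥0∞} (hΦ : Measurable fun p : F × E => Φ p.1 p.2) :
    ∫⁻ ω in A, Φ (Y ω) (X u ω) ∂P
      = ∫⁻ ω in A, ∫⁻ z, Φ (Y ω) (X s ω + z) ∂γ (u - s) ∂P := by
  have hYX : Measurable[ℱ s] fun ω => (Y ω, X s ω) := hY.prodMk (hX.measurable_apply s)
  have hYX' : Measurable fun ω => (Y ω, X s ω) := hYX.mono (ℱ.le s) le_rfl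
  have hincr : Measurable fun ω => X u ω - X s ω := (hX.measurable u).sub (hX.measurable s)
  have hΨ : Measurable fun p : (F × E) × E => Φ p.1.1 (p.1.2 + p.2) :=
    hΦ.comp (f := fun p : (F × E) × E => (p.1.1, p.1.2 + p.2)) (by fun_prop)
  calc _ = ∫⁻ p, Φ p.1.1 (p.1.2 + p.2)
          ∂(P.restrict A).map (fun ω => ((Y ω, X s ω), X u ω - X s ω)) := by
        rw [lintegral_map hΨ (hYX'.prodMk hincr)]
        simp only [add_sub_cancel]
    _ = _ := by
        rw [hX.map_restrict_prodMk_increment hsu huT hA hYX, lintegral_prod _ hΨ.aemeasurable,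
          lintegral_map hΨ.lintegral_prod_right' hYX']

end AddCommGroup

lemma of_indep_natural [Sub E] [MeasurableSub₂ E] [TopologicalSpace E]
    [TopologicalSpace.MetrizableSpace E] [BorelSpace E] (hX : ∀ s, StronglyMeasurable (X s))
    (hlaw : ∀ ⦃s u⦄, s ≤ u → u ≤ T → P.map (fun ω => X u ω - X s ω) = γ (u - s))
    (hindep : ∀ ⦃s u⦄, s ≤ u → u ≤ T →
      Indep (MeasurableSpace.comap (fun ω => X u ω - X s ω) inferInstance)
        (Filtration.natural X hX s) P) :
    HasStationaryIndepIncrements X (Filtration.natural X hX) γ T P where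
  measurable_apply s := (Filtration.stronglyAdapted_natural hX s).measurable
  measure_inter s u hsu huT A hA S hS := by
    rw [Set.inter_comm, (Indep_iff _ _ _).1 (hindep hsu huT) _ _ ⟨S, hS, rfl⟩ hA,
      ← hlaw hsu huT, Measure.map_apply ((hX u).measurable.fun_sub (hX s).measurable) hS, mul_comm]

end HasStationaryIndepIncrements

lemma indepFun_pi_of_iIndepFun_prodMk {ι α δ : Type*} [Finite ι] [MeasurableSpace α]
    [MeasurableSpace δ] [IsProbabilityMeasure P] {X : ι → Ω → α} {Y : ι → Ω → δ}
    (hX : ∀ i, Measurable (X i)) (hY : ∀ i, Measurable (Y i))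
    (hpairs : iIndepFun (fun i ω => (X i ω, Y i ω)) P) (hXY : ∀ i, IndepFun (X i) (Y i) P) :
    IndepFun (fun ω i => X i ω) (fun ω i => Y i ω) P := by
  have := Fintype.ofFinite ι
  have (i : ι) : IsProbabilityMeasure (P.map (X i)) :=
    Measure.isProbabilityMeasure_map (hX i).aemeasurable
  have (i : ι) : IsProbabilityMeasure (P.map (Y i)) :=
    Measure.isProbabilityMeasure_map (hY i).aemeasurable
  have hXpi : iIndepFun X P := hpairs.comp (fun _ => Prod.fst) fun _ => measurable_fst
  have hYpi : iIndepFun Y P := hpairs.comp (fun _ => Prod.snd) fun _ => measurable_snd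
  rw [indepFun_iff_map_prod_eq_prod_map_map (by fun_prop) (by fun_prop),
    (iIndepFun_iff_map_fun_eq_pi_map fun i => (hX i).aemeasurable).1 hXpi,
    (iIndepFun_iff_map_fun_eq_pi_map fun i => (hY i).aemeasurable).1 hYpi,
    ← (measurePreserving_arrowProdEquivProdArrow α δ ι _ _).map_eq]
  simp_rw [← (indepFun_iff_map_prod_eq_prod_map_map (hX _).aemeasurable (hY _).aemeasurable).1
    (hXY _)]
  rw [← (iIndepFun_iff_map_fun_eq_pi_map fun i => ((hX i).prodMk (hY i)).aemeasurable).1 hpairs,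
    Measure.map_map (MeasurableEquiv.measurable _) (by fun_prop)]
  rfl

lemma HasStationaryIndepIncrements.pi_of_indep_natural {ι : Type*} [Fintype ι]
    [IsProbabilityMeasure P] {X : ι → ℝ≥0 → Ω → ℝ} {γ : ℝ≥0 → Measure ℝ} {T : ℝ≥0}
    (hX : ∀ i s, Measurable (X i s))
    (hlaw : ∀ i, ∀ ⦃s u⦄, s ≤ u → u ≤ T → P.map (fun ω => X i u ω - X i s ω) = γ (u - s))
    (hincr : ∀ i, ∀ ⦃s u⦄, s ≤ u → u ≤ T →
      Indep (MeasurableSpace.comap (fun ω => X i u ω - X i s ω) inferInstance)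
        (⨆ r ∈ Set.Iic s, MeasurableSpace.comap (X i r) inferInstance) P)
    (hindep : iIndep (fun i => ⨆ s, MeasurableSpace.comap (X i s) inferInstance) P) :
    HasStationaryIndepIncrements (fun s ω i => X i s ω)
      (Filtration.natural (fun s ω i => X i s ω)
        fun s => (measurable_pi_lambda _ fun i => hX i s).stronglyMeasurable)
      (fun h => Measure.pi fun _ => γ h) T P := by
  have hpaths : iIndepFun (fun i ω s => X i s ω) P := by
    change iIndep (fun i => MeasurableSpace.comap (fun ω s => X i s ω) inferInstance) P
    simpa only [MeasurableSpace.comap_process_pi] using hindep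
  refine .of_indep_natural _ (fun s u hsu huT => ?_) fun s u hsu huT => ?_
  · have hincrements : iIndepFun (fun i ω => X i u ω - X i s ω) P :=
      hpaths.comp (fun _ x => x u - x s) fun _ => by fun_prop
    exact ((iIndepFun_iff_map_fun_eq_pi_map fun i => by fun_prop).1 hincrements).trans
      (by simp only [hlaw _ hsu huT])
  · rw [Filtration.natural_eq_comap]
    have hpast (i : ι) : IndepFun (fun ω => X i u ω - X i s ω)
        (fun ω (r : Set.Iic s) => X i r ω) P := by
      rw [IndepFun_iff_Indep, MeasurableSpace.comap_process_pi, iSup_subtype]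
      exact hincr i hsu huT
    have hpairs : iIndepFun (fun i ω => (X i u ω - X i s ω, fun r : Set.Iic s => X i r ω)) P :=
      hpaths.comp (fun _ x => (x u - x s, fun r : Set.Iic s => x r)) fun _ => by fun_prop
    exact (indepFun_pi_of_iIndepFun_prodMk (by fun_prop) (by fun_prop) hpairs hpast).comp
      measurable_id (ψ := fun y r i => y i r) (by fun_prop)

end StationaryIndepIncrements

section Girsanov

variable {Ω : Type*} {m0 : MeasurableSpace Ω} {P : Measure Ω} {B : ℝ≥0 → Ω → ℝ}
  {ℱ : Filtration ℝ≥0 m0} {T : ℝ≥0}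

/-- The exponential martingale `exp (c B_s - c² s / 2)` of a Brownian motion `B`; its value at time
`T` is the Girsanov density under which `B` acquires the drift `c` on `[0, T]`. -/
def exponentialMartingale (c : ℝ) (B : ℝ≥0 → Ω → ℝ) (s : ℝ≥0) (ω : Ω) : ℝ≥0∞ :=
  ENNReal.ofReal (Real.exp (c * B s ω - c ^ 2 * s / 2))

@[fun_prop]
lemma measurable_exponentialMartingale (c : ℝ) {s : ℝ≥0} (hBs : Measurable (B s)) :
    Measurable (exponentialMartingale c B s) := by
  unfold exponentialMartingale
  fun_prop

lemma lintegral_comp_sub_mul_exp_gaussianReal (c : ℝ) (h : ℝ≥0) {f : ℝ → ℝ≥0∞}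
    (hf : Measurable f) :
    ∫⁻ z, f (c * h - z) * ENNReal.ofReal (Real.exp (c * z - c ^ 2 * h / 2)) ∂gaussianReal 0 h
      = ∫⁻ z, f z ∂gaussianReal 0 h := by
  have hreflect : gaussianReal 0 h = (gaussianReal (c * h) h).map (c * h - ·) := by
    rw [gaussianReal_map_const_sub, sub_self]
  conv_rhs => rw [hreflect, lintegral_map hf (by fun_prop), ← gaussianReal_withDensity_exp,
    lintegral_withDensity_eq_lintegral_mul _ (by fun_prop) (by fun_prop)]
  simp only [Pi.mul_apply, mul_comm]

variable [IsProbabilityMeasure P] (hB : HasStationaryIndepIncrements B ℱ (gaussianReal 0) T P)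
include hB

lemma setLIntegral_mul_exponentialMartingale (c : ℝ) {s u : ℝ≥0} (hsu : s ≤ u) (huT : u ≤ T)
    {A : Set Ω} (hA : MeasurableSet[ℱ s] A) {f : ℝ → ℝ≥0∞} (hf : Measurable f) :
    ∫⁻ ω in A, f (c * (u - s) - (B u ω - B s ω)) * exponentialMartingale c B u ω ∂P
      = (∫⁻ ω in A, exponentialMartingale c B s ω ∂P) * ∫⁻ z, f z ∂gaussianReal 0 (u - s) := by
  have hcoe : ((u - s : ℝ≥0) : ℝ) = u - s := NNReal.coe_sub hsu
  have hBs := hB.measurable s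
  refine (hB.setLIntegral_eq hsu huT hA (hB.measurable_apply s) (Φ := fun b b' =>
    f (c * (u - s) - (b' - b)) * ENNReal.ofReal (Real.exp (c * b' - c ^ 2 * u / 2)))
    (by fun_prop)).trans ?_
  rw [← lintegral_mul_const _ (by fun_prop)]
  refine lintegral_congr fun ω => ?_
  have factor (z : ℝ) : Real.exp (c * (B s ω + z) - c ^ 2 * u / 2)
      = Real.exp (c * B s ω - c ^ 2 * s / 2) * Real.exp (c * z - c ^ 2 * (u - s : ℝ≥0) / 2) := by
    rw [← Real.exp_add, hcoe]
    ring_nf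
  simp_rw [add_sub_cancel_left, factor, ENNReal.ofReal_mul (Real.exp_nonneg _),
    mul_left_comm (f _)]
  rw [lintegral_const_mul _ (by fun_prop), ← lintegral_comp_sub_mul_exp_gaussianReal c _ hf, hcoe]
  rfl

lemma withDensity_exponentialMartingale_apply (c : ℝ) {s : ℝ≥0} (hsT : s ≤ T) {A : Set Ω}
    (hA : MeasurableSet[ℱ s] A) :
    P.withDensity (exponentialMartingale c B T) A
      = ∫⁻ ω in A, exponentialMartingale c B s ω ∂P := by
  rw [withDensity_apply _ (ℱ.le s _ hA)]
  simpa using setLIntegral_mul_exponentialMartingale hB c hsT le_rfl hA (f := 1) measurable_one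

lemma isProbabilityMeasure_withDensity_exponentialMartingale (c : ℝ) (hB0 : ∀ᵐ ω ∂P, B 0 ω = 0) :
    IsProbabilityMeasure (P.withDensity (exponentialMartingale c B T)) where
  measure_univ := by
    rw [withDensity_exponentialMartingale_apply hB c zero_le MeasurableSet.univ,
      Measure.restrict_univ, lintegral_congr_ae (g := fun _ => 1), lintegral_one, measure_univ]
    filter_upwards [hB0] with ω hω
    simp [exponentialMartingale, hω]

lemma HasStationaryIndepIncrements.girsanov (β c : ℝ) :
    HasStationaryIndepIncrements (fun s ω => β + c * s - B s ω) ℱ (gaussianReal 0) T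
      (P.withDensity (exponentialMartingale c B T)) where
  measurable_apply s := (hB.measurable_apply s).const_sub _
  measure_inter s u hsu huT A hA S hS := by
    have hincr : Measurable[ℱ u] fun ω => c * (u - s) - (B u ω - B s ω) :=
      ((hB.measurable_apply u).sub (hB.measurable_of_le hsu)).const_sub _
    have hincr_eq (ω : Ω) : β + c * u - B u ω - (β + c * s - B s ω)
        = c * (u - s) - (B u ω - B s ω) := by ring
    rw [funext hincr_eq,
      withDensity_exponentialMartingale_apply hB c huT ((ℱ.mono hsu _ hA).inter (hincr hS)),
      withDensity_exponentialMartingale_apply hB c (hsu.trans huT) hA,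
      ← lintegral_indicator_one hS,
      ← setLIntegral_mul_exponentialMartingale hB c hsu huT hA (measurable_one.indicator hS),
      Set.inter_comm, ← setLIntegral_indicator (ℱ.le u _ (hincr hS))]
    refine lintegral_congr fun ω => ?_
    classical
    simp [Set.indicator_apply]

end Girsanov

section Domination

variable {Ω Ω' : Type*} {m0 : MeasurableSpace Ω} {m0' : MeasurableSpace Ω'}

/-- The event that the process `X` is nonnegative at all times of `D`. -/
def survivalSet (X : ℝ≥0 → Ω → ℝ) (D : Set ℝ≥0) : Set Ω := {ω | ∀ u ∈ D, 0 ≤ X u ω}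

/-- The path of `X` observed on the finite set of times `K`. It is extended by `0` to all times so
that samples along different sets live in the same space. -/
def sampledPath (K : Finset ℝ≥0) (X : ℝ≥0 → Ω → ℝ) (ω : Ω) : ℝ≥0 → ℝ :=
  K.piecewise (fun u => X u ω) 0

/-- The norm of the process `V` started from `v`; if `V` is a Brownian motion in dimension `n`, this
is the `n`-dimensional Bessel process started from `‖v‖`. -/
def besselProcess {ι : Type*} [Fintype ι] (v : EuclideanSpace ℝ ι) (V : ℝ≥0 → Ω → ι → ℝ) (u : ℝ≥0)
    (ω : Ω) : ℝ :=
  ‖v + WithLp.toLp 2 (V u ω)‖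

lemma survivalSet_insert (X : ℝ≥0 → Ω → ℝ) (u : ℝ≥0) (D : Set ℝ≥0) :
    survivalSet X (insert u D) = {ω | 0 ≤ X u ω} ∩ survivalSet X D := by
  ext ω
  simp [survivalSet]

lemma measurableSet_survivalSet {X : ℝ≥0 → Ω → ℝ} {D : Set ℝ≥0} (hD : D.Countable)
    (hX : ∀ u ∈ D, Measurable (X u)) : MeasurableSet (survivalSet X D) := by
  have : survivalSet X D = ⋂ u ∈ D, {ω | 0 ≤ X u ω} := by
    ext ω
    simp [survivalSet]
  rw [this]
  exact .biInter hD fun u hu => measurableSet_le measurable_const (hX u hu)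

lemma sampledPath_apply_of_mem {K : Finset ℝ≥0} (X : ℝ≥0 → Ω → ℝ) (ω : Ω) {u : ℝ≥0} (hu : u ∈ K) :
    sampledPath K X ω u = X u ω :=
  Finset.piecewise_eq_of_mem _ _ _ hu

lemma sampledPath_singleton (u : ℝ≥0) (X : ℝ≥0 → Ω → ℝ) (ω : Ω) :
    sampledPath {u} X ω = Pi.single u (X u ω) :=
  Finset.piecewise_singleton _ _ _

lemma sampledPath_insert (u : ℝ≥0) (K : Finset ℝ≥0) (X : ℝ≥0 → Ω → ℝ) (ω : Ω) :
    sampledPath (insert u K) X ω = Function.update (sampledPath K X ω) u (X u ω) :=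
  Finset.piecewise_insert _ _ _ _

lemma sampledPath_eq_piecewise {I K : Finset ℝ≥0} (hIK : I ⊆ K) (X : ℝ≥0 → Ω → ℝ) (ω : Ω) :
    sampledPath I X ω = I.piecewise (sampledPath K X ω) 0 :=
  I.piecewise_congr (fun _ hu => (sampledPath_apply_of_mem X ω (hIK hu)).symm) fun _ _ => rfl

lemma measurable_sampledPath {K : Finset ℝ≥0} {X : ℝ≥0 → Ω → ℝ} (hX : ∀ u ∈ K, Measurable (X u)) :
    Measurable (sampledPath K X) := by
  refine measurable_pi_lambda _ fun u => ?_
  by_cases hu : u ∈ K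
  · simpa only [sampledPath_apply_of_mem X _ hu] using hX u hu
  · simp [sampledPath, Finset.piecewise_eq_of_notMem _ _ _ hu]

lemma map_eq_of_forall_map_sampledPath_eq {P : Measure Ω} {P' : Measure Ω'} [IsFiniteMeasure P']
    {X : ℝ≥0 → Ω → ℝ} {Y : ℝ≥0 → Ω' → ℝ} {D : Set ℝ≥0} (hX : ∀ u, Measurable (X u))
    (hY : ∀ u, Measurable (Y u))
    (h : ∀ K : Finset ℝ≥0, (K : Set ℝ≥0) ⊆ D →
      P.map (sampledPath K X) = P'.map (sampledPath K Y)) :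
    P.map (fun ω (s : D) => X s ω) = P'.map fun ω (s : D) => Y s ω := by
  have hfdd (I : Finset D) :
      P.map (fun ω => I.restrict fun s : D => X s ω)
        = P'.map fun ω => I.restrict fun s : D => Y s ω := by
    classical
    set K := I.image Subtype.val
    have hK (i : I) : (i : ℝ≥0) ∈ K := Finset.mem_image_of_mem _ i.2
    have hcoord : Measurable fun (p : ℝ≥0 → ℝ) (i : I) => p i := by fun_prop
    have := congrArg (Measure.map fun (p : ℝ≥0 → ℝ) (i : I) => p i) (h K (by simp [K]))
    rw [Measure.map_map hcoord (measurable_sampledPath fun u _ => hX u),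
      Measure.map_map hcoord (measurable_sampledPath fun u _ => hY u)] at this
    simpa only [Function.comp_def, sampledPath_apply_of_mem _ _ (hK _), Finset.restrict_def]
      using this
  have hXpath : Measurable fun ω (s : D) => X s ω := measurable_pi_lambda _ fun s => hX s
  have hYpath : Measurable fun ω (s : D) => Y s ω := measurable_pi_lambda _ fun s => hY s
  have hXlim := isProjectiveLimit_map (P := P) hXpath.aemeasurable
  simp_rw [hfdd] at hXlim
  exact hXlim.unique (isProjectiveLimit_map hYpath.aemeasurable)

@[fun_prop]
lemma measurable_besselProcess {ι : Type*} [Fintype ι] (v : EuclideanSpace ℝ ι)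
    {V : ℝ≥0 → Ω → ι → ℝ} {u : ℝ≥0} (hV : Measurable (V u)) : Measurable (besselProcess v V u) := by
  unfold besselProcess
  fun_prop

lemma mul_lintegral_le_of_forall_mul_le {F : Type*} [MeasurableSpace F] {P : Measure Ω}
    {P' : Measure Ω'} {A : Set Ω} {Y : Ω → F} {Y' : Ω' → F} {w : F → ℝ≥0∞} {a : ℝ≥0∞}
    (hw : Measurable w) (hw_top : ∀ p, w p ≠ ∞)
    (hdom : ∀ ⦃G : F → ℝ≥0∞⦄, Measurable G →
      a * ∫⁻ ω, G (Y' ω) ∂P' ≤ ∫⁻ ω in A, w (Y ω) * G (Y ω) ∂P)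
    {g : Ω' → ℝ≥0∞} {k : F → ℝ≥0∞} (hk : Measurable k) (hgk : ∀ ω, w (Y' ω) * g ω ≤ k (Y' ω)) :
    a * ∫⁻ ω, g ω ∂P' ≤ ∫⁻ ω in A, k (Y ω) ∂P := by
  classical
  set G : F → ℝ≥0∞ := fun p => if w p = 0 then ∞ else k p / w p with hG
  have g_le (ω : Ω') : g ω ≤ G (Y' ω) := by
    by_cases hω : w (Y' ω) = 0
    · simp [hG, hω]
    · simpa only [hG, hω, if_false] using
        (ENNReal.le_div_iff_mul_le (.inl hω) (.inl (hw_top _))).2 ((mul_comm _ _).trans_le (hgk ω))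
  have mul_G_le (p : F) : w p * G p ≤ k p := by
    by_cases hp : w p = 0
    · simp [hp]
    · simpa only [hG, hp, if_false] using ENNReal.mul_div_le
  calc a * ∫⁻ ω, g ω ∂P' ≤ a * ∫⁻ ω, G (Y' ω) ∂P' := by gcongr with ω; exact g_le ω
    _ ≤ ∫⁻ ω in A, w (Y ω) * G (Y ω) ∂P :=
      hdom (.ite (measurableSet_eq_fun hw measurable_const) measurable_const (hk.div hw))
    _ ≤ ∫⁻ ω in A, k (Y ω) ∂P := by gcongr with ω; exact mul_G_le _

variable {P : Measure Ω} {X : ℝ≥0 → Ω → ℝ} {ℱ : Filtration ℝ≥0 m0} {T : ℝ≥0}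
  [IsProbabilityMeasure P]

lemma lintegral_sampledPath_insert_besselProcess {ι : Type*} [Fintype ι] {V : ℝ≥0 → Ω → ι → ℝ}
    (hV : HasStationaryIndepIncrements V ℱ (fun h => Measure.pi fun _ => gaussianReal 0 h) T P)
    (v : EuclideanSpace ℝ ι) {K : Finset ℝ≥0} {s u : ℝ≥0} (hK : ∀ r ∈ K, r ≤ s) (hsu : s ≤ u)
    (huT : u ≤ T) {G : (ℝ≥0 → ℝ) → ℝ≥0∞} (hG : Measurable G) :
    ∫⁻ ω, G (sampledPath (insert u K) (besselProcess v V) ω) ∂P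
      = ∫⁻ ω, ∫⁻ z, G (Function.update (sampledPath K (besselProcess v V) ω) u
          ‖v + WithLp.toLp 2 (V s ω) + WithLp.toLp 2 z‖)
          ∂Measure.pi (fun _ : ι => gaussianReal 0 (u - s)) ∂P := by
  have hpast : Measurable[ℱ s] (sampledPath K (besselProcess v V)) :=
    measurable_sampledPath fun r hr => measurable_besselProcess v (hV.measurable_of_le (hK r hr))
  have hΦ : Measurable fun p : (ℝ≥0 → ℝ) × (ι → ℝ) =>
      G (Function.update p.1 u ‖v + WithLp.toLp 2 p.2‖) :=
    hG.comp (measurable_update'.comp (f := fun p : (ℝ≥0 → ℝ) × (ι → ℝ) =>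
      (p.1, ‖v + WithLp.toLp 2 p.2‖)) (by fun_prop))
  have := hV.setLIntegral_eq hsu huT MeasurableSet.univ hpast (Φ := fun p y =>
    G (Function.update p u ‖v + WithLp.toLp 2 y‖)) hΦ
  simpa only [sampledPath_insert, besselProcess, Measure.restrict_univ, WithLp.toLp_add,
    ← add_assoc] using this

lemma setLIntegral_sampledPath_insert {K : Finset ℝ≥0} {s u : ℝ≥0}
    (hX : HasStationaryIndepIncrements X ℱ (gaussianReal 0) T P) (hsK : s ∈ K)
    (hK : ∀ r ∈ K, r ≤ s) (hsu : s ≤ u) (huT : u ≤ T) {G : (ℝ≥0 → ℝ) → ℝ≥0∞} (hG : Measurable G) :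
    ∫⁻ ω in survivalSet X (insert u K), ENNReal.ofReal (X u ω) * G (sampledPath (insert u K) X ω) ∂P
      = ∫⁻ ω in survivalSet X K, ∫⁻ z, ENNReal.ofReal (sampledPath K X ω s + z)
          * G (Function.update (sampledPath K X ω) u (sampledPath K X ω s + z))
          ∂gaussianReal 0 (u - s) ∂P := by
  have hpast : Measurable[ℱ s] (sampledPath K X) :=
    measurable_sampledPath fun r hr => hX.measurable_of_le (hK r hr)
  have hsurv : MeasurableSet[ℱ s] (survivalSet X K) :=
    measurableSet_survivalSet K.countable_toSet fun r hr => hX.measurable_of_le (hK r hr)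
  have hΦ : Measurable fun p : (ℝ≥0 → ℝ) × ℝ =>
      ENNReal.ofReal p.2 * G (Function.update p.1 u p.2) :=
    (by fun_prop : Measurable _).mul (hG.comp measurable_update')
  have hstep := hX.setLIntegral_eq hsu huT hsurv hpast (Φ := fun p y =>
    ENNReal.ofReal y * G (Function.update p u y)) hΦ
  simp only [sampledPath_apply_of_mem X _ hsK, ← hstep, sampledPath_insert]
  rw [survivalSet_insert, ← setLIntegral_indicator
    (measurableSet_le measurable_const (hX.measurable u))]
  refine lintegral_congr fun ω => ?_
  rcases le_or_gt 0 (X u ω) with hω | hω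
  · exact Set.indicator_of_mem (s := {ω | 0 ≤ X u ω}) hω _
  · rw [Set.indicator_of_notMem (by simpa using hω), ENNReal.ofReal_of_nonpos hω.le, zero_mul]

variable {P' : Measure Ω'} [IsProbabilityMeasure P'] {V : ℝ≥0 → Ω' → Fin 3 → ℝ}
  {𝒢 : Filtration ℝ≥0 m0'} (hX : HasStationaryIndepIncrements X ℱ (gaussianReal 0) T P)
  (hV : HasStationaryIndepIncrements V 𝒢 (fun h => Measure.pi fun _ => gaussianReal 0 h) T P')
  (v : EuclideanSpace ℝ (Fin 3))
include hX hV

lemma mul_lintegral_sampledPath_insert_le {a : ℝ≥0∞} {K : Finset ℝ≥0} {s u : ℝ≥0}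
    (hsK : s ∈ K) (hK : ∀ r ∈ K, r ≤ s) (hsu : s ≤ u) (huT : u ≤ T)
    (hdom : ∀ ⦃G : (ℝ≥0 → ℝ) → ℝ≥0∞⦄, Measurable G →
      a * ∫⁻ ω, G (sampledPath K (besselProcess v V) ω) ∂P'
        ≤ ∫⁻ ω in survivalSet X K, ENNReal.ofReal (X s ω) * G (sampledPath K X ω) ∂P)
    {G : (ℝ≥0 → ℝ) → ℝ≥0∞} (hG : Measurable G) :
    a * ∫⁻ ω, G (sampledPath (insert u K) (besselProcess v V) ω) ∂P'
      ≤ ∫⁻ ω in survivalSet X (insert u K),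
          ENNReal.ofReal (X u ω) * G (sampledPath (insert u K) X ω) ∂P := by
  have hupdate : Measurable fun p : (ℝ≥0 → ℝ) × ℝ => G (Function.update p.1 u p.2) :=
    hG.comp measurable_update'
  have hk : Measurable fun p : (ℝ≥0 → ℝ) => ∫⁻ z,
      ENNReal.ofReal (p s + z) * G (Function.update p u (p s + z)) ∂gaussianReal 0 (u - s) :=
    Measurable.lintegral_prod_right' (f := fun q : (ℝ≥0 → ℝ) × ℝ =>
        ENNReal.ofReal (q.1 s + q.2) * G (Function.update q.1 u (q.1 s + q.2)))
      ((by fun_prop : Measurable _).mul (hupdate.comp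
        (f := fun q : (ℝ≥0 → ℝ) × ℝ => (q.1, q.1 s + q.2)) (by fun_prop)))
  rw [lintegral_sampledPath_insert_besselProcess hV v hK hsu huT hG,
    setLIntegral_sampledPath_insert hX hsK hK hsu huT hG]
  refine mul_lintegral_le_of_forall_mul_le (w := fun p => ENNReal.ofReal (p s))
    (Y' := sampledPath K (besselProcess v V))
    (k := fun p => ∫⁻ z, ENNReal.ofReal (p s + z) * G (Function.update p u (p s + z))
      ∂gaussianReal 0 (u - s))
    (by fun_prop) (fun _ => ENNReal.ofReal_ne_top) (fun G hG => ?_) hk fun ω => ?_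
  · simpa only [sampledPath_apply_of_mem X _ hsK] using hdom hG
  · rw [sampledPath_apply_of_mem _ _ hsK]
    exact ofReal_norm_mul_lintegral_pi_gaussianReal_le (v + WithLp.toLp 2 (V s ω)) (u - s)
      (f := fun y => G (Function.update (sampledPath K (besselProcess v V) ω) u y))
      (hupdate.comp measurable_prodMk_left)

lemma ofReal_norm_mul_lintegral_sampledPath_le (hX0 : ∀ᵐ ω ∂P, X 0 ω = ‖v‖)
    (hV0 : ∀ᵐ ω ∂P', V 0 ω = 0) {J : Finset ℝ≥0} (hJ : ∀ u ∈ J, u ≤ T)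
    ⦃G : (ℝ≥0 → ℝ) → ℝ≥0∞⦄ (hG : Measurable G) :
    ENNReal.ofReal ‖v‖ * ∫⁻ ω, G (sampledPath (insert 0 J) (besselProcess v V) ω) ∂P'
      ≤ ∫⁻ ω in survivalSet X (insert 0 J),
          ENNReal.ofReal (X (J.sup id) ω) * G (sampledPath (insert 0 J) X ω) ∂P := by
  induction J using Finset.induction_on_max generalizing G with
  | empty =>
    have hR : ∀ᵐ ω ∂P', sampledPath {0} (besselProcess v V) ω = Pi.single 0 ‖v‖ := by
      filter_upwards [hV0] with ω hω
      rw [sampledPath_singleton, besselProcess, hω, WithLp.toLp_zero, add_zero]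
    have hsurv : ∀ᵐ ω ∂P, ω ∈ survivalSet X {0} := by
      filter_upwards [hX0] with ω hω
      simp [survivalSet, hω]
    simp only [insert_empty_eq, Finset.coe_empty, Finset.sup_empty, bot_eq_zero]
    rw [Measure.restrict_eq_self_of_ae_mem hsurv,
      lintegral_congr_ae (hR.mono fun ω hω => congrArg G hω),
      lintegral_congr_ae (g := fun _ => ENNReal.ofReal ‖v‖ * G (Pi.single 0 ‖v‖))
        (hX0.mono fun ω hω => by rw [sampledPath_singleton, hω])]
    simp
  | insert u J hu ih =>
    have hJu : J.sup id ≤ u := Finset.sup_le fun r hr => (hu r hr).le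
    have hmem : J.sup id ∈ insert 0 J := by
      rcases J.eq_empty_or_nonempty with rfl | hne
      · simp
      · exact Finset.mem_insert_of_mem (by simpa using Finset.exists_mem_eq_sup J hne id)
    have hle (r : ℝ≥0) (hr : r ∈ insert 0 J) : r ≤ J.sup id := by
      rcases Finset.mem_insert.1 hr with rfl | hrJ
      · exact zero_le
      · exact Finset.le_sup (f := id) hrJ
    have hmax : (insert u J).sup id = u := by rw [Finset.sup_insert, id, sup_eq_left.2 hJu]
    have := mul_lintegral_sampledPath_insert_le hX hV v hmem hle hJu
      (hJ u (Finset.mem_insert_self u J)) (fun G hG => by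
        simpa using ih (fun r hr => hJ r (Finset.mem_insert_of_mem hr)) hG) hG
    rw [Finset.insert_comm, hmax]
    simpa [Set.insert_comm] using this

end Domination

section DoobTransform

variable {Ω : Type*} {m0 : MeasurableSpace Ω} {P : Measure Ω} {X : ℝ≥0 → Ω → ℝ}
  {ℱ : Filtration ℝ≥0 m0} {T : ℝ≥0} {x : ℝ}

/-- The Doob `h`-transform, for `h y = y`, of the process `X` started from `x` and killed when it
becomes negative, up to time `T`. For Brownian motion this is the law conditioned to stay
nonnegative forever, seen up to time `T`. -/
def doobTransform (X : ℝ≥0 → Ω → ℝ) (T : ℝ≥0) (x : ℝ) (P : Measure Ω) : Measure Ω :=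
  ENNReal.ofReal x⁻¹ •
    (P.restrict (survivalSet X (Set.Iic T))).withDensity fun ω => ENNReal.ofReal (X T ω)

lemma survivalSet_anti (X : ℝ≥0 → Ω → ℝ) {D D' : Set ℝ≥0} (h : D ⊆ D') :
    survivalSet X D' ⊆ survivalSet X D :=
  fun _ hω u hu => hω u (h hu)

lemma survivalSet_iUnion {ι : Sort*} (X : ℝ≥0 → Ω → ℝ) (D : ι → Set ℝ≥0) :
    survivalSet X (⋃ i, D i) = ⋂ i, survivalSet X (D i) := by
  ext ω
  simp [survivalSet, forall_comm (α := ℝ≥0)]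

lemma exists_survivalSet_range_ae_eq (hXcont : ∀ᵐ ω ∂P, Continuous fun u => X u ω) (T : ℝ≥0) :
    ∃ d : ℕ → ℝ≥0, (∀ n, d n ≤ T) ∧
      survivalSet X (Set.range d) =ᵐ[P] survivalSet X (Set.Iic T) := by
  refine ⟨fun n => TopologicalSpace.denseSeq (Set.Iic T) n,
    fun n => (TopologicalSpace.denseSeq (Set.Iic T) n).2, ?_⟩
  filter_upwards [hXcont] with ω hω
  refine propext ⟨fun hd u hu => ?_, fun h => survivalSet_anti X (Set.range_subset_iff.2
    fun n => (TopologicalSpace.denseSeq (Set.Iic T) n).2) h⟩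
  exact (TopologicalSpace.denseRange_denseSeq (Set.Iic T)).induction_on
    (p := fun r : Set.Iic T => 0 ≤ X r ω) ⟨u, hu⟩
    (isClosed_le continuous_const (hω.comp continuous_subtype_val)) fun n => hd _ ⟨n, rfl⟩

lemma doobTransform_apply (X : ℝ≥0 → Ω → ℝ) (T : ℝ≥0) (x : ℝ) (P : Measure Ω) {A : Set Ω}
    (hA : MeasurableSet A) :
    doobTransform X T x P A = ENNReal.ofReal x⁻¹ *
      ∫⁻ ω in A ∩ survivalSet X (Set.Iic T), ENNReal.ofReal (X T ω) ∂P := by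
  rw [doobTransform, Measure.smul_apply, withDensity_apply _ hA, Measure.restrict_restrict hA,
    smul_eq_mul]

variable [IsProbabilityMeasure P]

section Mass

variable (hX : HasStationaryIndepIncrements X ℱ (gaussianReal 0) T P)
include hX

lemma setLIntegral_inter_ofReal_overshoot_le {s u : ℝ≥0} (hsu : s ≤ u) (huT : u ≤ T) {A : Set Ω}
    (hA : MeasurableSet[ℱ s] A) (hAs : ∀ ω ∈ A, 0 ≤ X s ω) {ε : ℝ} (hε : 0 < ε) :
    ∫⁻ ω in {ω | 0 ≤ X u ω} ∩ A, ENNReal.ofReal (X u ω + ε) ∂P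
      ≤ ∫⁻ ω in A, ENNReal.ofReal (X s ω + ε) ∂P
        + ENNReal.ofReal ((u - s : ℝ≥0) ^ 2 * (∫ z, z ^ 4 ∂gaussianReal 0 1) / ε ^ 3) := by
  have hΦ : Measurable ((Set.Ici 0).indicator fun y => ENNReal.ofReal (y + ε)) :=
    Measurable.indicator (by fun_prop) measurableSet_Ici
  set C := ENNReal.ofReal ((u - s : ℝ≥0) ^ 2 * (∫ z, z ^ 4 ∂gaussianReal 0 1) / ε ^ 3)
  calc ∫⁻ ω in {ω | 0 ≤ X u ω} ∩ A, ENNReal.ofReal (X u ω + ε) ∂P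
      = ∫⁻ ω in A, (Set.Ici 0).indicator (fun y => ENNReal.ofReal (y + ε)) (X u ω) ∂P := by
        rw [← setLIntegral_indicator (measurableSet_le measurable_const (hX.measurable u))]
        rfl
    _ = ∫⁻ ω in A, ∫⁻ z, (Set.Ici 0).indicator (fun y => ENNReal.ofReal (y + ε)) (X s ω + z)
          ∂gaussianReal 0 (u - s) ∂P :=
        hX.setLIntegral_eq hsu huT hA (hX.measurable_apply s)
          (Φ := fun _ y => (Set.Ici 0).indicator (fun y => ENNReal.ofReal (y + ε)) y)
          (hΦ.comp measurable_snd)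
    _ ≤ ∫⁻ ω in A, (ENNReal.ofReal (X s ω + ε) + C) ∂P :=
        setLIntegral_mono' (ℱ.le s _ hA) fun ω hω =>
          lintegral_ofReal_overshoot_gaussianReal_le _ hε (hAs ω hω)
    _ ≤ ∫⁻ ω in A, ENNReal.ofReal (X s ω + ε) ∂P + C := by
        rw [lintegral_add_right _ measurable_const, setLIntegral_const]
        gcongr
        exact mul_le_of_le_one_right' prob_le_one

lemma setLIntegral_survivalSet_grid_le (hX0 : ∀ᵐ ω ∂P, X 0 ω = x) {δ : ℝ≥0} {ε : ℝ}
    (hε : 0 < ε) {k : ℕ} (hk : k * δ ≤ T) :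
    ∫⁻ ω in survivalSet X ((fun j : ℕ => j * δ) '' Set.Iic k), ENNReal.ofReal (X (k * δ) ω + ε) ∂P
      ≤ ENNReal.ofReal (x + ε)
        + k * ENNReal.ofReal ((δ : ℝ) ^ 2 * (∫ z, z ^ 4 ∂gaussianReal 0 1) / ε ^ 3) := by
  induction k with
  | zero =>
    simp only [Nat.cast_zero, zero_mul, add_zero]
    refine (setLIntegral_le_lintegral _ _).trans_eq ?_
    rw [lintegral_congr_ae (hX0.mono fun ω hω => by rw [hω]), lintegral_const, measure_univ,
      mul_one]
  | succ k ih =>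
    have hmono : k * δ ≤ (k + 1 : ℕ) * δ := by gcongr; simp
    have hpast : MeasurableSet[ℱ (k * δ)] (survivalSet X ((fun j : ℕ => j * δ) '' Set.Iic k)) :=
      measurableSet_survivalSet ((Set.finite_Iic k).image _).countable (by
        rintro _ ⟨j, hj, rfl⟩
        exact hX.measurable_of_le (mul_le_mul_left (by exact_mod_cast hj) _))
    have hstep := setLIntegral_inter_ofReal_overshoot_le hX hmono hk hpast
      (fun ω hω => hω _ ⟨k, Set.self_mem_Iic, rfl⟩) hε
    have hlen : (k + 1 : ℕ) * δ - k * δ = δ := by simp [add_one_mul]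
    rw [hlen] at hstep
    rw [← Order.succ_eq_add_one, Order.Iic_succ, Set.image_insert_eq, survivalSet_insert,
      Order.succ_eq_add_one]
    refine hstep.trans ?_
    rw [Nat.cast_add_one, add_one_mul, ← add_assoc]
    gcongr
    exact ih (hmono.trans hk)

lemma setLIntegral_survivalSet_Iic_le_add (hx : 0 ≤ x) (hX0 : ∀ᵐ ω ∂P, X 0 ω = x) {ε : ℝ}
    (hε : 0 < ε) {n : ℕ} (hn : n ≠ 0) :
    ∫⁻ ω in survivalSet X (Set.Iic T), ENNReal.ofReal (X T ω) ∂P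
      ≤ ENNReal.ofReal (x + ε + (T : ℝ) ^ 2 * (∫ z, z ^ 4 ∂gaussianReal 0 1) / ε ^ 3 / n) := by
  have : 0 ≤ ∫ z : ℝ, z ^ 4 ∂gaussianReal 0 1 := integral_nonneg fun z => by positivity
  have hmesh : n * (T / n) = T := mul_div_cancel₀ T (by exact_mod_cast hn)
  calc ∫⁻ ω in survivalSet X (Set.Iic T), ENNReal.ofReal (X T ω) ∂P
      ≤ ∫⁻ ω in survivalSet X ((fun j : ℕ => j * (T / n)) '' Set.Iic n),
          ENNReal.ofReal (X T ω + ε) ∂P := by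
        refine lintegral_mono' (Measure.restrict_mono (survivalSet_anti X ?_) le_rfl) fun ω => ?_
        · rintro _ ⟨j, hj, rfl⟩
          exact (mul_le_mul_left (by exact_mod_cast hj) _).trans_eq hmesh
        · exact ENNReal.ofReal_le_ofReal (le_add_of_nonneg_right hε.le)
    _ ≤ ENNReal.ofReal (x + ε)
        + n * ENNReal.ofReal ((T / n : ℝ≥0) ^ 2 * (∫ z, z ^ 4 ∂gaussianReal 0 1) / ε ^ 3) := by
        simpa only [hmesh] using setLIntegral_survivalSet_grid_le hX hX0 hε hmesh.le
    _ = _ := by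
        rw [← ENNReal.ofReal_natCast, ← ENNReal.ofReal_mul (by positivity),
          ← ENNReal.ofReal_add (by positivity) (by positivity)]
        congr 1
        push_cast
        field_simp

lemma setLIntegral_survivalSet_Iic_le (hx : 0 ≤ x) (hX0 : ∀ᵐ ω ∂P, X 0 ω = x) :
    ∫⁻ ω in survivalSet X (Set.Iic T), ENNReal.ofReal (X T ω) ∂P ≤ ENNReal.ofReal x := by
  have hmesh {ε : ℝ} (hε : 0 < ε) :
      ∫⁻ ω in survivalSet X (Set.Iic T), ENNReal.ofReal (X T ω) ∂P ≤ ENNReal.ofReal (x + ε) := by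
    refine ge_of_tendsto (ENNReal.tendsto_ofReal ?_) ((eventually_ne_atTop 0).mono fun n hn =>
      setLIntegral_survivalSet_Iic_le_add hX hx hX0 hε hn)
    simpa using (tendsto_const_div_atTop_nhds_zero_nat
      ((T : ℝ) ^ 2 * (∫ z, z ^ 4 ∂gaussianReal 0 1) / ε ^ 3)).const_add (x + ε)
  have hlim : Tendsto (fun ε : ℝ => ENNReal.ofReal (x + ε)) (𝓝[>] 0) (𝓝 (ENNReal.ofReal x)) := by
    refine (ENNReal.tendsto_ofReal ?_).mono_left nhdsWithin_le_nhds
    simpa using (continuous_const_add x).tendsto 0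
  exact ge_of_tendsto hlim (eventually_mem_nhdsWithin.mono fun ε hε => hmesh hε)

lemma lintegral_ofReal_ne_top (hX0 : ∀ᵐ ω ∂P, X 0 ω = x) :
    ∫⁻ ω, ENNReal.ofReal (X T ω) ∂P ≠ ∞ := by
  have hstart := hX.setLIntegral_eq zero_le le_rfl MeasurableSet.univ (hX.measurable_apply 0)
    (Φ := fun _ y => ENNReal.ofReal y) (by fun_prop)
  rw [Measure.restrict_univ] at hstart
  rw [hstart, lintegral_congr_ae
    (g := fun _ => ∫⁻ z, ENNReal.ofReal (x + z) ∂gaussianReal 0 (T - 0))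
    (hX0.mono fun ω hω => by rw [hω]), lintegral_const, measure_univ, mul_one]
  have hid : Integrable (fun z : ℝ => z) (gaussianReal 0 (T - 0)) :=
    (memLp_id_gaussianReal' 1 (by simp)).integrable le_rfl
  exact (integrable_const_add_iff.2 hid).lintegral_lt_top.ne

end Mass

variable {Ω' : Type*} {m0' : MeasurableSpace Ω'} {P' : Measure Ω'} {V : ℝ≥0 → Ω' → Fin 3 → ℝ}
  {𝒢 : Filtration ℝ≥0 m0'} [IsProbabilityMeasure P'] {v : EuclideanSpace ℝ (Fin 3)}
  (hX : HasStationaryIndepIncrements X ℱ (gaussianReal 0) T P) (hX0 : ∀ᵐ ω ∂P, X 0 ω = ‖v‖)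
  (hV : HasStationaryIndepIncrements V 𝒢 (fun h => Measure.pi fun _ => gaussianReal 0 h) T P')
  (hV0 : ∀ᵐ ω ∂P', V 0 ω = 0) {I : Finset ℝ≥0} (hI : ∀ u ∈ I, u ≤ T)
include hX hX0 hV hV0 hI

lemma ofReal_norm_mul_measure_sampledPath_le {J : Finset ℝ≥0} (hJ : ∀ u ∈ J, u ≤ T)
    {A : Set (ℝ≥0 → ℝ)} (hA : MeasurableSet A) :
    ENNReal.ofReal ‖v‖ * P' (sampledPath I (besselProcess v V) ⁻¹' A)
      ≤ P.withDensity (fun ω => ENNReal.ofReal (X T ω))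
          (survivalSet X J ∩ sampledPath I X ⁻¹' A) := by
  set K := insert T (I ∪ J) with hK
  have hKT : ∀ u ∈ K, u ≤ T := by
    simpa [hK, or_imp, forall_and] using ⟨hI, hJ⟩
  have hsup : K.sup id = T :=
    le_antisymm (Finset.sup_le hKT) (Finset.le_sup (f := id) (Finset.mem_insert_self _ _))
  have hIK : I ⊆ insert 0 K := fun u hu => by simp [hK, hu]
  have hJK : (J : Set ℝ≥0) ⊆ insert 0 K := fun u hu => by simp [hK, Finset.mem_coe.1 hu]
  have hIX := measurable_sampledPath (K := I) (X := X) fun u _ => hX.measurable u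
  have hIR := measurable_sampledPath (K := I) fun u _ =>
    measurable_besselProcess v (hV.measurable u)
  have hrestr : Measurable fun p : ℝ≥0 → ℝ => I.piecewise p 0 :=
    measurable_sampledPath (X := fun u (p : ℝ≥0 → ℝ) => p u) fun u _ => measurable_pi_apply u
  have hdom := ofReal_norm_mul_lintegral_sampledPath_le hX hV v hX0 hV0 hKT
    (G := fun p => A.indicator 1 (I.piecewise p 0)) ((measurable_one.indicator hA).comp hrestr)
  simp only [hsup, ← sampledPath_eq_piecewise hIK] at hdom
  calc ENNReal.ofReal ‖v‖ * P' (sampledPath I (besselProcess v V) ⁻¹' A)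
      = ENNReal.ofReal ‖v‖ * ∫⁻ ω, A.indicator 1 (sampledPath I (besselProcess v V) ω) ∂P' := by
        rw [← lintegral_indicator_one (hIR hA)]
        rfl
    _ ≤ ∫⁻ ω in survivalSet X (insert 0 K),
          ENNReal.ofReal (X T ω) * A.indicator 1 (sampledPath I X ω) ∂P := hdom
    _ ≤ ∫⁻ ω in survivalSet X J,
          (sampledPath I X ⁻¹' A).indicator (fun ω => ENNReal.ofReal (X T ω)) ω ∂P := by
        refine lintegral_mono' (Measure.restrict_mono (survivalSet_anti X hJK) le_rfl) fun ω => ?_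
        by_cases hω : sampledPath I X ω ∈ A <;> simp [hω]
    _ = _ := by
        rw [setLIntegral_indicator (hIX hA), Set.inter_comm, withDensity_apply _
          ((measurableSet_survivalSet J.countable_toSet fun u _ => hX.measurable u).inter (hIX hA))]

lemma ofReal_norm_mul_measure_sampledPath_le_of_range {d : ℕ → ℝ≥0} (hd : ∀ n, d n ≤ T)
    {A : Set (ℝ≥0 → ℝ)} (hA : MeasurableSet A) :
    ENNReal.ofReal ‖v‖ * P' (sampledPath I (besselProcess v V) ⁻¹' A)
      ≤ P.withDensity (fun ω => ENNReal.ofReal (X T ω))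
          (survivalSet X (Set.range d) ∩ sampledPath I X ⁻¹' A) := by
  have hIX := measurable_sampledPath (K := I) (X := X) fun u _ => hX.measurable u
  have : IsFiniteMeasure (P.withDensity fun ω => ENNReal.ofReal (X T ω)) :=
    isFiniteMeasure_withDensity (lintegral_ofReal_ne_top hX hX0)
  have hrange : Set.range d = ⋃ n, ((Finset.range n).image d : Set ℝ≥0) := by
    simp_rw [Finset.coe_image, ← Set.image_iUnion, Finset.coe_range]
    rw [Set.iUnion_Iio, Set.image_univ]
  have hanti : Antitone fun n =>
      survivalSet X ((Finset.range n).image d : Finset ℝ≥0) ∩ sampledPath I X ⁻¹' A :=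
    fun m n hmn => Set.inter_subset_inter_left _ (survivalSet_anti X (by gcongr))
  have hmeas (n : ℕ) : MeasurableSet
      (survivalSet X ((Finset.range n).image d : Finset ℝ≥0) ∩ sampledPath I X ⁻¹' A) :=
    (measurableSet_survivalSet (Finset.countable_toSet _) fun u _ => hX.measurable u).inter (hIX hA)
  rw [hrange, survivalSet_iUnion, Set.iInter_inter, hanti.measure_iInter
    (fun n => (hmeas n).nullMeasurableSet) ⟨0, measure_ne_top _ _⟩]
  refine le_iInf fun n => ofReal_norm_mul_measure_sampledPath_le hX hX0 hV hV0 hI ?_ hA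
  simpa using fun m _ => hd m

lemma map_sampledPath_besselProcess_le (hXcont : ∀ᵐ ω ∂P, Continuous fun u => X u ω) (hv : v ≠ 0) :
    P'.map (sampledPath I (besselProcess v V))
      ≤ (doobTransform X T ‖v‖ P).map (sampledPath I X) := by
  have hIX := measurable_sampledPath (K := I) (X := X) fun u _ => hX.measurable u
  have hIR := measurable_sampledPath (K := I) fun u _ =>
    measurable_besselProcess v (hV.measurable u)
  have hpos : 0 < ‖v‖ := norm_pos_iff.2 hv
  obtain ⟨d, hd, hsurv⟩ := exists_survivalSet_range_ae_eq hXcont T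
  refine Measure.le_iff.2 fun A hA => ?_
  have hdom := ofReal_norm_mul_measure_sampledPath_le_of_range hX hX0 hV hV0 hI hd hA
  rw [measure_congr ((withDensity_absolutelyContinuous _ _).ae_le
    (hsurv.inter (ae_eq_refl (sampledPath I X ⁻¹' A)))), Set.inter_comm,
    withDensity_apply'] at hdom
  rw [Measure.map_apply hIR hA, Measure.map_apply hIX hA, doobTransform_apply _ _ _ _ (hIX hA),
    ENNReal.ofReal_inv_of_pos hpos]
  rwa [mul_comm, ← div_eq_mul_inv, ENNReal.le_div_iff_mul_le (.inl (by simpa using hv)) (by simp),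
    mul_comm]

lemma map_sampledPath_doobTransform (hXcont : ∀ᵐ ω ∂P, Continuous fun u => X u ω) (hv : v ≠ 0) :
    (doobTransform X T ‖v‖ P).map (sampledPath I X)
      = P'.map (sampledPath I (besselProcess v V)) := by
  have hIX := measurable_sampledPath (K := I) (X := X) fun u _ => hX.measurable u
  have hIR := measurable_sampledPath (K := I) fun u _ =>
    measurable_besselProcess v (hV.measurable u)
  have hle := map_sampledPath_besselProcess_le hX hX0 hV hV0 hI hXcont hv
  refine (Measure.eq_of_le_of_measure_univ_eq hle (le_antisymm (hle _) ?_)).symm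
  rw [Measure.map_apply hIX .univ, Measure.map_apply hIR .univ, Set.preimage_univ,
    Set.preimage_univ, measure_univ (μ := P'), doobTransform_apply _ _ _ _ .univ, Set.univ_inter,
    ENNReal.ofReal_inv_of_pos (norm_pos_iff.2 hv)]
  calc (ENNReal.ofReal ‖v‖)⁻¹ * ∫⁻ ω in survivalSet X (Set.Iic T), ENNReal.ofReal (X T ω) ∂P
      ≤ (ENNReal.ofReal ‖v‖)⁻¹ * ENNReal.ofReal ‖v‖ := by
        gcongr
        exact setLIntegral_survivalSet_Iic_le hX (norm_nonneg v) hX0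
    _ ≤ 1 := ENNReal.inv_mul_le_one _

omit hI

theorem map_doobTransform_eq_map_besselProcess (hXcont : ∀ᵐ ω ∂P, Continuous fun u => X u ω)
    (hv : v ≠ 0) :
    (doobTransform X T ‖v‖ P).map (fun ω (s : Set.Icc 0 T) => X s ω)
      = P'.map fun ω (s : Set.Icc 0 T) => besselProcess v V s ω :=
  map_eq_of_forall_map_sampledPath_eq hX.measurable
    (fun u => measurable_besselProcess v (hV.measurable u)) fun _ hK =>
      map_sampledPath_doobTransform hX hX0 hV hV0 (fun _ hu => (hK hu).2) hXcont hv

end DoobTransform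

section Conditioning

variable {Ω : Type*} {m0 : MeasurableSpace Ω} {P : Measure Ω}

lemma mem_survivalSet_Iic_iff {B : ℝ≥0 → Ω → ℝ} {c β : ℝ} (hβ : 0 ≤ β) {ω : Ω} (hω : B 0 ω = 0)
    {t : ℝ≥0} :
    ω ∈ survivalSet (fun s ω => β + c * s - B s ω) (Set.Iic t)
      ↔ ∀ u ∈ Set.Ioc 0 t, B u ω - c * u ≤ β := by
  refine ⟨fun h u hu => by linarith [h u hu.2], fun h u hu => ?_⟩
  rcases eq_zero_or_pos u with rfl | hu0
  · simpa [hω] using hβ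
  · linarith [h u ⟨hu0, hu⟩]

lemma withDensity_eq_doobTransform {B : ℝ≥0 → Ω → ℝ} (hB : ∀ u, Measurable (B u))
    (hB0 : ∀ᵐ ω ∂P, B 0 ω = 0) (hBcont : ∀ᵐ ω ∂P, Continuous fun u => B u ω) (c : ℝ) {β : ℝ}
    (hβ : 0 < β) (t : ℝ≥0) :
    P.withDensity (fun ω => ENNReal.ofReal ((1 / β) * (β + c * (t : ℝ) - B t ω) *
        Set.indicator {ω' : Ω | ∀ u ∈ Set.Ioc (0 : ℝ≥0) t, B u ω' - c * (u : ℝ) ≤ β}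
          (fun _ => (1 : ℝ)) ω * Real.exp (c * B t ω - c ^ 2 * (t : ℝ) / 2)))
      = doobTransform (fun s ω => β + c * s - B s ω) t β
          (P.withDensity (exponentialMartingale c B t)) := by
  set X : ℝ≥0 → Ω → ℝ := fun s ω => β + c * s - B s ω with hX
  have hXmeas (u : ℝ≥0) : Measurable (X u) := by fun_prop
  have hXcont : ∀ᵐ ω ∂P, Continuous fun u => X u ω := hBcont.mono fun ω hω => by
    simp only [hX]
    fun_prop
  obtain ⟨d, -, hd⟩ := exists_survivalSet_range_ae_eq hXcont t
  have hE : MeasurableSet (survivalSet X (Set.range d)) :=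
    measurableSet_survivalSet (Set.countable_range d) fun u _ => hXmeas u
  rw [doobTransform, ← Measure.restrict_congr_set ((withDensity_absolutelyContinuous _ _).ae_le hd),
    ← withDensity_indicator hE, ← withDensity_smul' _ _ ENNReal.ofReal_ne_top, ← withDensity_mul _
      (by fun_prop) (((hXmeas t).ennreal_ofReal.indicator hE).const_smul _)]
  refine withDensity_congr_ae ?_
  filter_upwards [hB0, hd.mem_iff] with ω hω hdω
  have hmem : ω ∈ {ω' : Ω | ∀ u ∈ Set.Ioc (0 : ℝ≥0) t, B u ω' - c * (u : ℝ) ≤ β}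
      ↔ ω ∈ survivalSet X (Set.range d) :=
    (hdω.trans (mem_survivalSet_Iic_iff hβ.le hω)).symm
  by_cases h : ω ∈ survivalSet X (Set.range d)
  · rw [Set.indicator_of_mem (hmem.2 h), Pi.mul_apply, Pi.smul_apply, Set.indicator_of_mem h,
      exponentialMartingale, smul_eq_mul, ← ENNReal.ofReal_mul (by positivity),
      ← ENNReal.ofReal_mul (by positivity), one_div]
    congr 1
    simp only [hX]
    ring
  · simp only [Set.indicator_of_notMem (mt hmem.1 h), Pi.mul_apply, Pi.smul_apply,
      Set.indicator_of_notMem h, mul_zero, zero_mul, smul_zero, ENNReal.ofReal_zero]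

end Conditioning

theorem conditioned_drifted_bm_is_bessel3_general {Ω Ω' : Type*} {m0 : MeasurableSpace Ω}
    {m0' : MeasurableSpace Ω'} {P : Measure Ω} {P' : Measure Ω'} [IsProbabilityMeasure P]
    [IsProbabilityMeasure P'] {t : ℝ≥0} {ℱ : Filtration ℝ≥0 m0} {𝒢 : Filtration ℝ≥0 m0'}
    {B : ℝ≥0 → Ω → ℝ} (hB : HasStationaryIndepIncrements B ℱ (gaussianReal 0) t P)
    (hB0 : ∀ᵐ ω ∂P, B 0 ω = 0) (hBcont : ∀ᵐ ω ∂P, Continuous fun s => B s ω)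
    {V : ℝ≥0 → Ω' → Fin 3 → ℝ}
    (hV : HasStationaryIndepIncrements V 𝒢 (fun h => Measure.pi fun _ => gaussianReal 0 h) t P')
    (hV0 : ∀ᵐ ω ∂P', V 0 ω = 0) (c : ℝ) {β : ℝ} (hβ : 0 < β) :
    Measure.map (fun ω (s : Set.Icc (0 : ℝ≥0) t) => β + c * ((s : ℝ≥0) : ℝ) - B s ω)
        (P.withDensity (fun ω => ENNReal.ofReal ((1 / β) * (β + c * (t : ℝ) - B t ω) *
          Set.indicator {ω' : Ω | ∀ u ∈ Set.Ioc (0 : ℝ≥0) t, B u ω' - c * (u : ℝ) ≤ β}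
            (fun _ => (1 : ℝ)) ω * Real.exp (c * B t ω - c ^ 2 * (t : ℝ) / 2))))
      = Measure.map (fun ω (s : Set.Icc (0 : ℝ≥0) t) =>
          Real.sqrt ((β + V s ω 0) ^ 2 + V s ω 1 ^ 2 + V s ω 2 ^ 2)) P' := by
  set v := EuclideanSpace.single (0 : Fin 3) β with hv
  have hnorm : ‖v‖ = β := by simp [hv, hβ.le]
  have : IsProbabilityMeasure (P.withDensity (exponentialMartingale c B t)) :=
    isProbabilityMeasure_withDensity_exponentialMartingale hB c hB0
  have hac : P.withDensity (exponentialMartingale c B t) ≪ P := withDensity_absolutelyContinuous _ _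
  have hstart : ∀ᵐ ω ∂P.withDensity (exponentialMartingale c B t),
      β + c * (0 : ℝ≥0) - B 0 ω = ‖v‖ :=
    hac.ae_le <| hB0.mono fun ω hω => by simp [hω, hnorm]
  have hcont : ∀ᵐ ω ∂P.withDensity (exponentialMartingale c B t),
      Continuous fun s : ℝ≥0 => β + c * s - B s ω :=
    hac.ae_le <| hBcont.mono fun ω hω => by fun_prop
  have hbessel (s : ℝ≥0) (ω : Ω') : besselProcess v V s ω
      = Real.sqrt ((β + V s ω 0) ^ 2 + V s ω 1 ^ 2 + V s ω 2 ^ 2) := by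
    simp [besselProcess, hv, EuclideanSpace.norm_eq, Fin.sum_univ_three]
  have hlaw := map_doobTransform_eq_map_besselProcess (hB.girsanov β c) hstart hV hV0 hcont
    (norm_pos_iff.1 (hnorm ▸ hβ))
  simp only [hnorm, hbessel] at hlaw
  rw [withDensity_eq_doobTransform hB.measurable hB0 hBcont c hβ, hlaw]

theorem conditioned_drifted_bm_is_bessel3
    {Ω : Type*} [m0 : MeasurableSpace Ω] (P : Measure Ω) [IsProbabilityMeasure P]
    (B : ℝ≥0 → Ω → ℝ)
    (hBmeas : ∀ t, Measurable (B t))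
    (hB0 : ∀ᵐ ω ∂P, B 0 ω = 0)
    (hBcont : ∀ᵐ ω ∂P, Continuous fun t : ℝ≥0 => B t ω)
    (hBgauss : ∀ s t : ℝ≥0, s ≤ t →
      Measure.map (fun ω => B t ω - B s ω) P = gaussianReal 0 (t - s))
    (hBindep : ∀ s t : ℝ≥0, s ≤ t →
      Indep (MeasurableSpace.comap (fun ω => B t ω - B s ω) inferInstance)
        (⨆ u ∈ Set.Iic s, MeasurableSpace.comap (B u) inferInstance) P)
    (W : Fin 3 → ℝ≥0 → Ω → ℝ)
    (hWmeas : ∀ i t, Measurable (W i t))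
    (hW0 : ∀ i, ∀ᵐ ω ∂P, W i 0 ω = 0)
    (hWcont : ∀ i, ∀ᵐ ω ∂P, Continuous fun t : ℝ≥0 => W i t ω)
    (hWgauss : ∀ i, ∀ s t : ℝ≥0, s ≤ t →
      Measure.map (fun ω => W i t ω - W i s ω) P = gaussianReal 0 (t - s))
    (hWindepincr : ∀ i, ∀ s t : ℝ≥0, s ≤ t →
      Indep (MeasurableSpace.comap (fun ω => W i t ω - W i s ω) inferInstance)
        (⨆ u ∈ Set.Iic s, MeasurableSpace.comap (W i u) inferInstance) P)
    (hWindep : iIndep (fun i : Fin 3 =>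
        ⨆ t : ℝ≥0, MeasurableSpace.comap (W i t) inferInstance) P)
    (c β : ℝ) (hc : 0 < c) (hβ : 0 < β) (t : ℝ≥0) (ht : 0 < t) :
    Measure.map
      (fun ω => fun s : Set.Icc (0:ℝ≥0) t => β + c * ((s:ℝ≥0):ℝ) - B (s:ℝ≥0) ω)
      (P.withDensity (fun ω => ENNReal.ofReal (
        (1/β) * (β + c * (t:ℝ) - B t ω) *
        Set.indicator {ω' : Ω | ∀ u ∈ Set.Ioc (0:ℝ≥0) t, B u ω' - c * (u:ℝ) ≤ β}
          (fun _ => (1:ℝ)) ω *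
        Real.exp (c * B t ω - c^2 * (t:ℝ) / 2))))
    =
    Measure.map
      (fun ω => fun s : Set.Icc (0:ℝ≥0) t =>
        Real.sqrt ((β + W 0 (s:ℝ≥0) ω)^2 + (W 1 (s:ℝ≥0) ω)^2 + (W 2 (s:ℝ≥0) ω)^2))
      P := by
  have hB : HasStationaryIndepIncrements B _ (gaussianReal 0) t P :=
    .of_indep_natural (fun s => (hBmeas s).stronglyMeasurable) (fun s u hsu _ => hBgauss s u hsu)
      fun s u hsu _ => hBindep s u hsu
  have hW := HasStationaryIndepIncrements.pi_of_indep_natural (T := t) hWmeas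
    (fun i s u hsu _ => hWgauss i s u hsu) (fun i s u hsu _ => hWindepincr i s u hsu) hWindep
  have hW0' : ∀ᵐ ω ∂P, (fun i => W i 0 ω) = 0 := (ae_all_iff.2 hW0).mono fun ω hω => funext hω
  exact conditioned_drifted_bm_is_bessel3_general hB hB0 hBcont hW hW0' c hβ
end
end
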